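/- For every positive integer d and every real c > 0 there is a constant C depending only on c and d such that: for every n and every degree-d polynomial threshold function f : ℝⁿ → {−1,1} in n variables, the average sensitivity satisfies as(f) ≤ C·n^{5/6+c}. -/

import Mathlib

open MeasureTheory ProbabilityTheory
open scoped ENNReal

/-- The uniform (Bernoulli) measure on `{-1, 1}`. -/
noncomputable def bernoulliPM : Measure ℝ :=
  ((1 : ℝ≥0∞) / 2) • Measure.dirac (1 : ℝ) + ((1 : ℝ≥0∞) / 2) • Measure.dirac (-1 : ℝ)

/-- The uniform measure on `{-1, 1}ⁿ`. -/
noncomputable def bernoulliCube (n : ℕ) : Measure (Fin n → ℝ) :=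
  Measure.pi fun _ => bernoulliPM

/-- The sign function, with value `1` at `0`. -/
noncomputable def psign (r : ℝ) : ℝ := if 0 ≤ r then 1 else -1

/-- The average sensitivity `as(f) = ∑ᵢ Pr_A(f(A) ≠ f(A⁽ⁱ⁾))`, where `A⁽ⁱ⁾` is obtained from
`A` by flipping the sign of the `i`-th coordinate. -/
noncomputable def avgSensitivity (n : ℕ) (f : (Fin n → ℝ) → ℝ) : ℝ :=
  ∑ i : Fin n,
    ((bernoulliCube n) {a | f a ≠ f (Function.update a i (-(a i)))}).toReal

/-!
Bound the sensitivity `s(p, J)` of the sign of a polynomial `p` of degree `d`, counting the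
variables in a set `J`, by induction on `|J|`. Let `ρ(p)` be the share of the variance in the second
moment of `p`. Since a sign change forces a deviation from the mean, a polynomial with small `ρ` is
sensitive only in proportion to `ρ`, and the induction carries the bound
`s(p, J) ≤ C |J|^α min(1, Q ρ(p))`.

Split `J` into `b` blocks `K`. Fixing the variables outside `K` at random leaves a polynomial `p_K`,
and `s(p, J)` is the sum over `K` of the expectations of `s(p_K, K)`, so it suffices to bound the
expectations of `min(1, Q ρ(p_K))`. For biased `p` they are controlled by `ρ(p)`. If all influences
are small compared with the second moment, the following argument bounds their sum by a quantity of
order `b √(Q / b)`; as `Q` is of order `b^(1 - α)`, each step gains a factor of order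
`b^(1 - 3α/2)`, which is small exactly for `α > 2/3`. In the remaining case either deleting a
bounded number of influential variables produces small influences, or the variables left carry
almost no influence; then a random restriction is nearly constant with probability bounded below.

For small influences, `ρ(p_K)` is compared with the ratio of the squared gradient in `K` to `p²`,
and the gradient with a derivative `D_y p` in a random direction `y`. By Lindeberg replacement the
joint law of `(p(x), D_y p(x))` is almost unchanged when `(x, y)` is rotated coordinatewise by a
common angle `θ`, and along such a rotation `D_y p` becomes the derivative of `p` in `θ`.
With `s = tan (θ / 2)`, the value at the rotated point is a polynomial in `s` divided by
`(1 + s²)^d`, so its logarithmic derivative is a sum of at most `2 d` simple poles up to a bounded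
term. Hence the event `p² ≤ l (D_y p)²` occupies only a proportion `O(√l)` of the angles. The same
estimate gives, by induction on the degree, a small-ball bound for polynomials with small
influences.
-/

namespace ThresholdSensitivity

open Finset Real
open scoped BigOperators

noncomputable section

section Probability

variable {Ω : Type*} [Fintype Ω]

open scoped Classical in
/-- The probability of the event `P` under the uniform distribution on a finite type. -/
def prob (P : Ω → Prop) : ℝ := 𝔼 x, if P x then 1 else 0

lemma prob_nonneg (P : Ω → Prop) : 0 ≤ prob P :=
  expect_nonneg fun x _ => by split_ifs <;> norm_num

lemma prob_mono {P R : Ω → Prop} (h : ∀ x, P x → R x) : prob P ≤ prob R := by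
  refine expect_le_expect fun x _ => ?_
  by_cases hP : P x
  · simp [hP, h x hP]
  · simp only [hP, if_false]
    split_ifs <;> norm_num

lemma prob_or_le (P R : Ω → Prop) : prob (fun x => P x ∨ R x) ≤ prob P + prob R := by
  rw [prob, prob, prob, ← expect_add_distrib]
  refine expect_le_expect fun x _ => ?_
  by_cases hP : P x <;> by_cases hR : R x <;> simp [hP, hR]

lemma prob_true [Nonempty Ω] : prob (fun _ : Ω => True) = 1 := by
  simp [prob]

lemma prob_false : prob (fun _ : Ω => False) = 0 := by
  simp [prob]

lemma prob_le_one [Nonempty Ω] (P : Ω → Prop) : prob P ≤ 1 :=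
  (prob_mono fun _ _ => trivial).trans_eq prob_true

lemma prob_sub_prob_not_le (P R : Ω → Prop) :
    prob P - prob (fun x => ¬R x) ≤ prob (fun x => P x ∧ R x) := by
  have hcover : prob P ≤ prob (fun x => (P x ∧ R x) ∨ ¬R x) := prob_mono fun x _ => by tauto
  linarith [prob_or_le (fun x => P x ∧ R x) (fun x => ¬R x)]

lemma mul_prob_le_expect {f : Ω → ℝ} (hf : ∀ x, 0 ≤ f x) (a : ℝ) :
    a * prob (fun x => a ≤ f x) ≤ 𝔼 x, f x := by
  rw [prob, mul_expect]
  refine expect_le_expect fun x _ => ?_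
  split_ifs with h
  · simpa using h
  · simpa using hf x

lemma prob_mul_expect_lt_le {f : Ω → ℝ} (hf : ∀ x, 0 ≤ f x) {t : ℝ} (ht : 0 < t) :
    prob (fun x => t * (𝔼 y, f y) < f x) ≤ 1 / t := by
  rcases (expect_nonneg fun x _ => hf x : 0 ≤ 𝔼 x, f x).eq_or_lt with hzero | hpos
  · have hf0 : f = 0 := (Fintype.expect_eq_zero_iff_of_nonneg hf).1 hzero.symm
    simp only [hf0, Pi.zero_apply, expect_const_zero, mul_zero, lt_irrefl, prob_false]
    positivity
  · rw [le_div_iff₀ ht, ← mul_le_iff_le_one_right hpos]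
    calc (𝔼 y, f y) * (prob (fun x => t * (𝔼 y, f y) < f x) * t)
        ≤ (𝔼 y, f y) * (prob (fun x => t * (𝔼 y, f y) ≤ f x) * t) := by
          gcongr
          exact prob_mono fun x hx => hx.le
      _ = t * (𝔼 y, f y) * prob (fun x => t * (𝔼 y, f y) ≤ f x) := by ring
      _ ≤ 𝔼 y, f y := mul_prob_le_expect hf _

lemma sq_expect_le_mul_prob (Z : Ω → ℝ) (P : Ω → Prop) [DecidablePred P] :
    (𝔼 x, if P x then Z x else 0) ^ 2 ≤ (𝔼 x, Z x ^ 2) * prob P := by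
  calc (𝔼 x, if P x then Z x else 0) ^ 2
      = (𝔼 x, Z x * if P x then 1 else 0) ^ 2 := by simp only [mul_ite, mul_one, mul_zero]
    _ ≤ (𝔼 x, Z x ^ 2) * 𝔼 x, (if P x then 1 else 0) ^ 2 := expect_mul_sq_le_sq_mul_sq _ _ _
    _ = (𝔼 x, Z x ^ 2) * prob P := by
      rw [prob]
      congr 2 with x
      split_ifs <;> norm_num

lemma paley_zygmund [Nonempty Ω] {Z : Ω → ℝ} (hZ : ∀ x, 0 ≤ Z x) {K : ℝ} (hK : 1 ≤ K)
    (h : 𝔼 x, Z x ^ 2 ≤ K * (𝔼 x, Z x) ^ 2) :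
    1 / (4 * K) ≤ prob (fun x => (𝔼 y, Z y) / 2 ≤ Z x) := by
  classical
  have hm0 : 0 ≤ 𝔼 x, Z x := expect_nonneg fun x _ => hZ x
  rw [div_le_iff₀ (by positivity)]
  generalize hm : 𝔼 x, Z x = m at h hm0
  rcases hm0.eq_or_lt with rfl | hpos
  · simp only [zero_div, hZ, prob_true]
    linarith
  · have htail : m / 2 ≤ 𝔼 x, if m / 2 ≤ Z x then Z x else 0 := by
      have : 𝔼 x, Z x ≤ 𝔼 x, (m / 2 + if m / 2 ≤ Z x then Z x else 0) := by
        refine expect_le_expect fun x _ => ?_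
        split_ifs <;> linarith
      rw [hm, expect_add_distrib, Fintype.expect_const] at this
      linarith
    have hsq : (m / 2) ^ 2 ≤ K * m ^ 2 * prob (fun x => m / 2 ≤ Z x) :=
      calc (m / 2) ^ 2 ≤ (𝔼 x, if m / 2 ≤ Z x then Z x else 0) ^ 2 := by gcongr
        _ ≤ (𝔼 x, Z x ^ 2) * prob (fun x => m / 2 ≤ Z x) := sq_expect_le_mul_prob _ _
        _ ≤ K * m ^ 2 * prob (fun x => m / 2 ≤ Z x) := by
          gcongr
          exact prob_nonneg _
    nlinarith [pow_pos hpos 2]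

lemma expect_sq_mul_sq_le {f g : Ω → ℝ} {a b : ℝ} (ha : 0 ≤ a) (hb : 0 ≤ b)
    (hf : 𝔼 x, f x ^ 4 ≤ (a * 𝔼 x, f x ^ 2) ^ 2) (hg : 𝔼 x, g x ^ 4 ≤ (b * 𝔼 x, g x ^ 2) ^ 2) :
    𝔼 x, f x ^ 2 * g x ^ 2 ≤ a * b * ((𝔼 x, f x ^ 2) * 𝔼 x, g x ^ 2) := by
  have : 0 ≤ 𝔼 x, f x ^ 2 := expect_nonneg fun x _ => sq_nonneg _
  have : 0 ≤ 𝔼 x, g x ^ 2 := expect_nonneg fun x _ => sq_nonneg _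
  refine le_of_sq_le_sq ?_ (by positivity)
  calc (𝔼 x, f x ^ 2 * g x ^ 2) ^ 2
      ≤ (𝔼 x, (f x ^ 2) ^ 2) * 𝔼 x, (g x ^ 2) ^ 2 := expect_mul_sq_le_sq_mul_sq _ _ _
    _ = (𝔼 x, f x ^ 4) * 𝔼 x, g x ^ 4 := by simp only [← pow_mul]
    _ ≤ (a * 𝔼 x, f x ^ 2) ^ 2 * (b * 𝔼 x, g x ^ 2) ^ 2 :=
        mul_le_mul hf hg (expect_nonneg fun x _ => by positivity) (by positivity)
    _ = (a * b * ((𝔼 x, f x ^ 2) * 𝔼 x, g x ^ 2)) ^ 2 := by ring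

end Probability

section Cube

variable {κ : Type*}

/-- The sign `±1` encoded by a bit; the discrete cube is modelled as `κ → Bool`. -/
def boolSign (b : Bool) : ℝ := if b then 1 else -1

lemma boolSign_not (b : Bool) : boolSign (!b) = -boolSign b := by cases b <;> simp [boolSign]

lemma boolSign_sq (b : Bool) : boolSign b ^ 2 = 1 := by cases b <;> simp [boolSign]

lemma boolSign_mul_self (b : Bool) : boolSign b * boolSign b = 1 := by
  rw [← sq, boolSign_sq]

/-- The point of `{-1, 1}^κ` encoded by a bit vector. -/
def signVec (x : κ → Bool) : κ → ℝ := fun i => boolSign (x i)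

/-- The Walsh character `∏ i ∈ S, xᵢ`. -/
def walsh (S : Finset κ) (x : κ → Bool) : ℝ := ∏ i ∈ S, signVec x i

lemma walsh_empty (x : κ → Bool) : walsh ∅ x = 1 := prod_empty

lemma walsh_singleton (i : κ) (x : κ → Bool) : walsh {i} x = signVec x i := prod_singleton _ _

variable [DecidableEq κ]

/-- The bit vector `x` with its `i`-th bit flipped. -/
def flipBit (i : κ) (x : κ → Bool) : κ → Bool := Function.update x i (!x i)

lemma flipBit_flipBit (i : κ) (x : κ → Bool) : flipBit i (flipBit i x) = x := by
  simp [flipBit]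

lemma signVec_flipBit_self (i : κ) (x : κ → Bool) : signVec (flipBit i x) i = -signVec x i := by
  simp [signVec, flipBit, boolSign_not]

lemma signVec_flipBit_of_ne {i j : κ} (h : j ≠ i) (x : κ → Bool) :
    signVec (flipBit i x) j = signVec x j := by
  simp [signVec, flipBit, h]

lemma walsh_flipBit_of_mem {S : Finset κ} {i : κ} (h : i ∈ S) (x : κ → Bool) :
    walsh S (flipBit i x) = -walsh S x := by
  rw [walsh, walsh, ← mul_prod_erase S _ h, ← mul_prod_erase S (signVec x) h,
    signVec_flipBit_self, neg_mul,
    prod_congr rfl fun j hj => signVec_flipBit_of_ne (ne_of_mem_erase hj) x]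

lemma walsh_mul_walsh (S T : Finset κ) (x : κ → Bool) :
    walsh S x * walsh T x = walsh (symmDiff S T) x := by
  have hS : walsh S x = walsh (S \ T) x * walsh (S ∩ T) x := by
    rw [mul_comm]; exact (prod_inter_mul_prod_sdiff S T _).symm
  have hT : walsh T x = walsh (T \ S) x * walsh (S ∩ T) x := by
    rw [mul_comm, inter_comm]; exact (prod_inter_mul_prod_sdiff T S _).symm
  have hinter : walsh (S ∩ T) x * walsh (S ∩ T) x = 1 := by
    simp [walsh, signVec, ← prod_mul_distrib, boolSign_mul_self]
  have hsymm : walsh (symmDiff S T) x = walsh (S \ T) x * walsh (T \ S) x :=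
    prod_union disjoint_sdiff_sdiff
  rw [hS, hT, hsymm]
  linear_combination walsh (S \ T) x * walsh (T \ S) x * hinter

variable [Fintype κ]

lemma expect_comp_flipBit (i : κ) (f : (κ → Bool) → ℝ) : 𝔼 x, f (flipBit i x) = 𝔼 x, f x :=
  Fintype.expect_equiv (Function.Involutive.toPerm _ (flipBit_flipBit i)) _ _ fun _ => rfl

lemma expect_eq_zero_of_odd (i : κ) {f : (κ → Bool) → ℝ} (h : ∀ x, f (flipBit i x) = -f x) :
    𝔼 x, f x = 0 := by
  have := expect_comp_flipBit i f
  simp only [h, expect_neg_distrib] at this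
  linarith

lemma expect_walsh (S : Finset κ) : 𝔼 x, walsh S x = if S = ∅ then 1 else 0 := by
  split_ifs with h
  · simp [h, walsh_empty]
  · obtain ⟨i, hi⟩ := nonempty_iff_ne_empty.2 h
    exact expect_eq_zero_of_odd i (walsh_flipBit_of_mem hi)

lemma expect_walsh_mul_walsh (S T : Finset κ) :
    𝔼 x, walsh S x * walsh T x = if S = T then 1 else 0 := by
  simp only [walsh_mul_walsh, expect_walsh, ← bot_eq_empty, symmDiff_eq_bot]

lemma expect_sq_sum_walsh {I : Type*} (s : Finset I) (w : I → ℝ) {t : I → Finset κ}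
    (ht : Set.InjOn t s) :
    𝔼 x, (∑ a ∈ s, w a * walsh (t a) x) ^ 2 = ∑ a ∈ s, w a ^ 2 := by
  classical
  calc 𝔼 x, (∑ a ∈ s, w a * walsh (t a) x) ^ 2
      = 𝔼 x, ∑ a ∈ s, ∑ b ∈ s, (w a * w b) * (walsh (t a) x * walsh (t b) x) := by
        refine expect_congr rfl fun x _ => ?_
        rw [sq, sum_mul_sum]
        exact sum_congr rfl fun a _ => sum_congr rfl fun b _ => by ring
    _ = ∑ a ∈ s, ∑ b ∈ s, (w a * w b) * if t a = t b then 1 else 0 := by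
        simp only [expect_sum_comm, ← mul_expect, expect_walsh_mul_walsh]
    _ = ∑ a ∈ s, ∑ b ∈ s, if a = b then w a * w b else 0 := by
        refine sum_congr rfl fun a ha => sum_congr rfl fun b hb => ?_
        simp only [ht.eq_iff ha hb, mul_ite, mul_one, mul_zero]
    _ = ∑ a ∈ s, w a ^ 2 := by
        refine sum_congr rfl fun a ha => ?_
        rw [sum_ite_eq, if_pos ha, sq]

lemma expect_sq_sum_signVec (g : κ → ℝ) : 𝔼 x, (∑ i, signVec x i * g i) ^ 2 = ∑ i, g i ^ 2 := by
  rw [← expect_sq_sum_walsh univ g (singleton_injective.injOn (s := _))]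
  simp only [walsh_singleton, mul_comm]

end Cube

section LowDegree

variable {κ : Type*}

/-- The functions on the cube of degree at most `d`. -/
def lowDegree (κ : Type*) (d : ℕ) : Submodule ℝ ((κ → Bool) → ℝ) :=
  Submodule.span ℝ (walsh '' {S | #S ≤ d})

lemma walsh_mem_lowDegree {S : Finset κ} {d : ℕ} (h : #S ≤ d) : walsh S ∈ lowDegree κ d :=
  Submodule.subset_span ⟨S, h, rfl⟩

lemma lowDegree_mono {d e : ℕ} (h : d ≤ e) : lowDegree κ d ≤ lowDegree κ e :=
  Submodule.span_mono (Set.image_mono fun _ hS => le_trans hS h)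

lemma const_mem_lowDegree (d : ℕ) (a : ℝ) : (fun _ => a) ∈ lowDegree κ d := by
  have : (fun _ : κ → Bool => a) = a • walsh (∅ : Finset κ) := by ext x; simp [walsh_empty]
  rw [this]
  exact Submodule.smul_mem _ _ (walsh_mem_lowDegree (by simp))

lemma signVec_mem_lowDegree (i : κ) : (fun x => signVec x i) ∈ lowDegree κ 1 := by
  simp only [← walsh_singleton]
  exact walsh_mem_lowDegree (by simp)

lemma mul_mem_lowDegree {d e : ℕ} {f g : (κ → Bool) → ℝ} (hf : f ∈ lowDegree κ d)
    (hg : g ∈ lowDegree κ e) : f * g ∈ lowDegree κ (d + e) := by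
  classical
  have hfg : f * g ∈ lowDegree κ d * lowDegree κ e := Submodule.mul_mem_mul hf hg
  rw [lowDegree, lowDegree, Submodule.span_mul_span] at hfg
  refine Submodule.span_mono ?_ hfg
  rintro _ ⟨_, ⟨S, hS, rfl⟩, _, ⟨T, hT, rfl⟩, rfl⟩
  refine ⟨symmDiff S T, ?_, funext fun x => (walsh_mul_walsh S T x).symm⟩
  calc #(symmDiff S T) ≤ #(S ∪ T) := card_le_card symmDiff_le_sup
    _ ≤ #S + #T := card_union_le S T
    _ ≤ d + e := add_le_add hS hT

lemma prod_mem_lowDegree {I : Type*} (s : Finset I) {f : I → (κ → Bool) → ℝ} {t : I → ℕ}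
    (h : ∀ i, f i ∈ lowDegree κ (t i)) : ∏ i ∈ s, f i ∈ lowDegree κ (∑ i ∈ s, t i) := by
  classical
  induction s using Finset.induction_on with
  | empty => exact const_mem_lowDegree 0 1
  | insert a s ha ih =>
    rw [prod_insert ha, sum_insert ha]
    exact mul_mem_lowDegree (h a) ih

end LowDegree

/-- A multilinear polynomial in the variables `ι`, given by its coefficients: `c S` is the
coefficient of the monomial `∏ i ∈ S, xᵢ`. On the cube these are also the Walsh–Fourier
coefficients. -/
abbrev MultilinearPoly (ι : Type*) := Finset ι → ℝ

namespace MultilinearPoly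

section Algebra

variable {ι : Type*}

/-- All coefficients above degree `d` vanish. -/
def DegreeLE (d : ℕ) (c : MultilinearPoly ι) : Prop := ∀ S, d < #S → c S = 0

/-- No monomial of `c` involves the variable `i`. -/
def Omits (c : MultilinearPoly ι) (i : ι) : Prop := ∀ S, i ∈ S → c S = 0

lemma DegreeLE.mono {d e : ℕ} (h : d ≤ e) {c : MultilinearPoly ι} (hc : c.DegreeLE d) :
    c.DegreeLE e :=
  fun S hS => hc S (h.trans_lt hS)

lemma DegreeLE.smul {d : ℕ} (a : ℝ) {c : MultilinearPoly ι} (hc : c.DegreeLE d) :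
    DegreeLE d (a • c) :=
  fun S hS => by simp [hc S hS]

/-- The value of the polynomial at a real point. -/
def eval [Fintype ι] (c : MultilinearPoly ι) (x : ι → ℝ) : ℝ := ∑ S, c S * ∏ i ∈ S, x i

lemma eval_smul [Fintype ι] (a : ℝ) (c : MultilinearPoly ι) (x : ι → ℝ) :
    eval (a • c) x = a * c.eval x := by
  simp [eval, mul_sum, mul_assoc]

lemma Omits.eval_congr [Fintype ι] {i : ι} {c : MultilinearPoly ι} (hc : c.Omits i) {x x' : ι → ℝ}
    (h : ∀ j, j ≠ i → x j = x' j) : c.eval x = c.eval x' := by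
  refine sum_congr rfl fun S _ => ?_
  by_cases hS : i ∈ S
  · simp [hc S hS]
  · rw [prod_congr rfl fun j hj => h j (ne_of_mem_of_not_mem hj hS)]

variable [DecidableEq ι]

/-- The formal partial derivative in the variable `i`. -/
def pderiv (i : ι) (c : MultilinearPoly ι) : MultilinearPoly ι :=
  fun S => if i ∈ S then 0 else c (insert i S)

/-- The part of `c` not involving the variable `i`. -/
def dropVar (i : ι) (c : MultilinearPoly ι) : MultilinearPoly ι :=
  fun S => if i ∈ S then 0 else c S

lemma omits_dropVar (i : ι) (c : MultilinearPoly ι) : (c.dropVar i).Omits i :=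
  fun S h => by simp [dropVar, h]

lemma omits_pderiv (i : ι) (c : MultilinearPoly ι) : (c.pderiv i).Omits i :=
  fun S h => by simp [pderiv, h]

lemma Omits.pderiv {i : ι} {c : MultilinearPoly ι} (hc : c.Omits i) (j : ι) :
    (c.pderiv j).Omits i := by
  intro S hS
  rw [MultilinearPoly.pderiv]
  split_ifs
  · rfl
  · exact hc _ (mem_insert_of_mem hS)

lemma Omits.pderiv_eq_zero {i : ι} {c : MultilinearPoly ι} (hc : c.Omits i) : c.pderiv i = 0 := by
  ext S
  simp [MultilinearPoly.pderiv, hc _ (mem_insert_self i S)]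

lemma pderiv_dropVar_of_ne {i j : ι} (h : j ≠ i) (c : MultilinearPoly ι) :
    (c.dropVar i).pderiv j = (c.pderiv j).dropVar i := by
  ext S
  by_cases hi : i ∈ S <;> by_cases hj : j ∈ S <;> simp [pderiv, dropVar, hi, hj, h.symm]

lemma pderiv_comm (i j : ι) (c : MultilinearPoly ι) :
    (c.pderiv i).pderiv j = (c.pderiv j).pderiv i := by
  ext S
  rcases eq_or_ne i j with rfl | h
  · rfl
  · by_cases hi : i ∈ S <;> by_cases hj : j ∈ S <;>
      simp [pderiv, hi, hj, h, h.symm, insert_comm]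

lemma DegreeLE.dropVar {d : ℕ} {c : MultilinearPoly ι} (hc : c.DegreeLE d) (i : ι) :
    (c.dropVar i).DegreeLE d := by
  intro S hS
  rw [MultilinearPoly.dropVar, hc S hS, ite_self]

lemma DegreeLE.pderiv_of_succ {d : ℕ} {c : MultilinearPoly ι} (hc : c.DegreeLE (d + 1)) (i : ι) :
    (c.pderiv i).DegreeLE d := by
  intro S hS
  rw [MultilinearPoly.pderiv]
  split_ifs with hi
  · rfl
  · exact hc _ (by rw [card_insert_of_notMem hi]; omega)

lemma DegreeLE.pderiv {d : ℕ} {c : MultilinearPoly ι} (hc : c.DegreeLE d) (i : ι) :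
    (c.pderiv i).DegreeLE d :=
  (hc.mono d.le_succ).pderiv_of_succ i

variable [Fintype ι]

/-- The formal directional derivative `∑ i, yᵢ ∂ᵢ c`. -/
def lineDeriv (y : ι → ℝ) (c : MultilinearPoly ι) : MultilinearPoly ι := ∑ i, y i • c.pderiv i

lemma eval_lineDeriv (c : MultilinearPoly ι) (x y : ι → ℝ) :
    (c.lineDeriv y).eval x = ∑ i, y i * (c.pderiv i).eval x := by
  simp only [eval, lineDeriv, Finset.sum_apply, Pi.smul_apply, smul_eq_mul, sum_mul,
    mul_sum, mul_assoc]
  exact sum_comm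

lemma DegreeLE.lineDeriv {d : ℕ} {c : MultilinearPoly ι} (hc : c.DegreeLE (d + 1)) (y : ι → ℝ) :
    (c.lineDeriv y).DegreeLE d := by
  intro S hS
  simp [MultilinearPoly.lineDeriv, (hc.pderiv_of_succ _) S hS]

lemma Omits.eval_lineDeriv_congr {i : ι} {c : MultilinearPoly ι} (hc : c.Omits i)
    {x x' y y' : ι → ℝ} (hx : ∀ j, j ≠ i → x j = x' j) (hy : ∀ j, j ≠ i → y j = y' j) :
    (c.lineDeriv y).eval x = (c.lineDeriv y').eval x' := by
  rw [eval_lineDeriv, eval_lineDeriv]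
  refine sum_congr rfl fun j _ => ?_
  rcases eq_or_ne j i with rfl | hj
  · simp [hc.pderiv_eq_zero, eval]
  · rw [hy j hj, (hc.pderiv j).eval_congr hx]

lemma sum_notMem_insert {M : Type*} [AddCommMonoid M] (i : ι) (g : Finset ι → Finset ι → M) :
    ∑ T, (if i ∈ T then 0 else g (insert i T) T) = ∑ S, if i ∈ S then g S (S.erase i) else 0 := by
  rw [← sum_filter, sum_ite, sum_const_zero, zero_add]
  refine sum_nbij' (insert i) (fun S => S.erase i) ?_ ?_ ?_ ?_ ?_ <;>
    simp +contextual [insert_erase]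

lemma eval_eq_dropVar_add (i : ι) (c : MultilinearPoly ι) (x : ι → ℝ) :
    c.eval x = (c.dropVar i).eval x + x i * (c.pderiv i).eval x := by
  have hderiv : x i * (c.pderiv i).eval x = ∑ S, if i ∈ S then c S * ∏ j ∈ S, x j else 0 :=
    calc x i * (c.pderiv i).eval x
        = ∑ T, if i ∈ T then 0 else c (insert i T) * (x i * ∏ j ∈ T, x j) := by
          rw [eval, mul_sum]
          refine sum_congr rfl fun T _ => ?_
          rw [pderiv]
          split_ifs <;> ring
      _ = ∑ S, if i ∈ S then c S * (x i * ∏ j ∈ S.erase i, x j) else 0 :=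
          sum_notMem_insert i fun S T => c S * (x i * ∏ j ∈ T, x j)
      _ = ∑ S, if i ∈ S then c S * ∏ j ∈ S, x j else 0 := by
          refine sum_congr rfl fun S _ => ?_
          split_ifs with hS
          · rw [mul_prod_erase _ _ hS]
          · rfl
  rw [hderiv, eval, eval, ← sum_add_distrib]
  refine sum_congr rfl fun S _ => ?_
  rw [dropVar]
  split_ifs <;> ring

lemma eval_lineDeriv_eq_dropVar_add (i : ι) (c : MultilinearPoly ι) (x y : ι → ℝ) :
    (c.lineDeriv y).eval x = ((c.dropVar i).lineDeriv y).eval x +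
      (x i * ((c.pderiv i).lineDeriv y).eval x + y i * (c.pderiv i).eval x) := by
  simp only [eval_lineDeriv, ← add_sum_erase _ _ (mem_univ i), (omits_dropVar i c).pderiv_eq_zero,
    (omits_pderiv i c).pderiv_eq_zero]
  have hrest : ∑ j ∈ univ.erase i, y j * (c.pderiv j).eval x =
      ∑ j ∈ univ.erase i, y j * ((c.dropVar i).pderiv j).eval x +
        x i * ∑ j ∈ univ.erase i, y j * ((c.pderiv i).pderiv j).eval x := by
    rw [mul_sum, ← sum_add_distrib]
    refine sum_congr rfl fun j hj => ?_
    rw [pderiv_dropVar_of_ne (ne_of_mem_erase hj), pderiv_comm i j,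
      eval_eq_dropVar_add i (c.pderiv j)]
    ring
  rw [hrest]
  simp only [eval, Pi.zero_apply, zero_mul, sum_const_zero, mul_zero, zero_add]
  ring

lemma eval_lineDeriv_eq_sum (c : MultilinearPoly ι) (x y : ι → ℝ) :
    (c.lineDeriv y).eval x = ∑ S, c S * ∑ i ∈ S, (∏ j ∈ S.erase i, x j) * y i := by
  have hderiv (i : ι) : y i * (c.pderiv i).eval x =
      ∑ S, if i ∈ S then c S * ((∏ j ∈ S.erase i, x j) * y i) else 0 := by
    rw [← sum_notMem_insert i fun S T => c S * ((∏ j ∈ T, x j) * y i), eval, mul_sum]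
    refine sum_congr rfl fun S _ => ?_
    rw [pderiv]
    split_ifs <;> ring
  simp only [eval_lineDeriv, hderiv]
  rw [sum_comm]
  refine sum_congr rfl fun S _ => ?_
  rw [mul_sum, sum_ite_mem, univ_inter]

lemma hasDerivAt_eval (c : MultilinearPoly ι) {x : ℝ → ι → ℝ} {y : ι → ℝ} {t : ℝ}
    (h : ∀ i, HasDerivAt (fun s => x s i) (y i) t) :
    HasDerivAt (fun s => c.eval (x s)) ((c.lineDeriv y).eval (x t)) t := by
  rw [eval_lineDeriv_eq_sum]
  refine HasDerivAt.fun_sum fun S _ => HasDerivAt.const_mul _ ?_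
  simpa only [smul_eq_mul] using HasDerivAt.fun_finsetProd fun i _ => h i

end Algebra

section Energy

variable {ι : Type*} [Fintype ι]

/-- The sum of the squared coefficients, which is the second moment on the cube. -/
def sqNorm (c : MultilinearPoly ι) : ℝ := ∑ S, c S ^ 2

/-- The variance of the polynomial on the cube. -/
def variance (c : MultilinearPoly ι) : ℝ := ∑ S with S.Nonempty, c S ^ 2

lemma sqNorm_nonneg (c : MultilinearPoly ι) : 0 ≤ c.sqNorm := sum_nonneg fun _ _ => sq_nonneg _

lemma variance_nonneg (c : MultilinearPoly ι) : 0 ≤ c.variance :=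
  sum_nonneg fun _ _ => sq_nonneg _

lemma sqNorm_eq_add_variance (c : MultilinearPoly ι) : c.sqNorm = c ∅ ^ 2 + c.variance := by
  have hempty : ({S : Finset ι | ¬S.Nonempty} : Finset _) = {∅} := by ext S; simp
  rw [sqNorm, variance, ← sum_filter_not_add_sum_filter univ Finset.Nonempty, hempty,
    sum_singleton]

lemma variance_le_sqNorm (c : MultilinearPoly ι) : c.variance ≤ c.sqNorm := by
  rw [sqNorm_eq_add_variance]
  linarith [sq_nonneg (c ∅)]

variable [DecidableEq ι]

/-- The influence of the variable `i` on the polynomial. -/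
def influence (c : MultilinearPoly ι) (i : ι) : ℝ := ∑ S with i ∈ S, c S ^ 2

/-- The sum of all influences. -/
def totalInfluence (c : MultilinearPoly ι) : ℝ := ∑ i, c.influence i

/-- The sum of the squared influences, which controls the error of the Lindeberg replacement. -/
def sumSqInfluence (c : MultilinearPoly ι) : ℝ := ∑ i, c.influence i ^ 2

lemma influence_nonneg (c : MultilinearPoly ι) (i : ι) : 0 ≤ c.influence i :=
  sum_nonneg fun _ _ => sq_nonneg _

lemma totalInfluence_nonneg (c : MultilinearPoly ι) : 0 ≤ c.totalInfluence :=
  sum_nonneg fun _ _ => influence_nonneg _ _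

lemma sumSqInfluence_nonneg (c : MultilinearPoly ι) : 0 ≤ c.sumSqInfluence :=
  sum_nonneg fun _ _ => sq_nonneg _

lemma totalInfluence_eq_sum (c : MultilinearPoly ι) :
    c.totalInfluence = ∑ S with S.Nonempty, #S * c S ^ 2 := by
  have hempty (S : Finset ι) (hS : #S * c S ^ 2 ≠ 0) : S.Nonempty :=
    card_ne_zero.1 fun h => hS (by simp [h])
  rw [sum_filter_of_ne fun S _ => hempty S]
  simp only [totalInfluence, influence, sum_filter]
  rw [sum_comm]
  simp

lemma variance_le_totalInfluence (c : MultilinearPoly ι) : c.variance ≤ c.totalInfluence := by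
  rw [totalInfluence_eq_sum]
  refine sum_le_sum fun S hS => le_mul_of_one_le_left (sq_nonneg _) ?_
  exact_mod_cast card_pos.2 (mem_filter.1 hS).2

lemma DegreeLE.totalInfluence_le_variance {d : ℕ} {c : MultilinearPoly ι} (hc : c.DegreeLE d) :
    c.totalInfluence ≤ d * c.variance := by
  rw [totalInfluence_eq_sum, variance, mul_sum]
  refine sum_le_sum fun S _ => ?_
  rcases lt_or_ge d #S with hS | hS
  · simp [hc S hS]
  · gcongr

lemma DegreeLE.totalInfluence_le_sqNorm {d : ℕ} {c : MultilinearPoly ι} (hc : c.DegreeLE d) :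
    c.totalInfluence ≤ d * c.sqNorm :=
  hc.totalInfluence_le_variance.trans (by gcongr; exact c.variance_le_sqNorm)

lemma sqNorm_pderiv (i : ι) (c : MultilinearPoly ι) : (c.pderiv i).sqNorm = c.influence i := by
  rw [influence, sum_filter, ← sum_notMem_insert i fun S _ => c S ^ 2]
  simp only [sqNorm, pderiv, ite_pow, zero_pow two_ne_zero]

lemma DegreeLE.totalInfluence_pderiv_le {d : ℕ} {c : MultilinearPoly ι} (hc : c.DegreeLE d)
    (i : ι) : (c.pderiv i).totalInfluence ≤ d * c.influence i := by
  rw [← sqNorm_pderiv]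
  exact (hc.pderiv i).totalInfluence_le_sqNorm

end Energy

section Cube

variable {ι : Type*} [Fintype ι]

lemma eval_signVec (c : MultilinearPoly ι) (x : ι → Bool) :
    c.eval (signVec x) = ∑ S, c S * walsh S x := rfl

lemma exists_eval_eq_of_mem_lowDegree {d : ℕ} {f : (ι → Bool) → ℝ} (hf : f ∈ lowDegree ι d) :
    ∃ c : MultilinearPoly ι, c.DegreeLE d ∧ ∀ x, f x = c.eval (signVec x) := by
  classical
  induction hf using Submodule.span_induction with
  | mem f h =>
    obtain ⟨S, hS, rfl⟩ := h
    refine ⟨Pi.single S 1, fun T hT => Pi.single_eq_of_ne ?_ 1, fun x => ?_⟩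
    · rintro rfl
      exact absurd hS (not_le.2 hT)
    · simp [eval_signVec, Pi.single_apply]
  | zero => exact ⟨0, fun _ _ => rfl, fun x => by simp [eval]⟩
  | add f g _ _ hf hg =>
    obtain ⟨a, ha, hfa⟩ := hf
    obtain ⟨b, hb, hgb⟩ := hg
    refine ⟨a + b, fun S hS => by simp [ha S hS, hb S hS], fun x => ?_⟩
    simp [hfa, hgb, eval, add_mul, sum_add_distrib]
  | smul r f _ hf =>
    obtain ⟨a, ha, hfa⟩ := hf
    exact ⟨r • a, ha.smul r, fun x => by rw [eval_smul, Pi.smul_apply, hfa, smul_eq_mul]⟩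

lemma DegreeLE.eval_mem_lowDegree {κ : Type*} {d : ℕ} {c : MultilinearPoly ι}
    (hc : c.DegreeLE d) {X : ι → (κ → Bool) → ℝ} (hX : ∀ i, X i ∈ lowDegree κ 1) :
    (fun z => c.eval fun i => X i z) ∈ lowDegree κ d := by
  have hsum : (fun z => c.eval fun i => X i z) = ∑ S, c S • ∏ i ∈ S, X i := by
    ext z; simp [eval]
  rw [hsum]
  refine Submodule.sum_mem _ fun S _ => ?_
  rcases lt_or_ge d #S with hS | hS
  · simp [hc S hS]
  · exact Submodule.smul_mem _ _
      (lowDegree_mono (by simpa using hS) (prod_mem_lowDegree S hX))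

variable [DecidableEq ι]

lemma expect_sq_eval (c : MultilinearPoly ι) : 𝔼 x, c.eval (signVec x) ^ 2 = c.sqNorm :=
  expect_sq_sum_walsh univ c Function.injective_id.injOn

lemma expect_eval (c : MultilinearPoly ι) : 𝔼 x, c.eval (signVec x) = c ∅ := by
  simp [eval_signVec, expect_sum_comm, ← mul_expect, expect_walsh]

lemma DegreeLE.eval_lineDeriv_mem_lowDegree {κ : Type*} {d : ℕ} {c : MultilinearPoly ι}
    (hc : c.DegreeLE d) {X Y : ι → (κ → Bool) → ℝ}
    (hX : ∀ i, X i ∈ lowDegree κ 1) (hY : ∀ i, Y i ∈ lowDegree κ 1) :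
    (fun z => (c.lineDeriv fun i => Y i z).eval fun i => X i z) ∈ lowDegree κ (1 + d) := by
  have hsum : (fun z => (c.lineDeriv fun i => Y i z).eval fun i => X i z) =
      ∑ i, Y i * fun z => (c.pderiv i).eval fun i => X i z := by
    ext z; simp [eval_lineDeriv]
  rw [hsum]
  exact Submodule.sum_mem _ fun i _ =>
    mul_mem_lowDegree (hY i) ((hc.pderiv i).eval_mem_lowDegree hX)

end Cube

end MultilinearPoly

namespace MultilinearPoly

lemma eval_eq_of_support_subset_empty {ι : Type*} [Fintype ι] {c : MultilinearPoly ι}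
    (hc : ∀ S, ¬S ⊆ ∅ → c S = 0) (x : ι → ℝ) : c.eval x = c ∅ := by
  rw [eval, sum_eq_single ∅ (fun S _ hS => by rw [hc S (by rwa [subset_empty]), zero_mul])
    (by simp), prod_empty, mul_one]

variable {ι : Type*} [DecidableEq ι]

lemma dropVar_eq_zero_of_not_subset {i : ι} {K : Finset ι} {c : MultilinearPoly ι}
    (hK : ∀ S, ¬S ⊆ insert i K → c S = 0) {S : Finset ι} (hS : ¬S ⊆ K) : c.dropVar i S = 0 := by
  rw [MultilinearPoly.dropVar]
  split_ifs with hiS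
  · rfl
  · exact hK S fun h => hS ((subset_insert_iff_of_notMem hiS).1 h)

lemma pderiv_eq_zero_of_not_subset {i : ι} {K : Finset ι} {c : MultilinearPoly ι}
    (hK : ∀ S, ¬S ⊆ insert i K → c S = 0) {S : Finset ι} (hS : ¬S ⊆ K) : c.pderiv i S = 0 := by
  rw [MultilinearPoly.pderiv]
  split_ifs with hiS
  · rfl
  · exact hK _ fun h => hS ((insert_subset_insert_iff hiS).1 h)

lemma DegreeLE.pderiv_eq_zero {c : MultilinearPoly ι} (hc : c.DegreeLE 0) (i : ι) :
    c.pderiv i = 0 := by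
  ext S
  rw [MultilinearPoly.pderiv]
  split_ifs
  · rfl
  · exact hc _ (card_pos.2 (insert_nonempty i S))

end MultilinearPoly

section Hypercontractivity

variable {κ : Type*} [Fintype κ] [DecidableEq κ]

lemma expect_sq_add_signVec_mul {i : κ} {f g : (κ → Bool) → ℝ} (hf : ∀ x, f (flipBit i x) = f x)
    (hg : ∀ x, g (flipBit i x) = g x) :
    𝔼 x, (f x + signVec x i * g x) ^ 2 = (𝔼 x, f x ^ 2) + 𝔼 x, g x ^ 2 := by
  have hodd : 𝔼 x, signVec x i * (2 * f x * g x) = 0 :=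
    expect_eq_zero_of_odd i fun x => by rw [signVec_flipBit_self, hf, hg]; ring
  rw [← expect_add_distrib, ← add_zero (𝔼 x, (f x ^ 2 + g x ^ 2)), ← hodd, ← expect_add_distrib]
  refine expect_congr rfl fun x _ => ?_
  simp only [signVec]
  linear_combination g x ^ 2 * boolSign_sq (x i)

lemma expect_pow_four_add_signVec_mul {i : κ} {f g : (κ → Bool) → ℝ}
    (hf : ∀ x, f (flipBit i x) = f x) (hg : ∀ x, g (flipBit i x) = g x) :
    𝔼 x, (f x + signVec x i * g x) ^ 4 =
      (𝔼 x, f x ^ 4) + 6 * (𝔼 x, f x ^ 2 * g x ^ 2) + 𝔼 x, g x ^ 4 := by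
  have hodd : 𝔼 x, signVec x i * (4 * f x ^ 3 * g x + 4 * f x * g x ^ 3) = 0 :=
    expect_eq_zero_of_odd i fun x => by rw [signVec_flipBit_self, hf, hg]; ring
  rw [mul_expect, ← expect_add_distrib, ← expect_add_distrib,
    ← add_zero (𝔼 x, (f x ^ 4 + 6 * (f x ^ 2 * g x ^ 2) + g x ^ 4)), ← hodd, ← expect_add_distrib]
  refine expect_congr rfl fun x _ => ?_
  simp only [signVec]
  linear_combination (6 * f x ^ 2 * g x ^ 2 + g x ^ 4 * (boolSign (x i) ^ 2 + 1)
    + 4 * f x * g x ^ 3 * boolSign (x i)) * boolSign_sq (x i)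

namespace MultilinearPoly

lemma Omits.eval_flipBit {i : κ} {c : MultilinearPoly κ} (hc : c.Omits i) (x : κ → Bool) :
    c.eval (signVec (flipBit i x)) = c.eval (signVec x) :=
  hc.eval_congr fun _ hj => signVec_flipBit_of_ne hj x

-- Induction on the set `K` of variables which occur, splitting off one variable at a time.
lemma DegreeLE.expect_eval_pow_four_le {d : ℕ} {c : MultilinearPoly κ} (hd : c.DegreeLE d) :
    𝔼 x, c.eval (signVec x) ^ 4 ≤ (3 ^ d * 𝔼 x, c.eval (signVec x) ^ 2) ^ 2 := by
  suffices H : ∀ (K : Finset κ) (d : ℕ) (c : MultilinearPoly κ), c.DegreeLE d →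
      (∀ S, ¬S ⊆ K → c S = 0) →
      𝔼 x, c.eval (signVec x) ^ 4 ≤ (3 ^ d * 𝔼 x, c.eval (signVec x) ^ 2) ^ 2 from
    H univ d c hd fun S hS => absurd (subset_univ S) hS
  intro K
  induction K using Finset.induction_on with
  | empty =>
    intro d c _ hK
    simp only [eval_eq_of_support_subset_empty hK, Fintype.expect_const]
    calc c ∅ ^ 4 = (1 * c ∅ ^ 2) ^ 2 := by ring
      _ ≤ (3 ^ d * c ∅ ^ 2) ^ 2 := by gcongr; exact one_le_pow₀ (by norm_num)
  | insert i K _ ih =>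
    intro d c hd hK
    have hf := (omits_dropVar i c).eval_flipBit
    have hg := (omits_pderiv i c).eval_flipBit
    have hf4 := ih d _ (hd.dropVar i) fun _ => dropVar_eq_zero_of_not_subset hK
    simp only [eval_eq_dropVar_add i c]
    rw [expect_sq_add_signVec_mul hf hg, expect_pow_four_add_signVec_mul hf hg]
    rcases d with _ | d
    · simpa [hd.pderiv_eq_zero i, eval] using hf4
    · have hg4 := ih d _ (hd.pderiv_of_succ i) fun _ => pderiv_eq_zero_of_not_subset hK
      have hfg := expect_sq_mul_sq_le (by positivity) (by positivity) hf4 hg4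
      generalize 𝔼 x, (c.dropVar i).eval (signVec x) ^ 2 = a at *
      generalize 𝔼 x, (c.pderiv i).eval (signVec x) ^ 2 = b at *
      have hb : 0 ≤ ((3 : ℝ) ^ d * b) ^ 2 := sq_nonneg _
      rw [pow_succ (3 : ℝ) d] at *
      linarith

end MultilinearPoly

lemma expect_pow_four_le_of_mem_lowDegree {d : ℕ} {f : (κ → Bool) → ℝ} (hf : f ∈ lowDegree κ d) :
    𝔼 x, f x ^ 4 ≤ (3 ^ d * 𝔼 x, f x ^ 2) ^ 2 := by
  obtain ⟨c, hc, hfc⟩ := MultilinearPoly.exists_eval_eq_of_mem_lowDegree hf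
  simpa only [hfc] using hc.expect_eval_pow_four_le

lemma expect_sq_sum_sq_le {I : Type*} (s : Finset I) {a : I → ℝ} (ha : ∀ j ∈ s, 0 ≤ a j) {d : ℕ}
    {f : I → (κ → Bool) → ℝ} (hf : ∀ j ∈ s, f j ∈ lowDegree κ d) :
    𝔼 x, (∑ j ∈ s, a j * f j x ^ 2) ^ 2 ≤ 9 ^ d * (𝔼 x, ∑ j ∈ s, a j * f j x ^ 2) ^ 2 := by
  simp only [sq (∑ j ∈ s, a j * f j _ ^ 2), sum_mul_sum, expect_sum_comm, ← mul_expect]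
  rw [sq, sum_mul_sum, mul_sum]
  refine sum_le_sum fun j hj => ?_
  rw [mul_sum]
  refine sum_le_sum fun k hk => ?_
  have hjk := expect_sq_mul_sq_le (by positivity) (by positivity)
    (expect_pow_four_le_of_mem_lowDegree (hf j hj)) (expect_pow_four_le_of_mem_lowDegree (hf k hk))
  calc 𝔼 x, a j * f j x ^ 2 * (a k * f k x ^ 2)
      = a j * a k * 𝔼 x, f j x ^ 2 * f k x ^ 2 := by
        rw [mul_expect]
        exact expect_congr rfl fun x _ => by ring
    _ ≤ a j * a k * (3 ^ d * 3 ^ d * ((𝔼 x, f j x ^ 2) * 𝔼 x, f k x ^ 2)) :=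
        mul_le_mul_of_nonneg_left hjk (mul_nonneg (ha j hj) (ha k hk))
    _ = 9 ^ d * (a j * (𝔼 x, f j x ^ 2) * (a k * 𝔼 x, f k x ^ 2)) := by
        rw [← mul_pow]
        norm_num
        ring

lemma le_prob_half_expect_le_sum_sq {I : Type*} (s : Finset I) {a : I → ℝ}
    (ha : ∀ j ∈ s, 0 ≤ a j) {d : ℕ} {f : I → (κ → Bool) → ℝ} (hf : ∀ j ∈ s, f j ∈ lowDegree κ d) :
    1 / (4 * 9 ^ d) ≤
      prob fun x => (𝔼 y, ∑ j ∈ s, a j * f j y ^ 2) / 2 ≤ ∑ j ∈ s, a j * f j x ^ 2 :=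
  paley_zygmund (fun _ => sum_nonneg fun j hj => mul_nonneg (ha j hj) (sq_nonneg _))
    (one_le_pow₀ (by norm_num)) (expect_sq_sum_sq_le s ha hf)

end Hypercontractivity

section Rotation

variable {ι : Type*}

/-- The first of the two points of `ℝ^ι` obtained from a pair of sign vectors, stored as one
function on `ι ⊕ ι`, by rotating the `i`-th coordinates of the pair by the angle `θ i`. -/
def rotFst (θ : ι → ℝ) (z : ι ⊕ ι → Bool) : ι → ℝ :=
  fun i => cos (θ i) * signVec z (Sum.inl i) + sin (θ i) * signVec z (Sum.inr i)

/-- The second of the two rotated points; it is the derivative of `rotFst` in the angle. -/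
def rotSnd (θ : ι → ℝ) (z : ι ⊕ ι → Bool) : ι → ℝ :=
  fun i => -sin (θ i) * signVec z (Sum.inl i) + cos (θ i) * signVec z (Sum.inr i)

lemma rotFst_sq_add_rotSnd_sq (θ : ι → ℝ) (z : ι ⊕ ι → Bool) (i : ι) :
    rotFst θ z i ^ 2 + rotSnd θ z i ^ 2 = 2 := by
  have h₁ := boolSign_sq (z (Sum.inl i))
  have h₂ := boolSign_sq (z (Sum.inr i))
  simp only [rotFst, rotSnd, signVec]
  linear_combination 2 * cos_sq_add_sin_sq (θ i)
    + (cos (θ i) ^ 2 + sin (θ i) ^ 2) * (h₁ + h₂)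

lemma rotFst_zero (z : ι ⊕ ι → Bool) : rotFst 0 z = signVec fun i => z (Sum.inl i) := by
  ext i
  simp [rotFst, signVec]

lemma rotSnd_zero (z : ι ⊕ ι → Bool) : rotSnd 0 z = signVec fun i => z (Sum.inr i) := by
  ext i
  simp [rotSnd, signVec]

lemma rotFst_mem_lowDegree (θ : ι → ℝ) (i : ι) :
    (fun z => rotFst θ z i) ∈ lowDegree (ι ⊕ ι) 1 :=
  Submodule.add_mem _ (Submodule.smul_mem _ _ (signVec_mem_lowDegree _))
    (Submodule.smul_mem _ _ (signVec_mem_lowDegree _))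

lemma rotSnd_mem_lowDegree (θ : ι → ℝ) (i : ι) :
    (fun z => rotSnd θ z i) ∈ lowDegree (ι ⊕ ι) 1 :=
  Submodule.add_mem _ (Submodule.smul_mem _ _ (signVec_mem_lowDegree _))
    (Submodule.smul_mem _ _ (signVec_mem_lowDegree _))

variable [DecidableEq ι]

/-- The rotation by a quarter turn of the `i`-th coordinates of a pair of sign vectors. -/
def quarterTurn (i : ι) (z : ι ⊕ ι → Bool) : ι ⊕ ι → Bool :=
  fun k => if k = Sum.inl i then !z (Sum.inr i) else if k = Sum.inr i then z (Sum.inl i) else z k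

lemma quarterTurn_iterate_four (i : ι) (z : ι ⊕ ι → Bool) :
    quarterTurn i (quarterTurn i (quarterTurn i (quarterTurn i z))) = z := by
  ext k
  rcases eq_or_ne k (Sum.inl i) with rfl | hl
  · simp [quarterTurn]
  · rcases eq_or_ne k (Sum.inr i) with rfl | hr
    · simp [quarterTurn]
    · simp [quarterTurn, hl, hr]

lemma rotFst_quarterTurn_self (θ : ι → ℝ) (i : ι) (z : ι ⊕ ι → Bool) :
    rotFst θ (quarterTurn i z) i = -rotSnd θ z i := by
  simp [rotFst, rotSnd, signVec, quarterTurn, boolSign_not]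

lemma rotSnd_quarterTurn_self (θ : ι → ℝ) (i : ι) (z : ι ⊕ ι → Bool) :
    rotSnd θ (quarterTurn i z) i = rotFst θ z i := by
  simp [rotFst, rotSnd, signVec, quarterTurn, boolSign_not, add_comm]

lemma rotFst_quarterTurn_of_ne (θ : ι → ℝ) (z : ι ⊕ ι → Bool) {i j : ι} (h : j ≠ i) :
    rotFst θ (quarterTurn i z) j = rotFst θ z j := by
  simp [rotFst, signVec, quarterTurn, h]

lemma rotSnd_quarterTurn_of_ne (θ : ι → ℝ) (z : ι ⊕ ι → Bool) {i j : ι} (h : j ≠ i) :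
    rotSnd θ (quarterTurn i z) j = rotSnd θ z j := by
  simp [rotSnd, signVec, quarterTurn, h]

variable [Fintype ι]

lemma expect_comp_quarterTurn (i : ι) (f : (ι ⊕ ι → Bool) → ℝ) :
    𝔼 z, f (quarterTurn i z) = 𝔼 z, f z :=
  Fintype.expect_bijective _
    (Finite.injective_iff_bijective.1 (Function.LeftInverse.injective
      (g := fun z => quarterTurn i (quarterTurn i (quarterTurn i z)))
      (quarterTurn_iterate_four i))) _ _ fun _ => rfl

lemma expect_eq_expect_quarterTurns (i : ι) (f : (ι ⊕ ι → Bool) → ℝ) :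
    𝔼 z, f z = 𝔼 z, (f z + f (quarterTurn i z) + f (quarterTurn i (quarterTurn i z)) +
      f (quarterTurn i (quarterTurn i (quarterTurn i z)))) / 4 := by
  rw [← expect_div, expect_add_distrib, expect_add_distrib, expect_add_distrib,
    expect_comp_quarterTurn i fun z => f (quarterTurn i (quarterTurn i z)),
    expect_comp_quarterTurn i fun z => f (quarterTurn i z), expect_comp_quarterTurn]
  ring

lemma expect_sum_cube (f : (ι → Bool) → (ι → Bool) → ℝ) :
    𝔼 z : ι ⊕ ι → Bool, f (fun i => z (Sum.inl i)) (fun i => z (Sum.inr i)) =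
      𝔼 x, 𝔼 y, f x y := by
  rw [← expect_product', univ_product_univ]
  exact Fintype.expect_equiv (Equiv.sumArrowEquivProdArrow ι ι Bool) _ _ fun _ => rfl

namespace MultilinearPoly

/-- The value of `c` at the first rotated point. -/
def rotEval (c : MultilinearPoly ι) (θ : ι → ℝ) (z : ι ⊕ ι → Bool) : ℝ := c.eval (rotFst θ z)

/-- The derivative of `c` at the first rotated point in the direction of the second. -/
def rotDeriv (c : MultilinearPoly ι) (θ : ι → ℝ) (z : ι ⊕ ι → Bool) : ℝ :=
  (c.lineDeriv (rotSnd θ z)).eval (rotFst θ z)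

/-- The expectation of a test function of the value and the derivative of `c` at the rotated
points. -/
def rotExpect (c : MultilinearPoly ι) (F : ℝ → ℝ → ℝ) (θ : ι → ℝ) : ℝ :=
  𝔼 z, F (c.rotEval θ z) (c.rotDeriv θ z)

lemma Omits.rotEval_quarterTurn {i : ι} {c : MultilinearPoly ι} (hc : c.Omits i) (θ : ι → ℝ)
    (z : ι ⊕ ι → Bool) : c.rotEval θ (quarterTurn i z) = c.rotEval θ z :=
  hc.eval_congr fun _ => rotFst_quarterTurn_of_ne θ z

lemma Omits.rotDeriv_quarterTurn {i : ι} {c : MultilinearPoly ι} (hc : c.Omits i) (θ : ι → ℝ)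
    (z : ι ⊕ ι → Bool) : c.rotDeriv θ (quarterTurn i z) = c.rotDeriv θ z :=
  hc.eval_lineDeriv_congr (fun _ => rotFst_quarterTurn_of_ne θ z)
    fun _ => rotSnd_quarterTurn_of_ne θ z

lemma Omits.rotEval_update {i : ι} {c : MultilinearPoly ι} (hc : c.Omits i) (θ : ι → ℝ) (t : ℝ)
    (z : ι ⊕ ι → Bool) : c.rotEval (Function.update θ i t) z = c.rotEval θ z :=
  hc.eval_congr fun j hj => by simp [rotFst, hj]

lemma Omits.rotDeriv_update {i : ι} {c : MultilinearPoly ι} (hc : c.Omits i) (θ : ι → ℝ) (t : ℝ)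
    (z : ι ⊕ ι → Bool) : c.rotDeriv (Function.update θ i t) z = c.rotDeriv θ z :=
  hc.eval_lineDeriv_congr (fun j hj => by simp [rotFst, hj]) fun j hj => by simp [rotSnd, hj]

lemma rotExpect_zero (c : MultilinearPoly ι) (F : ℝ → ℝ → ℝ) :
    c.rotExpect F 0 =
      𝔼 x, 𝔼 y, F (c.eval (signVec x)) ((c.lineDeriv (signVec y)).eval (signVec x)) := by
  simp only [rotExpect, rotEval, rotDeriv, rotFst_zero, rotSnd_zero]
  exact expect_sum_cube fun x y =>
    F (c.eval (signVec x)) ((c.lineDeriv (signVec y)).eval (signVec x))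

end MultilinearPoly

end Rotation

section Lindeberg

/-- At every point `F` agrees with a quadratic polynomial up to `K` times the cube of the
`ℓ¹`-distance. -/
def HasCubicTaylor (F : ℝ → ℝ → ℝ) (K : ℝ) : Prop :=
  ∀ u v : ℝ, ∃ q₀ q₁ q₂ q₁₁ q₁₂ q₂₂ : ℝ, ∀ h k : ℝ,
    |F (u + h) (v + k) - (q₀ + q₁ * h + q₂ * k + q₁₁ * h ^ 2 + q₁₂ * (h * k) + q₂₂ * k ^ 2)| ≤
      K * (|h| + |k|) ^ 3

lemma cube_abs_rotated_le {x y : ℝ} (h : x ^ 2 + y ^ 2 = 2) (r s : ℝ) :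
    (|x * r| + |x * s + y * r|) ^ 3 ≤ 64 * (|r| + |s|) ^ 3 := by
  have hx : |x| ≤ 2 := abs_le_of_sq_le_sq (by nlinarith [sq_nonneg y]) (by norm_num)
  have hy : |y| ≤ 2 := abs_le_of_sq_le_sq (by nlinarith [sq_nonneg x]) (by norm_num)
  have hr : |x * r| ≤ 2 * |r| := by rw [abs_mul]; gcongr
  have hs : |x * s + y * r| ≤ 2 * |s| + 2 * |r| := by
    refine (abs_add_le _ _).trans ?_
    rw [abs_mul, abs_mul]
    gcongr
  calc (|x * r| + |x * s + y * r|) ^ 3 ≤ (4 * (|r| + |s|)) ^ 3 := by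
        gcongr
        linarith [abs_nonneg s]
    _ = 64 * (|r| + |s|) ^ 3 := by ring

-- The quadratic part of the Taylor expansion, averaged over the four quarter turns of `(x, y)`,
-- depends on `(x, y)` only through `x ^ 2 + y ^ 2`.
lemma HasCubicTaylor.exists_quarterTurns_average {F : ℝ → ℝ → ℝ} {K : ℝ} (hF : HasCubicTaylor F K)
    (hK : 0 ≤ K) : ∃ M : ℝ → ℝ → ℝ → ℝ → ℝ, ∀ u v r s x y : ℝ, x ^ 2 + y ^ 2 = 2 →
      |(F (u + x * r) (v + (x * s + y * r)) + F (u + -y * r) (v + (-y * s + x * r)) +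
          F (u + -x * r) (v + (-x * s + -y * r)) + F (u + y * r) (v + (y * s + -x * r))) / 4 -
        M u v r s| ≤ 64 * K * (|r| + |s|) ^ 3 := by
  choose q₀ q₁ q₂ q₁₁ q₁₂ q₂₂ hq using hF
  refine ⟨fun u v r s => q₀ u v + q₁₁ u v * r ^ 2 + q₁₂ u v * (r * s) + q₂₂ u v * (s ^ 2 + r ^ 2),
    fun u v r s x y hxy => ?_⟩
  have hturn (x y : ℝ) (h : x ^ 2 + y ^ 2 = 2) :
      |F (u + x * r) (v + (x * s + y * r)) - (q₀ u v + q₁ u v * (x * r)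
        + q₂ u v * (x * s + y * r) + q₁₁ u v * (x * r) ^ 2
        + q₁₂ u v * ((x * r) * (x * s + y * r)) + q₂₂ u v * (x * s + y * r) ^ 2)|
      ≤ 64 * K * (|r| + |s|) ^ 3 :=
    calc _ ≤ K * (|x * r| + |x * s + y * r|) ^ 3 := hq u v _ _
      _ ≤ K * (64 * (|r| + |s|) ^ 3) := by gcongr; exact cube_abs_rotated_le h r s
      _ = 64 * K * (|r| + |s|) ^ 3 := by ring
  have h₀ := abs_le.1 (hturn x y hxy)
  have h₁ := abs_le.1 (hturn (-y) x (by linarith))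
  have h₂ := abs_le.1 (hturn (-x) (-y) (by linarith))
  have h₃ := abs_le.1 (hturn y (-x) (by linarith))
  have hsq₁ : q₁₁ u v * r ^ 2 * (x ^ 2 + y ^ 2) = q₁₁ u v * r ^ 2 * 2 := by rw [hxy]
  have hsq₂ : q₁₂ u v * r * s * (x ^ 2 + y ^ 2) = q₁₂ u v * r * s * 2 := by rw [hxy]
  have hsq₃ : q₂₂ u v * (s ^ 2 + r ^ 2) * (x ^ 2 + y ^ 2) = q₂₂ u v * (s ^ 2 + r ^ 2) * 2 := by
    rw [hxy]
  rw [abs_le]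
  constructor <;> linarith [h₀.1, h₀.2, h₁.1, h₁.2, h₂.1, h₂.2, h₃.1, h₃.2]

variable {ι : Type*} [Fintype ι] [DecidableEq ι]

namespace MultilinearPoly

lemma exists_rotExpect_approx {F : ℝ → ℝ → ℝ} {K : ℝ} (hF : HasCubicTaylor F K) (hK : 0 ≤ K)
    (i : ι) : ∃ M : ℝ → ℝ → ℝ → ℝ → ℝ, ∀ (c : MultilinearPoly ι) (θ : ι → ℝ),
      |c.rotExpect F θ - 𝔼 z, M ((c.dropVar i).rotEval θ z) ((c.dropVar i).rotDeriv θ z)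
          ((c.pderiv i).rotEval θ z) ((c.pderiv i).rotDeriv θ z)| ≤
        64 * K * (c.pderiv i).rotExpect (fun u v => (|u| + |v|) ^ 3) θ := by
  obtain ⟨M, hM⟩ := hF.exists_quarterTurns_average hK
  refine ⟨M, fun c θ => ?_⟩
  have hsplit (z : ι ⊕ ι → Bool) : F (c.rotEval θ z) (c.rotDeriv θ z) =
      F ((c.dropVar i).rotEval θ z + rotFst θ z i * (c.pderiv i).rotEval θ z)
        ((c.dropVar i).rotDeriv θ z + (rotFst θ z i * (c.pderiv i).rotDeriv θ z +
          rotSnd θ z i * (c.pderiv i).rotEval θ z)) := by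
    simp only [rotEval, rotDeriv]
    rw [eval_eq_dropVar_add i c, eval_lineDeriv_eq_dropVar_add i c]
  rw [rotExpect, expect_eq_expect_quarterTurns i, ← expect_sub_distrib, rotExpect, mul_expect]
  refine (abs_expect_le _ _).trans (expect_le_expect fun z _ => ?_)
  simp only [hsplit, (omits_dropVar i c).rotEval_quarterTurn,
    (omits_dropVar i c).rotDeriv_quarterTurn, (omits_pderiv i c).rotEval_quarterTurn,
    (omits_pderiv i c).rotDeriv_quarterTurn, rotFst_quarterTurn_self, rotSnd_quarterTurn_self,
    neg_neg]
  exact hM _ _ _ _ _ _ (rotFst_sq_add_rotSnd_sq θ z i)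

lemma abs_rotExpect_update_sub_le {F : ℝ → ℝ → ℝ} {K : ℝ} (hF : HasCubicTaylor F K) (hK : 0 ≤ K)
    (c : MultilinearPoly ι) (θ : ι → ℝ) (i : ι) (t : ℝ) :
    |c.rotExpect F (Function.update θ i t) - c.rotExpect F θ| ≤
      128 * K * (c.pderiv i).rotExpect (fun u v => (|u| + |v|) ^ 3) θ := by
  obtain ⟨M, hM⟩ := exists_rotExpect_approx hF hK i
  have hθ := hM c θ
  have hupdate := hM c (Function.update θ i t)
  simp only [rotExpect, (omits_dropVar i c).rotEval_update, (omits_dropVar i c).rotDeriv_update,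
    (omits_pderiv i c).rotEval_update, (omits_pderiv i c).rotDeriv_update] at hθ hupdate ⊢
  rw [abs_le] at *
  constructor <;> linarith [hθ.1, hθ.2, hupdate.1, hupdate.2]

lemma abs_rotExpect_sub_le {F : ℝ → ℝ → ℝ} {K : ℝ} (hF : HasCubicTaylor F K) (hK : 0 ≤ K)
    (c : MultilinearPoly ι) {R : ι → ℝ}
    (hR : ∀ i θ, K * (c.pderiv i).rotExpect (fun u v => (|u| + |v|) ^ 3) θ ≤ R i)
    (θ θ' : ι → ℝ) : |c.rotExpect F θ' - c.rotExpect F θ| ≤ 128 * ∑ i, R i := by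
  suffices H : ∀ I : Finset ι,
      |c.rotExpect F (I.piecewise θ' θ) - c.rotExpect F θ| ≤ 128 * ∑ i ∈ I, R i by
    simpa using H univ
  intro I
  induction I using Finset.induction_on with
  | empty => simp
  | insert i I hi ih =>
    have hstep := abs_rotExpect_update_sub_le hF hK c (I.piecewise θ' θ) i (θ' i)
    rw [← Finset.piecewise_insert] at hstep
    have hRi := hR i (I.piecewise θ' θ)
    rw [sum_insert hi]
    rw [abs_le] at *
    constructor <;> linarith [hstep.1, hstep.2, ih.1, ih.2]

lemma rotExpect_eq_rotExpect_zero {F : ℝ → ℝ → ℝ} (hF : HasCubicTaylor F 0)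
    (c : MultilinearPoly ι) (θ : ι → ℝ) : c.rotExpect F θ = c.rotExpect F 0 := by
  have h := abs_rotExpect_sub_le hF le_rfl c (R := 0) (by simp) 0 θ
  simpa [sub_eq_zero] using h

lemma rotExpect_sq_fst (c : MultilinearPoly ι) (θ : ι → ℝ) :
    c.rotExpect (fun u _ => u ^ 2) θ = c.sqNorm := by
  have hF : HasCubicTaylor (fun u _ => u ^ 2) 0 := fun u _ =>
    ⟨u ^ 2, 2 * u, 0, 1, 0, 0, fun h k => by
      simp only [zero_mul, add_zero]
      rw [abs_nonpos_iff]
      ring⟩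
  rw [rotExpect_eq_rotExpect_zero hF, rotExpect_zero]
  simp only [Fintype.expect_const, expect_sq_eval]

lemma rotExpect_sq_snd (c : MultilinearPoly ι) (θ : ι → ℝ) :
    c.rotExpect (fun _ v => v ^ 2) θ = c.totalInfluence := by
  have hF : HasCubicTaylor (fun _ v => v ^ 2) 0 := fun _ v =>
    ⟨v ^ 2, 0, 2 * v, 0, 0, 1, fun h k => by
      simp only [zero_mul, add_zero]
      rw [abs_nonpos_iff]
      ring⟩
  rw [rotExpect_eq_rotExpect_zero hF, rotExpect_zero]
  simp only [eval_lineDeriv, expect_sq_sum_signVec, expect_sum_comm, expect_sq_eval, sqNorm_pderiv,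
    totalInfluence]

lemma DegreeLE.rotExpect_pow_four_fst_le {d : ℕ} {c : MultilinearPoly ι} (hc : c.DegreeLE d)
    (θ : ι → ℝ) : c.rotExpect (fun u _ => u ^ 4) θ ≤ (3 ^ d * c.sqNorm) ^ 2 := by
  rw [← c.rotExpect_sq_fst θ]
  exact expect_pow_four_le_of_mem_lowDegree (hc.eval_mem_lowDegree (rotFst_mem_lowDegree θ))

lemma DegreeLE.rotExpect_pow_four_snd_le {d : ℕ} {c : MultilinearPoly ι} (hc : c.DegreeLE d)
    (θ : ι → ℝ) : c.rotExpect (fun _ v => v ^ 4) θ ≤ (3 ^ (1 + d) * c.totalInfluence) ^ 2 := by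
  rw [← c.rotExpect_sq_snd θ]
  exact expect_pow_four_le_of_mem_lowDegree
    (hc.eval_lineDeriv_mem_lowDegree (rotFst_mem_lowDegree θ) (rotSnd_mem_lowDegree θ))

end MultilinearPoly

lemma cube_add_abs_le {γ : ℝ} (hγ : 0 < γ) (u v : ℝ) :
    (|u| + |v|) ^ 3 ≤ γ * (u ^ 2 + v ^ 2) + 4 * γ⁻¹ * (u ^ 4 + v ^ 4) := by
  have hyoung : 2 * (|u| + |v|) ^ 3 ≤ γ * (|u| + |v|) ^ 2 + γ⁻¹ * (|u| + |v|) ^ 4 := by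
    have hsq : 0 ≤ γ⁻¹ * ((|u| + |v|) * (γ - (|u| + |v|))) ^ 2 := by positivity
    have hexpand : γ⁻¹ * ((|u| + |v|) * (γ - (|u| + |v|))) ^ 2 =
        γ * (|u| + |v|) ^ 2 + γ⁻¹ * (|u| + |v|) ^ 4 - 2 * (|u| + |v|) ^ 3 := by
      field_simp
      ring
    linarith
  have h₂ : (|u| + |v|) ^ 2 ≤ 2 * (u ^ 2 + v ^ 2) := by
    simpa only [sq_abs] using add_sq_le (a := |u|) (b := |v|)
  have h₄ : (|u| + |v|) ^ 4 ≤ 8 * (u ^ 4 + v ^ 4) := by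
    calc (|u| + |v|) ^ 4 = ((|u| + |v|) ^ 2) ^ 2 := by ring
      _ ≤ (2 * (u ^ 2 + v ^ 2)) ^ 2 := by gcongr
      _ ≤ 8 * (u ^ 4 + v ^ 4) := by linarith [sq_nonneg (u ^ 2 - v ^ 2)]
  have hγ₂ := mul_le_mul_of_nonneg_left h₂ hγ.le
  have hγ₄ := mul_le_mul_of_nonneg_left h₄ (inv_pos.2 hγ).le
  linarith

/-- The constant of the error term in the Lindeberg replacement for polynomials of degree `d`. -/
def lindebergConst (d : ℕ) : ℝ := 8 * 9 ^ (1 + d) * ((d : ℝ) + 1) ^ 2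

lemma lindebergConst_pos (d : ℕ) : 0 < lindebergConst d := by unfold lindebergConst; positivity

lemma one_add_le_lindebergConst (d : ℕ) : 1 + (d : ℝ) ≤ lindebergConst d := by
  have h9 : (1 : ℝ) ≤ 9 ^ (1 + d) := one_le_pow₀ (by norm_num)
  have : (0 : ℝ) ≤ d := d.cast_nonneg
  rw [lindebergConst]
  nlinarith [mul_le_mul_of_nonneg_right h9 (sq_nonneg ((d : ℝ) + 1))]

lemma four_mul_le_lindebergConst (d : ℕ) :
    4 * 9 ^ d * (1 + 9 * (d : ℝ) ^ 2) ≤ lindebergConst d := by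
  have hd : 0 ≤ (9 : ℝ) ^ d * d := by positivity
  have hd2 : 0 ≤ (9 : ℝ) ^ d * d ^ 2 := by positivity
  have h9 : 0 ≤ (9 : ℝ) ^ d := by positivity
  rw [lindebergConst, pow_add, pow_one]
  linarith

namespace MultilinearPoly

lemma DegreeLE.rotExpect_pderiv_cube_le {d : ℕ} {c : MultilinearPoly ι} (hc : c.DegreeLE d)
    {γ : ℝ} (hγ : 0 < γ) (i : ι) (θ : ι → ℝ) :
    (c.pderiv i).rotExpect (fun u v => (|u| + |v|) ^ 3) θ ≤
      lindebergConst d * (γ * c.influence i + γ⁻¹ * c.influence i ^ 2) := by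
  have hfst := (hc.pderiv i).rotExpect_pow_four_fst_le θ
  have hsnd := (hc.pderiv i).rotExpect_pow_four_snd_le θ
  have htotal := hc.totalInfluence_pderiv_le i
  have hw := c.influence_nonneg i
  have htotal_nonneg := (c.pderiv i).totalInfluence_nonneg
  rw [sqNorm_pderiv] at hfst
  set w := c.influence i
  calc (c.pderiv i).rotExpect (fun u v => (|u| + |v|) ^ 3) θ
      ≤ γ * ((c.pderiv i).rotExpect (fun u _ => u ^ 2) θ +
            (c.pderiv i).rotExpect (fun _ v => v ^ 2) θ) +
          4 * γ⁻¹ * ((c.pderiv i).rotExpect (fun u _ => u ^ 4) θ +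
            (c.pderiv i).rotExpect (fun _ v => v ^ 4) θ) := by
        simp only [rotExpect, ← expect_add_distrib, mul_expect]
        exact expect_le_expect fun z _ => cube_add_abs_le hγ _ _
    _ ≤ γ * (w + d * w) + 4 * γ⁻¹ * ((3 ^ d * w) ^ 2 + (3 ^ (1 + d) * (d * w)) ^ 2) := by
        rw [rotExpect_sq_fst, rotExpect_sq_snd, sqNorm_pderiv]
        gcongr
        exact hsnd.trans (by gcongr)
    _ = (1 + d) * (γ * w) + 4 * 9 ^ d * (1 + 9 * d ^ 2) * (γ⁻¹ * w ^ 2) := by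
        rw [show (9 : ℝ) ^ d = (3 ^ d) ^ 2 by rw [← pow_mul', pow_mul]; norm_num]
        ring
    _ ≤ lindebergConst d * (γ * w) + lindebergConst d * (γ⁻¹ * w ^ 2) := by
        gcongr ?_ * _ + ?_ * _
        · exact one_add_le_lindebergConst d
        · exact four_mul_le_lindebergConst d
    _ = _ := by ring

lemma DegreeLE.expect_le_rotExpect_add {F : ℝ → ℝ → ℝ} {K : ℝ} (hF : HasCubicTaylor F K)
    (hK : 0 ≤ K) {d : ℕ} {c : MultilinearPoly ι} (hc : c.DegreeLE d) {γ : ℝ} (hγ : 0 < γ)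
    (θ : ι → ℝ) :
    𝔼 x, 𝔼 y, F (c.eval (signVec x)) ((c.lineDeriv (signVec y)).eval (signVec x)) ≤
      c.rotExpect F θ +
        128 * K * lindebergConst d * (γ * c.totalInfluence + γ⁻¹ * c.sumSqInfluence) := by
  have h := abs_rotExpect_sub_le hF hK c
    (fun i θ => mul_le_mul_of_nonneg_left (hc.rotExpect_pderiv_cube_le hγ i θ) hK) θ 0
  have hsum : 128 * ∑ i, K * (lindebergConst d * (γ * c.influence i + γ⁻¹ * c.influence i ^ 2)) =
      128 * K * lindebergConst d * (γ * c.totalInfluence + γ⁻¹ * c.sumSqInfluence) := by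
    simp only [← mul_sum, sum_add_distrib, totalInfluence, sumSqInfluence]
    ring
  rw [hsum, rotExpect_zero] at h
  linarith [(abs_le.1 h).2]

end MultilinearPoly

end Lindeberg

section DerivRatio

lemma abs_mul_le_mul {a b A B : ℝ} (ha : |a| ≤ A) (hb : |b| ≤ B) : |a * b| ≤ A * B := by
  rw [abs_mul]
  exact mul_le_mul ha hb (abs_nonneg _) ((abs_nonneg _).trans ha)

lemma abs_add_le_add {a b A B : ℝ} (ha : |a| ≤ A) (hb : |b| ≤ B) : |a + b| ≤ A + B :=
  (abs_add_le a b).trans (add_le_add ha hb)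

lemma abs_sub_le_add {a b A B : ℝ} (ha : |a| ≤ A) (hb : |b| ≤ B) : |a - b| ≤ A + B :=
  (abs_sub a b).trans (add_le_add ha hb)

-- The quadratic expansion of `(n₀ + n₁ + n₂) / (1 + e₁ + e₂)`, where `nⱼ` and `eⱼ` have order `j`.
lemma abs_sub_quotient_expansion_le_of_le_one {q n₀ n₁ n₂ e₁ e₂ w : ℝ} (hw : 0 ≤ w) (hw₁ : w ≤ 1)
    (hq : |q| ≤ 1) (hn₀ : |n₀| ≤ 1) (hn₁ : |n₁| ≤ w) (hn₂ : |n₂| ≤ w ^ 2) (he₁ : |e₁| ≤ w)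
    (he₂ : |e₂| ≤ w ^ 2) (hquot : q * (1 + (e₁ + e₂)) = n₀ + n₁ + n₂) :
    |q - (n₀ + n₁ + n₂ - n₀ * (e₁ + e₂) - n₁ * e₁ + n₀ * e₁ ^ 2)| ≤ 22 * w ^ 3 := by
  have he : |e₁ + e₂| ≤ 2 * w := (abs_add_le_add he₁ he₂).trans (by nlinarith)
  have hee := abs_mul_le_mul he he
  have hmixed := abs_mul_le_mul he₁ he₂
  have h₀ := abs_mul_le_mul hn₀ (abs_add_le_add (abs_add_le_add hmixed hmixed)
    (abs_mul_le_mul he₂ he₂))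
  have h₁ := abs_mul_le_mul hn₁ (abs_sub_le_add hee he₂)
  have h₂ := abs_mul_le_mul hn₂ (abs_sub_le_add hee he)
  have h₃ := abs_mul_le_mul hq (abs_mul_le_mul he hee)
  have hremainder : q - (n₀ + n₁ + n₂ - n₀ * (e₁ + e₂) - n₁ * e₁ + n₀ * e₁ ^ 2) =
      n₀ * (e₁ * e₂ + e₁ * e₂ + e₂ * e₂) + n₁ * ((e₁ + e₂) * (e₁ + e₂) - e₂) +
        n₂ * ((e₁ + e₂) * (e₁ + e₂) - (e₁ + e₂)) -
        q * ((e₁ + e₂) * ((e₁ + e₂) * (e₁ + e₂))) := by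
    linear_combination (1 - (e₁ + e₂) + (e₁ + e₂) ^ 2) * hquot
  rw [hremainder]
  refine (abs_sub_le_add (abs_add_le_add (abs_add_le_add h₀ h₁) h₂) h₃).trans ?_
  have : w ^ 4 ≤ w ^ 3 := pow_le_pow_of_le_one hw hw₁ (by norm_num)
  nlinarith

lemma abs_sub_quotient_expansion_le {q n₀ n₁ n₂ e₁ e₂ w : ℝ} (hw : 0 ≤ w)
    (hq : |q| ≤ 1) (hn₀ : |n₀| ≤ 1) (hn₁ : |n₁| ≤ w) (hn₂ : |n₂| ≤ w ^ 2) (he₁ : |e₁| ≤ w)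
    (he₂ : |e₂| ≤ w ^ 2) (hquot : q * (1 + (e₁ + e₂)) = n₀ + n₁ + n₂) :
    |q - (n₀ + n₁ + n₂ - n₀ * (e₁ + e₂) - n₁ * e₁ + n₀ * e₁ ^ 2)| ≤ 22 * w ^ 3 := by
  rcases le_total w 1 with hw₁ | hw₁
  · exact abs_sub_quotient_expansion_le_of_le_one hw hw₁ hq hn₀ hn₁ hn₂ he₁ he₂ hquot
  have hterms := abs_sub_le_add hq (abs_add_le_add (abs_sub_le_add (abs_sub_le_add
    (abs_add_le_add (abs_add_le_add hn₀ hn₁) hn₂) (abs_mul_le_mul hn₀ (abs_add_le_add he₁ he₂)))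
    (abs_mul_le_mul hn₁ he₁)) (abs_mul_le_mul hn₀ (abs_mul_le_mul he₁ he₁)))
  rw [← sq e₁] at hterms
  have h₁ : 1 ≤ w ^ 3 := one_le_pow₀ hw₁
  have h₂ : w ≤ w ^ 3 := le_self_pow₀ hw₁ (by norm_num)
  have h₃ : w ^ 2 ≤ w ^ 3 := pow_le_pow_right₀ hw₁ (by norm_num)
  exact hterms.trans (by nlinarith)

lemma abs_two_mul_div_le_one {u D : ℝ} (h : 1 + u ^ 2 ≤ D) : |2 * u / D| ≤ 1 := by
  have hD : 0 < D := by nlinarith [sq_nonneg u]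
  rw [abs_div, abs_of_pos hD, div_le_one hD, abs_le]
  constructor <;> nlinarith [sq_nonneg (u + 1), sq_nonneg (u - 1)]

lemma hasCubicTaylor_sq_div :
    HasCubicTaylor (fun u v => v ^ 2 / (1 + u ^ 2 + v ^ 2)) 22 := by
  intro u v
  set D := 1 + u ^ 2 + v ^ 2 with hD
  have hD₁ : 1 ≤ D := by nlinarith [sq_nonneg u, sq_nonneg v]
  have hD₀ : 0 < D := by linarith
  set N := v ^ 2 / D with hN
  set a := 2 * u / D with ha
  set b := 2 * v / D with hb
  set g := 1 / D with hg
  have ha₁ : |a| ≤ 1 := abs_two_mul_div_le_one (by linarith [sq_nonneg v])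
  have hb₁ : |b| ≤ 1 := abs_two_mul_div_le_one (by linarith [sq_nonneg u])
  have hg₁ : |g| ≤ 1 := by rwa [hg, abs_div, abs_of_pos hD₀, div_le_one hD₀, abs_one]
  have hquot_le (x y : ℝ) : |y ^ 2 / (1 + x ^ 2 + y ^ 2)| ≤ 1 := by
    rw [abs_of_nonneg (by positivity)]
    exact div_le_one_of_le₀ (by nlinarith [sq_nonneg x]) (by positivity)
  refine ⟨N, -N * a, b - N * b, -N * g + N * a ^ 2, -a * b + 2 * N * a * b,
    g - N * g - b ^ 2 + N * b ^ 2, fun h k => ?_⟩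
  have : |h| ≤ |h| + |k| := le_add_of_nonneg_right (abs_nonneg k)
  have hk : |k| ≤ |h| + |k| := le_add_of_nonneg_left (abs_nonneg h)
  have hsq : |h ^ 2 + k ^ 2| ≤ (|h| + |k|) ^ 2 := by
    rw [abs_of_nonneg (by positivity), ← sq_abs h, ← sq_abs k]
    nlinarith [mul_nonneg (abs_nonneg h) (abs_nonneg k)]
  convert abs_sub_quotient_expansion_le (w := |h| + |k|) (n₀ := N) (n₁ := b * k) (n₂ := g * k ^ 2)
    (e₁ := a * h + b * k) (e₂ := g * (h ^ 2 + k ^ 2)) (by positivity) (hquot_le (u + h) (v + k))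
    (hquot_le u v) ?_ ?_ ?_ ?_ ?_ using 2
  · ring
  · simpa using abs_mul_le_mul hb₁ hk
  · simpa only [one_mul] using abs_mul_le_mul hg₁ (by rw [abs_pow]; gcongr)
  · refine (abs_add_le _ _).trans ?_
    rw [abs_mul, abs_mul]
    gcongr <;> exact mul_le_of_le_one_left (abs_nonneg _) ‹_›
  · simpa only [one_mul] using abs_mul_le_mul hg₁ hsq
  · have : 1 + (u + h) ^ 2 + (v + k) ^ 2 ≠ 0 := by positivity
    rw [hN, ha, hb, hg]
    field_simp
    rw [hD]
    ring

lemma HasCubicTaylor.comp_mul {F : ℝ → ℝ → ℝ} {K : ℝ} (hF : HasCubicTaylor F K) (hK : 0 ≤ K)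
    {α β : ℝ} (hα : 0 ≤ α) (hβ : 0 ≤ β) :
    HasCubicTaylor (fun u v => F (α * u) (β * v)) (K * (α + β) ^ 3) := by
  intro u v
  obtain ⟨q₀, q₁, q₂, q₁₁, q₁₂, q₂₂, hq⟩ := hF (α * u) (β * v)
  refine ⟨q₀, q₁ * α, q₂ * β, q₁₁ * α ^ 2, q₁₂ * α * β, q₂₂ * β ^ 2, fun h k => ?_⟩
  have hle : |α * h| + |β * k| ≤ (α + β) * (|h| + |k|) := by
    rw [abs_mul, abs_mul, abs_of_nonneg hα, abs_of_nonneg hβ]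
    nlinarith [mul_nonneg hα (abs_nonneg k), mul_nonneg hβ (abs_nonneg h)]
  calc _ ≤ K * (|α * h| + |β * k|) ^ 3 := by
        convert hq (α * h) (β * k) using 2
        ring_nf
    _ ≤ K * ((α + β) * (|h| + |k|)) ^ 3 := by gcongr
    _ = _ := by ring

/-- A smooth proxy for the event that the derivative `v` of a polynomial is large compared with its
value `u`: it is at least `1/2` when `u² + η² ≤ l v²`. -/
def derivRatio (l η u v : ℝ) : ℝ := l * v ^ 2 / (l * v ^ 2 + u ^ 2 + η ^ 2)

/-- The third-order Taylor constant of `derivRatio l η`. -/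
def derivRatioTaylorConst (l η : ℝ) : ℝ := 22 * (1 / η + √l / η) ^ 3

lemma derivRatioTaylorConst_nonneg {l η : ℝ} (hη : 0 < η) : 0 ≤ derivRatioTaylorConst l η := by
  unfold derivRatioTaylorConst
  positivity

lemma hasCubicTaylor_derivRatio {l η : ℝ} (hl : 0 ≤ l) (hη : 0 < η) :
    HasCubicTaylor (derivRatio l η) (derivRatioTaylorConst l η) := by
  rw [derivRatioTaylorConst]
  convert hasCubicTaylor_sq_div.comp_mul (by norm_num) (α := 1 / η) (β := √l / η) (by positivity)
    (by positivity) using 1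
  ext u v
  have hv : (√l / η * v) ^ 2 = l * v ^ 2 / η ^ 2 := by
    rw [mul_pow, div_pow, sq_sqrt hl]
    ring
  have : 0 < l * v ^ 2 + u ^ 2 + η ^ 2 := by positivity
  rw [hv, derivRatio]
  field_simp
  ring

lemma derivRatio_nonneg {l : ℝ} (hl : 0 ≤ l) (η u v : ℝ) : 0 ≤ derivRatio l η u v := by
  unfold derivRatio
  positivity

lemma derivRatio_le_one {l : ℝ} (hl : 0 ≤ l) (η u v : ℝ) : derivRatio l η u v ≤ 1 :=
  div_le_one_of_le₀ (by nlinarith [sq_nonneg u, sq_nonneg η]) (by positivity)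

lemma continuous_derivRatio {l η : ℝ} (hl : 0 ≤ l) (hη : 0 < η) :
    Continuous fun q : ℝ × ℝ => derivRatio l η q.1 q.2 :=
  Continuous.div (by fun_prop) (by fun_prop) fun q => by positivity

lemma derivRatio_le_of_abs_le {l η u v t : ℝ} (hl : 0 ≤ l) (hη : 0 < η) (h : |v| ≤ |u| * t) :
    derivRatio l η u v ≤ l * t ^ 2 / (l * t ^ 2 + 1) := by
  have hv : v ^ 2 ≤ u ^ 2 * t ^ 2 := by
    rw [← sq_abs v, ← sq_abs u, ← mul_pow]
    exact pow_le_pow_left₀ (abs_nonneg v) h 2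
  unfold derivRatio
  rw [div_le_div_iff₀ (by positivity) (by positivity)]
  have hlv := mul_le_mul_of_nonneg_left hv hl
  nlinarith [mul_nonneg (mul_nonneg hl (sq_nonneg t)) (sq_nonneg η)]

end DerivRatio

section Lorentzian

open Polynomial in
lemma abs_eval_derivative_le_mul_sum (H : ℝ[X]) {s : ℝ}
    (hs : ∀ r : (H.aroots ℂ).ToType, s ≠ (r : ℂ).re) :
    |H.derivative.eval s| ≤ |H.eval s| * ∑ r : (H.aroots ℂ).ToType, 1 / |s - (r : ℂ).re| := by
  rcases eq_or_ne (H.eval s) 0 with h₀ | h₀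
  · rcases eq_or_ne H 0 with rfl | hH
    · simp
    have hmem : (s : ℂ) ∈ H.aroots ℂ := by
      rw [mem_aroots]
      exact ⟨hH, by simpa [h₀] using aeval_algebraMap_apply ℂ s H⟩
    exact absurd rfl (hs ⟨s, ⟨0, Multiset.count_pos.2 hmem⟩⟩)
  have heval (P : ℝ[X]) : (P.map (algebraMap ℝ ℂ)).eval (s : ℂ) = (P.eval s : ℝ) := by
    rw [eval_map]
    exact eval₂_at_apply (algebraMap ℝ ℂ) s
  have hlog := (IsAlgClosed.splits (H.map (algebraMap ℝ ℂ))).eval_derivative_eq_eval_mul_sum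
    (x := (s : ℂ)) (by rw [heval]; exact_mod_cast h₀)
  rw [derivative_map, heval, heval] at hlog
  have hroots : ((H.map (algebraMap ℝ ℂ)).roots.map fun z => 1 / ((s : ℂ) - z)).sum =
      ∑ r : (H.aroots ℂ).ToType, 1 / ((s : ℂ) - r) := by
    exact congrArg Multiset.sum
      (Multiset.map_univ (H.aroots ℂ) fun z => 1 / ((s : ℂ) - z)).symm
  rw [hroots] at hlog
  have hnorm := congrArg norm hlog
  rw [norm_mul, Complex.norm_real, Complex.norm_real, norm_eq_abs, norm_eq_abs] at hnorm
  rw [hnorm]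
  gcongr
  refine (norm_sum_le _ _).trans (sum_le_sum fun r _ => ?_)
  rw [norm_div, norm_one]
  exact one_div_le_one_div_of_le (abs_pos.2 (sub_ne_zero.2 (hs r)))
    (by simpa using Complex.abs_re_le_norm ((s : ℂ) - r))

lemma exists_sum_le_card_mul {κ : Type*} [Fintype κ] [Nonempty κ] (x : κ → ℝ) :
    ∃ i, ∑ j, x j ≤ Fintype.card κ * x i := by
  obtain ⟨i, hi⟩ := Finite.exists_max x
  exact ⟨i, by simpa using sum_le_card_nsmul univ x _ fun j _ => hi j⟩

/-- The kernel `L² / (L² + a²)` of a peak of height `1` and width of order `L` at `a = 0`. -/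
def lorentzian (L a : ℝ) : ℝ := L ^ 2 / (L ^ 2 + a ^ 2)

lemma lorentzian_nonneg (L a : ℝ) : 0 ≤ lorentzian L a := by
  unfold lorentzian
  positivity

lemma continuous_lorentzian {L : ℝ} (hL : L ≠ 0) (a : ℝ) :
    Continuous fun s => lorentzian L (s - a) :=
  Continuous.div (by fun_prop) (by fun_prop) fun s => by positivity

lemma integral_lorentzian_le {L : ℝ} (hL : 0 < L) (a : ℝ) :
    ∫ s in (0 : ℝ)..1, lorentzian L (s - a) ≤ π * L := by
  have hderiv : ∀ s ∈ Set.uIcc (0 : ℝ) 1,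
      HasDerivAt (fun s => L * arctan ((s - a) / L)) (lorentzian L (s - a)) s := by
    intro s _
    refine (((hasDerivAt_id s).sub_const a).div_const L).arctan.const_mul L |>.congr_deriv ?_
    rw [lorentzian, id]
    field_simp
  rw [intervalIntegral.integral_eq_sub_of_hasDerivAt hderiv
    ((continuous_lorentzian hL.ne' a).intervalIntegrable _ _)]
  nlinarith [arctan_lt_pi_div_two ((1 - a) / L), neg_pi_div_two_lt_arctan ((0 - a) / L)]

-- The largest of the `1 / |a i|` and `d` dominates their sum up to the number of terms.
lemma derivRatio_le_sum_lorentzian {κ : Type*} [Fintype κ] {d : ℕ} (hκ : Fintype.card κ ≤ 2 * d)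
    {l η u v : ℝ} (hl : 0 < l) (hη : 0 < η) (a : κ → ℝ)
    (h : (∀ i, a i ≠ 0) → |v| ≤ |u| * (∑ i, 1 / |a i| + d)) :
    derivRatio l η u v ≤
      ∑ i, lorentzian (√l * (2 * d + 1)) (a i) + l * (2 * d + 1) ^ 2 * d ^ 2 := by
  have hL : (√l * (2 * d + 1)) ^ 2 = l * (2 * d + 1) ^ 2 := by rw [mul_pow, sq_sqrt hl.le]
  have hpeak (i : κ) : lorentzian (√l * (2 * d + 1)) (a i) ≤
      ∑ i, lorentzian (√l * (2 * d + 1)) (a i) + l * (2 * d + 1) ^ 2 * d ^ 2 :=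
    le_add_of_le_of_nonneg
      (single_le_sum (fun i _ => lorentzian_nonneg _ (a i)) (mem_univ i)) (by positivity)
  by_cases ha : ∀ i, a i ≠ 0
  · obtain ⟨i, hi⟩ := exists_sum_le_card_mul fun i : Option κ => i.elim (d : ℝ) fun i => 1 / |a i|
    rw [Fintype.sum_option, Fintype.card_option, add_comm] at hi
    have hcard : ((Fintype.card κ + 1 : ℕ) : ℝ) ≤ 2 * d + 1 := by exact_mod_cast by omega
    have hmono {t : ℝ} (ht : ∑ i, 1 / |a i| + d ≤ t) :
        derivRatio l η u v ≤ l * t ^ 2 / (l * t ^ 2 + 1) := by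
      refine derivRatio_le_of_abs_le hl.le hη ((h ha).trans ?_)
      gcongr
    rcases i with _ | i
    · refine (hmono (hi.trans (mul_le_mul_of_nonneg_right hcard (by simp)))).trans ?_
      refine (div_le_self (by positivity) (le_add_of_nonneg_left (by positivity))).trans ?_
      refine le_add_of_nonneg_of_le (sum_nonneg fun i _ => lorentzian_nonneg _ (a i)) (le_of_eq ?_)
      simp only [Option.elim]
      ring
    · refine (hmono (hi.trans (mul_le_mul_of_nonneg_right hcard (by simp)))).trans
        (le_of_eq_of_le ?_ (hpeak i))
      have := abs_pos.2 (ha i)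
      simp only [Option.elim]
      rw [lorentzian, hL, ← sq_abs (a i)]
      field_simp
  · push Not at ha
    obtain ⟨i, hi⟩ := ha
    refine (derivRatio_le_one hl.le η u v).trans (le_of_eq_of_le ?_ (hpeak i))
    rw [lorentzian, hi, hL, zero_pow two_ne_zero, add_zero, div_self (by positivity)]

end Lorentzian

section RationalRotation

lemma cos_two_mul_arctan (s : ℝ) : cos (2 * arctan s) = (1 - s ^ 2) / (1 + s ^ 2) := by
  have : 1 + s ^ 2 ≠ 0 := by positivity
  rw [cos_two_mul, cos_sq_arctan]
  field_simp
  ring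

lemma sin_two_mul_arctan (s : ℝ) : sin (2 * arctan s) = 2 * s / (1 + s ^ 2) := by
  have : √(1 + s ^ 2) ^ 2 = 1 + s ^ 2 := sq_sqrt (by positivity)
  rw [sin_two_mul, sin_arctan, cos_arctan]
  field_simp
  rw [this]

variable {ι : Type*}

/-- The common angle `2 arctan s` in all coordinates; its cosine and sine are rational in `s`. -/
def commonAngle (s : ℝ) : ι → ℝ := fun _ => 2 * arctan s

lemma hasDerivAt_rotFst_commonAngle (z : ι ⊕ ι → Bool) (i : ι) (s : ℝ) :
    HasDerivAt (fun s => rotFst (commonAngle s) z i)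
      (2 / (1 + s ^ 2) * rotSnd (commonAngle s) z i) s := by
  have hangle : HasDerivAt (fun s => 2 * arctan s) (2 * (1 / (1 + s ^ 2))) s :=
    (hasDerivAt_arctan s).const_mul 2
  refine ((hangle.cos.mul_const _).add (hangle.sin.mul_const _)).congr_deriv ?_
  rw [rotSnd, commonAngle]
  ring

lemma continuous_rotFst_commonAngle (z : ι ⊕ ι → Bool) :
    Continuous fun s => rotFst (commonAngle s) z :=
  continuous_pi fun i => continuous_iff_continuousAt.2 fun s =>
    (hasDerivAt_rotFst_commonAngle z i s).continuousAt

lemma continuous_rotSnd_commonAngle (z : ι ⊕ ι → Bool) :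
    Continuous fun s => rotSnd (commonAngle s) z := by
  unfold rotSnd commonAngle
  fun_prop

namespace MultilinearPoly

open Polynomial

variable [Fintype ι]

lemma continuous_eval (c : MultilinearPoly ι) : Continuous c.eval := by
  unfold eval
  fun_prop

/-- The polynomial `(1 + s²)^d` times the value of `c` at the first point rotated by the common
angle `2 arctan s`. -/
def rotPolynomial (c : MultilinearPoly ι) (d : ℕ) (z : ι ⊕ ι → Bool) : ℝ[X] :=
  ∑ S, C (c S) * ((∏ i ∈ S, (C (signVec z (Sum.inl i)) * (1 - X ^ 2) +
    C (signVec z (Sum.inr i)) * (2 * X))) * (1 + X ^ 2) ^ (d - #S))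

lemma DegreeLE.eval_rotPolynomial {d : ℕ} {c : MultilinearPoly ι} (hc : c.DegreeLE d)
    (z : ι ⊕ ι → Bool) (s : ℝ) :
    (c.rotPolynomial d z).eval s = (1 + s ^ 2) ^ d * c.rotEval (commonAngle s) z := by
  have hs : 1 + s ^ 2 ≠ 0 := by positivity
  rw [rotPolynomial, eval_finsetSum, rotEval, MultilinearPoly.eval, mul_sum]
  refine sum_congr rfl fun S _ => ?_
  rcases lt_or_ge d #S with hS | hS
  · simp [hc S hS]
  have hfactor (i : ι) : (C (signVec z (Sum.inl i)) * (1 - X ^ 2) +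
      C (signVec z (Sum.inr i)) * (2 * X)).eval s =
        (1 + s ^ 2) * rotFst (commonAngle s) z i := by
    rw [rotFst, commonAngle, cos_two_mul_arctan, sin_two_mul_arctan]
    simp only [eval_add, eval_mul, eval_C, eval_sub, eval_one, eval_pow, eval_X, eval_ofNat]
    field_simp
  rw [eval_mul, eval_mul, eval_prod, prod_congr rfl fun i _ => hfactor i, prod_mul_distrib,
    prod_const, eval_pow, eval_add, eval_one, eval_pow, eval_X, eval_C,
    ← Nat.add_sub_of_le hS, pow_add]
  simp only [add_tsub_cancel_left]
  ring

lemma DegreeLE.natDegree_rotPolynomial_le {d : ℕ} {c : MultilinearPoly ι} (hc : c.DegreeLE d)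
    (z : ι ⊕ ι → Bool) : (c.rotPolynomial d z).natDegree ≤ 2 * d := by
  refine natDegree_sum_le_of_forall_le _ _ fun S _ => ?_
  rcases lt_or_ge d #S with hS | hS
  · simp [hc S hS]
  refine (natDegree_C_mul_le _ _).trans (natDegree_mul_le.trans ?_)
  have hlinear := natDegree_prod_le S fun i => C (signVec z (Sum.inl i)) * (1 - X ^ 2) +
    C (signVec z (Sum.inr i)) * (2 * X)
  have hsum := sum_le_card_nsmul S (fun i => (C (signVec z (Sum.inl i)) * (1 - X ^ 2) +
    C (signVec z (Sum.inr i)) * (2 * X)).natDegree) 2 fun i _ => by compute_degree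
  have hpow : ((1 + X ^ 2 : ℝ[X]) ^ (d - #S)).natDegree ≤ (d - #S) * 2 :=
    natDegree_pow_le_of_le _ (by compute_degree)
  rw [smul_eq_mul] at hsum
  omega

variable [DecidableEq ι]

lemma lineDeriv_smul (c : MultilinearPoly ι) (a : ℝ) (y x : ι → ℝ) :
    (c.lineDeriv fun i => a * y i).eval x = a * (c.lineDeriv y).eval x := by
  simp only [eval_lineDeriv, mul_sum, mul_assoc]

lemma DegreeLE.eval_derivative_rotPolynomial {d : ℕ} {c : MultilinearPoly ι} (hc : c.DegreeLE d)
    (z : ι ⊕ ι → Bool) (s : ℝ) :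
    (1 + s ^ 2) * (c.rotPolynomial d z).derivative.eval s =
      2 * d * s * (c.rotPolynomial d z).eval s +
        2 * (1 + s ^ 2) ^ d * c.rotDeriv (commonAngle s) z := by
  have hs : 1 + s ^ 2 ≠ 0 := by positivity
  have hbase : HasDerivAt (fun s : ℝ => 1 + s ^ 2) (2 * s) s := by
    simpa using (hasDerivAt_pow 2 s).const_add 1
  have hprod := (hbase.pow d).mul
    (c.hasDerivAt_eval fun i => hasDerivAt_rotFst_commonAngle z i s)
  have heq : (fun s => (c.rotPolynomial d z).eval s) =
      (fun s : ℝ => 1 + s ^ 2) ^ d * fun s => c.eval (rotFst (commonAngle s) z) :=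
    funext (hc.eval_rotPolynomial z)
  have hpow : (1 + s ^ 2) * (d * (1 + s ^ 2) ^ (d - 1)) = d * (1 + s ^ 2) ^ d := by
    rcases d with _ | d
    · simp
    · rw [Nat.add_sub_cancel]
      ring
  have hderiv := (c.rotPolynomial d z).hasDerivAt s
  rw [heq] at hderiv
  rw [hderiv.unique hprod, lineDeriv_smul,
    hc.eval_rotPolynomial z, rotEval, rotDeriv, Pi.pow_apply, mul_add]
  congr 1
  · linear_combination 2 * s * c.eval (rotFst (commonAngle s) z) * hpow
  · field_simp

lemma DegreeLE.abs_rotDeriv_le {d : ℕ} {c : MultilinearPoly ι} (hc : c.DegreeLE d)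
    (z : ι ⊕ ι → Bool) {s : ℝ} (hs : s ∈ Set.Icc (0 : ℝ) 1)
    (hroots : ∀ r : ((c.rotPolynomial d z).aroots ℂ).ToType, s - (r : ℂ).re ≠ 0) :
    |c.rotDeriv (commonAngle s) z| ≤ |c.rotEval (commonAngle s) z| *
      (∑ r : ((c.rotPolynomial d z).aroots ℂ).ToType, 1 / |s - (r : ℂ).re| + d) := by
  have hlog := abs_eval_derivative_le_mul_sum (c.rotPolynomial d z)
    fun r => sub_ne_zero.1 (hroots r)
  have hderiv := hc.eval_derivative_rotPolynomial z s
  have hvalue := hc.eval_rotPolynomial z s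
  set H := c.rotPolynomial d z
  set R := ∑ r : (H.aroots ℂ).ToType, 1 / |s - (r : ℂ).re|
  have hp : 0 < (1 + s ^ 2) ^ d := by positivity
  have hs₂ : 1 + s ^ 2 ≤ 2 := by nlinarith [hs.1, hs.2]
  have habs : |H.eval s| = (1 + s ^ 2) ^ d * |c.rotEval (commonAngle s) z| := by
    rw [hvalue, abs_mul, abs_of_pos hp]
  refine le_of_mul_le_mul_left ?_ (mul_pos two_pos hp)
  calc 2 * (1 + s ^ 2) ^ d * |c.rotDeriv (commonAngle s) z|
      = |(1 + s ^ 2) * H.derivative.eval s - 2 * d * s * H.eval s| := by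
        rw [hderiv, add_sub_cancel_left, abs_mul, abs_of_pos (mul_pos two_pos hp)]
    _ ≤ (1 + s ^ 2) * |H.derivative.eval s| + 2 * d * s * |H.eval s| := by
        refine (abs_sub _ _).trans_eq ?_
        rw [abs_mul, abs_mul, abs_of_nonneg (by positivity : 0 ≤ 1 + s ^ 2),
          abs_of_nonneg (mul_nonneg (by positivity) hs.1)]
    _ ≤ 2 * (|H.eval s| * R) + 2 * d * 1 * |H.eval s| := by
        gcongr
        exact hs.2
    _ = _ := by
        rw [habs]
        ring

lemma continuous_derivRatio_rot (c : MultilinearPoly ι) {l η : ℝ} (hl : 0 ≤ l) (hη : 0 < η)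
    (z : ι ⊕ ι → Bool) : Continuous fun s =>
      derivRatio l η (c.rotEval (commonAngle s) z) (c.rotDeriv (commonAngle s) z) := by
  have hvalue (c : MultilinearPoly ι) : Continuous fun s => c.rotEval (commonAngle s) z :=
    c.continuous_eval.comp (continuous_rotFst_commonAngle z)
  have hderiv : Continuous fun s => c.rotDeriv (commonAngle s) z := by
    simp only [rotDeriv, eval_lineDeriv]
    exact continuous_finsetSum _ fun i _ =>
      ((continuous_apply i).comp (continuous_rotSnd_commonAngle z)).mul (hvalue (c.pderiv i))
  exact (continuous_derivRatio hl hη).comp (f := fun s =>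
    (c.rotEval (commonAngle s) z, c.rotDeriv (commonAngle s) z)) ((hvalue c).prodMk hderiv)

/-- The degree-dependent constant in the bound for the average of `derivRatio` along the rotation
by a common angle. -/
def rotationConst (d : ℕ) : ℝ := 2 * d * (π * (2 * d + 1)) + (2 * d + 1) ^ 2 * d ^ 2 + 1

lemma rotationConst_pos (d : ℕ) : 0 < rotationConst d := by
  unfold rotationConst
  positivity

lemma DegreeLE.integral_derivRatio_rot_le {d : ℕ} {c : MultilinearPoly ι} (hc : c.DegreeLE d)
    {l η : ℝ} (hl : 0 < l) (hl₁ : l ≤ 1) (hη : 0 < η) (z : ι ⊕ ι → Bool) :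
    ∫ s in (0 : ℝ)..1, derivRatio l η (c.rotEval (commonAngle s) z) (c.rotDeriv (commonAngle s) z)
      ≤ rotationConst d * √l := by
  set L := √l * (2 * d + 1) with hL_def
  have hL : 0 < L := by positivity
  have hcard : Fintype.card ((c.rotPolynomial d z).aroots ℂ).ToType ≤ 2 * d := by
    rw [Multiset.card_coe]
    exact card_roots_map_le_natDegree _ |>.trans (hc.natDegree_rotPolynomial_le z)
  have hcont (r : ((c.rotPolynomial d z).aroots ℂ).ToType) :
      Continuous fun s : ℝ => lorentzian L (s - (r : ℂ).re) := continuous_lorentzian hL.ne' _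
  have hcont_sum := continuous_finsetSum univ fun r _ => hcont r
  calc _ ≤ ∫ s in (0 : ℝ)..1, (∑ r : ((c.rotPolynomial d z).aroots ℂ).ToType,
          lorentzian L (s - (r : ℂ).re) + l * (2 * d + 1) ^ 2 * d ^ 2) :=
        intervalIntegral.integral_mono_on zero_le_one
          ((c.continuous_derivRatio_rot hl.le hη z).intervalIntegrable _ _)
          ((hcont_sum.add continuous_const).intervalIntegrable _ _) fun s hs =>
            derivRatio_le_sum_lorentzian hcard hl hη _ (hc.abs_rotDeriv_le z hs)
    _ = ∑ r : ((c.rotPolynomial d z).aroots ℂ).ToType,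
          (∫ s in (0 : ℝ)..1, lorentzian L (s - (r : ℂ).re)) + l * (2 * d + 1) ^ 2 * d ^ 2 := by
        rw [intervalIntegral.integral_add (hcont_sum.intervalIntegrable _ _)
          (continuous_const.intervalIntegrable _ _), intervalIntegral.integral_finsetSum
          fun r _ => (hcont r).intervalIntegrable _ _]
        simp
    _ ≤ 2 * d * (π * L) + √l * (2 * d + 1) ^ 2 * d ^ 2 := by
        gcongr
        · refine (sum_le_card_nsmul _ _ _ fun r _ => integral_lorentzian_le hL _).trans ?_
          rw [nsmul_eq_mul, card_univ]
          gcongr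
          exact_mod_cast hcard
        · exact le_sqrt_of_sq_le (by nlinarith)
    _ ≤ rotationConst d * √l := by
        rw [hL_def, rotationConst]
        nlinarith [sqrt_nonneg l]

lemma DegreeLE.expect_derivRatio_le {d : ℕ} {c : MultilinearPoly ι} (hc : c.DegreeLE d)
    {l η γ : ℝ} (hl : 0 < l) (hl₁ : l ≤ 1) (hη : 0 < η) (hγ : 0 < γ) :
    𝔼 x, 𝔼 y, derivRatio l η (c.eval (signVec x)) ((c.lineDeriv (signVec y)).eval (signVec x)) ≤
      rotationConst d * √l + 128 * derivRatioTaylorConst l η * lindebergConst d *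
        (γ * c.totalInfluence + γ⁻¹ * c.sumSqInfluence) := by
  set U := 𝔼 x, 𝔼 y,
    derivRatio l η (c.eval (signVec x)) ((c.lineDeriv (signVec y)).eval (signVec x))
  set err := 128 * derivRatioTaylorConst l η * lindebergConst d *
    (γ * c.totalInfluence + γ⁻¹ * c.sumSqInfluence)
  have hrot (s : ℝ) : U - err ≤ c.rotExpect (derivRatio l η) (commonAngle s) :=
    sub_le_iff_le_add.2 <| hc.expect_le_rotExpect_add (hasCubicTaylor_derivRatio hl.le hη)
      (derivRatioTaylorConst_nonneg hη) hγ (commonAngle s)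
  have hcont (z : ι ⊕ ι → Bool) := c.continuous_derivRatio_rot hl.le hη z
  have havg : U - err ≤ ∫ s in (0 : ℝ)..1, c.rotExpect (derivRatio l η) (commonAngle s) := by
    have hmono := intervalIntegral.integral_mono_on zero_le_one
      (continuous_const.intervalIntegrable (μ := volume) 0 1)
      (Continuous.intervalIntegrable (μ := volume) (by
        simp only [rotExpect, expect_eq_sum_div_card]
        exact (continuous_finsetSum _ fun z _ => hcont z).div_const _) 0 1)
      fun s _ => hrot s
    simpa using hmono
  have hswap : ∫ s in (0 : ℝ)..1, c.rotExpect (derivRatio l η) (commonAngle s) =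
      𝔼 z, ∫ s in (0 : ℝ)..1,
        derivRatio l η (c.rotEval (commonAngle s) z) (c.rotDeriv (commonAngle s) z) := by
    simp only [rotExpect, expect_eq_sum_div_card]
    rw [intervalIntegral.integral_div, intervalIntegral.integral_finsetSum
      fun z _ => (hcont z).intervalIntegrable _ _]
  have hpath : 𝔼 z, ∫ s in (0 : ℝ)..1,
      derivRatio l η (c.rotEval (commonAngle s) z) (c.rotDeriv (commonAngle s) z) ≤
        rotationConst d * √l :=
    expect_le univ_nonempty fun z _ => hc.integral_derivRatio_rot_le hl hl₁ hη z
  linarith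

end MultilinearPoly

end RationalRotation

section SmallBall

universe u

namespace MultilinearPoly

section RandomDerivative

variable {ι : Type*} [Fintype ι] [DecidableEq ι]

lemma expect_sq_eval_sub (c : MultilinearPoly ι) :
    𝔼 x, (c.eval (signVec x) - c ∅) ^ 2 = c.variance := by
  have hexpand (x : ι → Bool) : (c.eval (signVec x) - c ∅) ^ 2 =
      c.eval (signVec x) ^ 2 - 2 * c ∅ * c.eval (signVec x) + c ∅ ^ 2 := by ring
  simp only [hexpand, expect_add_distrib, expect_sub_distrib, ← mul_expect, expect_sq_eval,
    expect_eval, Fintype.expect_const, sqNorm_eq_add_variance]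
  ring

lemma prob_eval_sq_le_of_variance_le {c : MultilinearPoly ι} (hc : 0 < c.sqNorm) {g : ℝ}
    (hg : g ≤ 1 / 2) (hvar : c.variance ≤ g * c.sqNorm) :
    prob (fun x => c.eval (signVec x) ^ 2 ≤ 1 / 16 * c.sqNorm) ≤ 8 * g := by
  have hmean : c.sqNorm / 2 ≤ c ∅ ^ 2 := by
    have := c.sqNorm_eq_add_variance
    nlinarith
  have hmono : prob (fun x => c.eval (signVec x) ^ 2 ≤ 1 / 16 * c.sqNorm) ≤
      prob fun x => c.sqNorm / 8 ≤ (c.eval (signVec x) - c ∅) ^ 2 :=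
    prob_mono fun x hx => by nlinarith [sq_nonneg (2 * c.eval (signVec x) - c ∅)]
  have hchebyshev := mul_prob_le_expect
    (f := fun x => (c.eval (signVec x) - c ∅) ^ 2) (fun _ => sq_nonneg _) (c.sqNorm / 8)
  rw [expect_sq_eval_sub] at hchebyshev
  refine hmono.trans (le_of_mul_le_mul_left ?_ (by positivity : 0 < c.sqNorm / 8))
  linarith

lemma lineDeriv_signVec_mem_lowDegree (c : MultilinearPoly ι) (S : Finset ι) :
    (fun y => c.lineDeriv (signVec y) S) ∈ lowDegree ι 1 := by
  have hsum : (fun y => c.lineDeriv (signVec y) S) =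
      ∑ i, c.pderiv i S • fun y => signVec y i := by
    ext y
    simp [lineDeriv, mul_comm]
  rw [hsum]
  exact Submodule.sum_mem _ fun i _ => Submodule.smul_mem _ _ (signVec_mem_lowDegree i)

lemma expect_sq_lineDeriv_signVec (c : MultilinearPoly ι) (S : Finset ι) :
    𝔼 y, c.lineDeriv (signVec y) S ^ 2 = ∑ i, c.pderiv i S ^ 2 := by
  simpa [lineDeriv] using expect_sq_sum_signVec fun i => c.pderiv i S

lemma expect_sqNorm_lineDeriv (c : MultilinearPoly ι) :
    𝔼 y, (c.lineDeriv (signVec y)).sqNorm = c.totalInfluence := by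
  simp only [sqNorm, expect_sum_comm, expect_sq_lineDeriv_signVec]
  rw [sum_comm]
  exact sum_congr rfl fun i _ => sqNorm_pderiv i c

lemma influence_pderiv_comm (c : MultilinearPoly ι) (i j : ι) :
    (c.pderiv i).influence j = (c.pderiv j).influence i := by
  rw [← sqNorm_pderiv, ← sqNorm_pderiv, pderiv_comm]

lemma DegreeLE.expect_influence_lineDeriv_le {d : ℕ} {c : MultilinearPoly ι} (hc : c.DegreeLE d)
    (j : ι) : 𝔼 y, (c.lineDeriv (signVec y)).influence j ≤ d * c.influence j :=
  calc 𝔼 y, (c.lineDeriv (signVec y)).influence j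
      = ∑ i, (c.pderiv i).influence j := by
        simp only [influence, expect_sum_comm, expect_sq_lineDeriv_signVec]
        exact sum_comm
    _ = (c.pderiv j).totalInfluence := sum_congr rfl fun i _ => influence_pderiv_comm c i j
    _ ≤ d * c.influence j := hc.totalInfluence_pderiv_le j

lemma DegreeLE.expect_sumSqInfluence_lineDeriv_le {d : ℕ} {c : MultilinearPoly ι}
    (hc : c.DegreeLE d) :
    𝔼 y, (c.lineDeriv (signVec y)).sumSqInfluence ≤ 9 * d ^ 2 * c.sumSqInfluence := by
  simp only [sumSqInfluence, expect_sum_comm]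
  rw [mul_sum]
  refine sum_le_sum fun j _ => ?_
  have hmoment := expect_sq_sum_sq_le {S : Finset ι | j ∈ S} (a := 1)
    (fun _ _ => zero_le_one) (fun S _ => c.lineDeriv_signVec_mem_lowDegree S)
  simp only [Pi.one_apply, one_mul] at hmoment
  calc 𝔼 y, (c.lineDeriv (signVec y)).influence j ^ 2
      ≤ 9 ^ 1 * (𝔼 y, (c.lineDeriv (signVec y)).influence j) ^ 2 := hmoment
    _ ≤ 9 ^ 1 * (d * c.influence j) ^ 2 := by
        gcongr
        · exact expect_nonneg fun _ _ => influence_nonneg _ _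
        · exact hc.expect_influence_lineDeriv_le j
    _ = 9 * d ^ 2 * c.influence j ^ 2 := by ring

lemma le_prob_half_totalInfluence_le_sqNorm_lineDeriv (c : MultilinearPoly ι) :
    1 / 36 ≤ prob fun y => c.totalInfluence / 2 ≤ (c.lineDeriv (signVec y)).sqNorm := by
  have hpz := le_prob_half_expect_le_sum_sq univ (a := 1) (fun _ _ => zero_le_one)
    (fun S _ => c.lineDeriv_signVec_mem_lowDegree S)
  simp only [Pi.one_apply, one_mul] at hpz
  rw [← expect_sqNorm_lineDeriv]
  exact le_trans (by norm_num) hpz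

lemma DegreeLE.exists_lineDeriv {d : ℕ} {c : MultilinearPoly ι} (hc : c.DegreeLE d)
    {f : (ι → Bool) → ℝ} (hf : ∀ y, 0 ≤ f y) :
    ∃ y, c.totalInfluence / 2 ≤ (c.lineDeriv (signVec y)).sqNorm ∧
      (c.lineDeriv (signVec y)).sumSqInfluence ≤ 900 * d ^ 2 * c.sumSqInfluence ∧
      f y ≤ 100 * 𝔼 y, f y := by
  by_contra! hnone
  have hlarge := c.le_prob_half_totalInfluence_le_sqNorm_lineDeriv
  have hmarkov_sumSq := prob_mul_expect_lt_le
    (f := fun y => (c.lineDeriv (signVec y)).sumSqInfluence)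
    (fun _ => sumSqInfluence_nonneg _) (by norm_num : (0 : ℝ) < 100)
  have hmarkov := prob_mul_expect_lt_le hf (by norm_num : (0 : ℝ) < 100)
  have hcover : prob (fun y => c.totalInfluence / 2 ≤ (c.lineDeriv (signVec y)).sqNorm) ≤
      prob fun y => 100 * (𝔼 z, (c.lineDeriv (signVec z)).sumSqInfluence) <
        (c.lineDeriv (signVec y)).sumSqInfluence ∨ 100 * (𝔼 z, f z) < f y := by
    refine prob_mono fun y hy => or_iff_not_imp_left.2 fun hsmall => hnone y hy ?_
    linarith [not_lt.1 hsmall, hc.expect_sumSqInfluence_lineDeriv_le]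
  have := hcover.trans (prob_or_le _ _)
  norm_num at *
  linarith

-- Where `c.eval ^ 2 ≤ η`, a derivative ratio below `1 / 2` forces the derivative to be small too.
lemma DegreeLE.exists_prob_eval_sq_le {d : ℕ} {c : MultilinearPoly ι} (hc : c.DegreeLE d)
    {l η : ℝ} (hl : 0 ≤ l) (hη : 0 < η) :
    ∃ y, c.totalInfluence / 2 ≤ (c.lineDeriv (signVec y)).sqNorm ∧
      (c.lineDeriv (signVec y)).sumSqInfluence ≤ 900 * d ^ 2 * c.sumSqInfluence ∧
      prob (fun x => c.eval (signVec x) ^ 2 ≤ η) ≤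
        prob (fun x => l * (c.lineDeriv (signVec y)).eval (signVec x) ^ 2 ≤ 2 * η) +
          200 * 𝔼 x, 𝔼 y, derivRatio l √η (c.eval (signVec x))
            ((c.lineDeriv (signVec y)).eval (signVec x)) := by
  obtain ⟨y, hnorm, hinf, hratio⟩ := hc.exists_lineDeriv
    (f := fun y => 𝔼 x, derivRatio l √η (c.eval (signVec x))
      ((c.lineDeriv (signVec y)).eval (signVec x)))
    fun y => expect_nonneg fun x _ => derivRatio_nonneg hl _ _ _
  rw [expect_comm] at hratio
  refine ⟨y, hnorm, hinf, ?_⟩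
  have hcover : prob (fun x => c.eval (signVec x) ^ 2 ≤ η) ≤
      prob fun x => l * (c.lineDeriv (signVec y)).eval (signVec x) ^ 2 ≤ 2 * η ∨
        1 / 2 ≤ derivRatio l √η (c.eval (signVec x))
          ((c.lineDeriv (signVec y)).eval (signVec x)) := by
    refine prob_mono fun x hx => or_iff_not_imp_right.2 fun hsmall => ?_
    rw [not_le, derivRatio, sq_sqrt hη.le, div_lt_div_iff₀ (by positivity) two_pos] at hsmall
    linarith
  have hmarkov := mul_prob_le_expect (f := fun x => derivRatio l √η (c.eval (signVec x))
    ((c.lineDeriv (signVec y)).eval (signVec x))) (fun _ => derivRatio_nonneg hl _ _ _) (1 / 2)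
  linarith [hcover.trans (prob_or_le _ _)]

end RandomDerivative

lemma derivRatioTaylorConst_sqrt_mul {l η s : ℝ} (hη : 0 ≤ η) :
    derivRatioTaylorConst l √(η * s ^ 2) = derivRatioTaylorConst l √η / |s| ^ 3 := by
  rw [derivRatioTaylorConst, derivRatioTaylorConst, sqrt_mul hη, sqrt_sq_eq_abs]
  field_simp

lemma exists_expect_derivRatio_le (d : ℕ) {l η ε : ℝ} (hl : 0 < l) (hl₁ : l ≤ 1) (hη : 0 < η)
    (hε : 0 < ε) :
    ∃ τ > 0, ∀ (ι : Type*) [Fintype ι] [DecidableEq ι] (c : MultilinearPoly ι), c.DegreeLE d →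
      0 < c.sqNorm → c.sumSqInfluence ≤ τ * c.sqNorm ^ 2 →
      𝔼 x, 𝔼 y, derivRatio l √(η * c.sqNorm) (c.eval (signVec x))
        ((c.lineDeriv (signVec y)).eval (signVec x)) ≤ rotationConst d * √l + ε := by
  set A := 128 * derivRatioTaylorConst l √η * lindebergConst d + 1
  have hA₁ : 128 * derivRatioTaylorConst l √η * lindebergConst d ≤ A :=
    le_add_of_nonneg_right one_pos.le
  have hA : 0 < A := by
    have := derivRatioTaylorConst_nonneg (l := l) (sqrt_pos.2 hη)
    have := lindebergConst_pos d
    positivity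
  set γ := ε / (2 * A * (d + 1))
  have hγ : 0 < γ := by positivity
  refine ⟨γ * ε / (2 * A), by positivity, fun ι _ _ c hc hpos hinf => ?_⟩
  obtain ⟨s, hs, hs_sq⟩ : ∃ s > 0, c.sqNorm = s ^ 2 :=
    ⟨_, sqrt_pos.2 hpos, (sq_sqrt hpos.le).symm⟩
  have hbound := hc.expect_derivRatio_le hl hl₁ (sqrt_pos.2 (mul_pos hη hpos)) (mul_pos hγ hs)
  refine hbound.trans (add_le_add_right ?_ _)
  rw [hs_sq] at hinf
  have htotal : c.totalInfluence ≤ d * s ^ 2 := hs_sq ▸ hc.totalInfluence_le_sqNorm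
  rw [hs_sq, derivRatioTaylorConst_sqrt_mul hη.le, abs_of_pos hs]
  calc 128 * (derivRatioTaylorConst l √η / s ^ 3) * lindebergConst d *
        (γ * s * c.totalInfluence + (γ * s)⁻¹ * c.sumSqInfluence)
      = 128 * derivRatioTaylorConst l √η * lindebergConst d *
        ((γ * s * c.totalInfluence + (γ * s)⁻¹ * c.sumSqInfluence) / s ^ 3) := by ring
    _ ≤ A * ((γ * s * ((d + 1) * s ^ 2) +
          (γ * s)⁻¹ * (γ * ε / (2 * A) * (s ^ 2) ^ 2)) / s ^ 3) := by
        have := c.totalInfluence_nonneg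
        have := c.sumSqInfluence_nonneg
        gcongr
        nlinarith
    _ = ε := by
        simp only [γ]
        field_simp
        ring

lemma DegreeLE.exists_lineDeriv_prob_eval_sq_le {ι : Type*} [Fintype ι] [DecidableEq ι] {k : ℕ}
    {c : MultilinearPoly ι} (hc : c.DegreeLE (k + 1)) (hpos : 0 < c.sqNorm) {g r η η' τ : ℝ}
    (hg : 0 < g) (hr : 0 < r) (hη : 0 < η) (hη' : 0 ≤ η') (hηη' : 4 * η ≤ η' * g * r ^ 2)
    (hvar : g * c.sqNorm ≤ c.variance)
    (hinf : 3600 * (k + 1 : ℕ) ^ 2 * c.sumSqInfluence ≤ τ * (g * c.sqNorm) ^ 2) (hτ : 0 ≤ τ) :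
    ∃ e : MultilinearPoly ι, e.DegreeLE k ∧ 0 < e.sqNorm ∧ e.sumSqInfluence ≤ τ * e.sqNorm ^ 2 ∧
      prob (fun x => c.eval (signVec x) ^ 2 ≤ η * c.sqNorm) ≤
        prob (fun x => e.eval (signVec x) ^ 2 ≤ η' * e.sqNorm) +
          200 * 𝔼 x, 𝔼 y, derivRatio (r ^ 2) √(η * c.sqNorm) (c.eval (signVec x))
            ((c.lineDeriv (signVec y)).eval (signVec x)) := by
  obtain ⟨y, hnorm, hsumSq, hprob⟩ := hc.exists_prob_eval_sq_le (sq_nonneg r) (mul_pos hη hpos)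
  set e := c.lineDeriv (signVec y)
  have he : g * c.sqNorm / 2 ≤ e.sqNorm := by linarith [c.variance_le_totalInfluence]
  refine ⟨e, hc.lineDeriv _, lt_of_lt_of_le (by positivity) he, ?_, hprob.trans ?_⟩
  · calc e.sumSqInfluence ≤ τ * (g * c.sqNorm / 2) ^ 2 := by linarith
      _ ≤ τ * e.sqNorm ^ 2 := by gcongr
  · gcongr
    refine prob_mono fun x hx => le_of_mul_le_mul_left (hx.trans ?_) (pow_pos hr 2)
    calc 2 * (η * c.sqNorm) = 4 * η * (c.sqNorm / 2) := by ring
      _ ≤ η' * g * r ^ 2 * (c.sqNorm / 2) := by gcongr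
      _ = r ^ 2 * (η' * (g * c.sqNorm / 2)) := by ring
      _ ≤ r ^ 2 * (η' * e.sqNorm) := by gcongr

/-- The small-ball property in degree `k`: a polynomial whose influences are spread out is rarely
much smaller than its norm. It is homogeneous, so no normalisation of the polynomial is needed. -/
def SmallBall (k : ℕ) : Prop :=
  ∀ δ > 0, ∃ η > 0, ∃ τ > 0, ∀ (ι : Type u) [Fintype ι] [DecidableEq ι] (c : MultilinearPoly ι),
    c.DegreeLE k → 0 < c.sqNorm → c.sumSqInfluence ≤ τ * c.sqNorm ^ 2 →
    prob (fun x => c.eval (signVec x) ^ 2 ≤ η * c.sqNorm) ≤ δ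

lemma smallBall_zero : SmallBall 0 := by
  intro δ hδ
  refine ⟨1 / 16, by norm_num, 1, one_pos, fun ι _ _ c hc hpos _ => ?_⟩
  have hvar : c.variance ≤ 0 * c.sqNorm := by
    simpa using c.variance_le_totalInfluence.trans hc.totalInfluence_le_sqNorm
  linarith [prob_eval_sq_le_of_variance_le hpos (by norm_num) hvar]

lemma SmallBall.succ {k : ℕ} (ih : SmallBall.{u} k) : SmallBall.{u} (k + 1) := by
  intro δ hδ
  obtain ⟨η', hη', τ', hτ', hsmall⟩ := ih (δ / 2) (by positivity)
  set g := min (1 / 2) (δ / 8)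
  have hg : 0 < g := by positivity
  have hrot := rotationConst_pos (k + 1)
  set r := min 1 (δ / (800 * rotationConst (k + 1)))
  have hr : 0 < r := by positivity
  have hr_le : r * (800 * rotationConst (k + 1)) ≤ δ :=
    (le_div_iff₀ (by positivity)).1 (min_le_right _ _)
  set η := min (1 / 16) (η' * g * r ^ 2 / 4)
  have hη : 0 < η := by positivity
  obtain ⟨τ, hτ, hratio⟩ := exists_expect_derivRatio_le (k + 1) (ε := δ / 800)
    (pow_pos hr 2) (pow_le_one₀ hr.le (min_le_left _ _)) hη (by positivity)
  refine ⟨η, hη, min τ (τ' * g ^ 2 / (3600 * ((k + 1 : ℕ) : ℝ) ^ 2)), by positivity,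
    fun ι _ _ c hc hpos hinf => ?_⟩
  rcases le_or_gt c.variance (g * c.sqNorm) with hvar | hvar
  · have hη_le : η ≤ 1 / 16 := min_le_left _ _
    have hg_le : g ≤ δ / 8 := min_le_right _ _
    calc _ ≤ prob (fun x => c.eval (signVec x) ^ 2 ≤ 1 / 16 * c.sqNorm) :=
          prob_mono fun x hx => hx.trans (by gcongr)
      _ ≤ 8 * g := prob_eval_sq_le_of_variance_le hpos (min_le_left _ _) hvar
      _ ≤ δ := by linarith
  have hη_le : 4 * η ≤ η' * g * r ^ 2 := by
    linarith [min_le_right (1 / 16) (η' * g * r ^ 2 / 4)]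
  have hinf_le : 3600 * (k + 1 : ℕ) ^ 2 * c.sumSqInfluence ≤ τ' * (g * c.sqNorm) ^ 2 :=
    calc 3600 * (k + 1 : ℕ) ^ 2 * c.sumSqInfluence
        ≤ 3600 * (k + 1 : ℕ) ^ 2 *
          (τ' * g ^ 2 / (3600 * ((k + 1 : ℕ) : ℝ) ^ 2) * c.sqNorm ^ 2) := by
          gcongr
          exact hinf.trans (by gcongr; exact min_le_right _ _)
      _ = τ' * (g * c.sqNorm) ^ 2 := by field_simp
  obtain ⟨e, he, he_pos, he_inf, hprob⟩ := hc.exists_lineDeriv_prob_eval_sq_le hpos hg hr hη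
    hη'.le hη_le hvar.le hinf_le hτ'.le
  have he_small := hsmall ι e he he_pos he_inf
  have hc_ratio := hratio ι c hc hpos (hinf.trans (by gcongr; exact min_le_left _ _))
  rw [sqrt_sq hr.le] at hc_ratio
  linarith

theorem smallBall (k : ℕ) : SmallBall.{u} k := by
  induction k with
  | zero => exact smallBall_zero
  | succ k ih => exact ih.succ

end MultilinearPoly

end SmallBall

section Restriction

variable {ι : Type*} [DecidableEq ι]

lemma signVec_piecewise (J : Finset ι) (y x : ι → Bool) :
    signVec (J.piecewise y x) = J.piecewise (signVec y) (signVec x) := by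
  ext i
  by_cases hi : i ∈ J <;> simp [signVec, hi]

lemma piecewise_flipBit {J : Finset ι} {i : ι} (hi : i ∈ J) (y x : ι → Bool) :
    J.piecewise (flipBit i y) x = flipBit i (J.piecewise y x) := by
  ext j
  rcases eq_or_ne j i with rfl | hj
  · simp [flipBit, hi]
  · by_cases hjJ : j ∈ J <;> simp [flipBit, hj, hjJ]

variable [Fintype ι]

-- Exchanging the coordinates in `J` is a measure-preserving involution of pairs of points.
lemma expect_expect_piecewise (J : Finset ι) (f : (ι → Bool) → ℝ) :
    𝔼 x, 𝔼 y, f (J.piecewise y x) = 𝔼 x, f x := by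
  have hinv : Function.Involutive fun p : (ι → Bool) × (ι → Bool) =>
      (J.piecewise p.2 p.1, J.piecewise p.1 p.2) := fun p => by
    ext i <;> by_cases hi : i ∈ J <;> simp [hi]
  calc 𝔼 x, 𝔼 y, f (J.piecewise y x)
      = 𝔼 p : (ι → Bool) × (ι → Bool), f (J.piecewise p.2 p.1) :=
        (expect_product' univ univ fun x y => f (J.piecewise y x)).symm
    _ = 𝔼 p : (ι → Bool) × (ι → Bool), f p.1 :=
        Fintype.expect_equiv hinv.toPerm _ _ fun _ => rfl
    _ = 𝔼 x, 𝔼 _y : ι → Bool, f x := expect_product' univ univ fun x _ => f x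
    _ = 𝔼 x, f x := by simp only [Fintype.expect_const]

open scoped Classical in
lemma expect_prob_piecewise (J : Finset ι) (P : (ι → Bool) → Prop) :
    𝔼 x, prob (fun y => P (J.piecewise y x)) = prob P :=
  expect_expect_piecewise J fun z => if P z then 1 else 0

namespace MultilinearPoly

/-- The polynomial in the variables of `J` obtained by fixing all other variables at `x`. -/
def restrict (c : MultilinearPoly ι) (J : Finset ι) (x : ι → ℝ) : MultilinearPoly ι :=
  fun S => ∑ U with U ∩ J = S, c U * ∏ i ∈ U \ J, x i

lemma eval_restrict (c : MultilinearPoly ι) (J : Finset ι) (x y : ι → ℝ) :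
    (c.restrict J x).eval y = c.eval (J.piecewise y x) := by
  simp only [eval, restrict, sum_filter, sum_mul, ite_mul, zero_mul]
  rw [sum_comm]
  refine sum_congr rfl fun U _ => ?_
  rw [sum_ite_eq, if_pos (mem_univ _), mul_assoc, ← prod_inter_mul_prod_sdiff U J (J.piecewise y x),
    mul_comm (∏ i ∈ U \ J, x i)]
  congr 2 <;> refine prod_congr rfl fun i hi => ?_
  · rw [piecewise_eq_of_mem _ _ _ (mem_inter.1 hi).2]
  · rw [piecewise_eq_of_notMem _ _ _ (mem_sdiff.1 hi).2]

lemma eval_restrict_signVec (c : MultilinearPoly ι) (J : Finset ι) (x y : ι → Bool) :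
    (c.restrict J (signVec x)).eval (signVec y) = c.eval (signVec (J.piecewise y x)) := by
  rw [eval_restrict, signVec_piecewise]

lemma omits_restrict (c : MultilinearPoly ι) {J : Finset ι} {i : ι} (hi : i ∉ J) (x : ι → ℝ) :
    (c.restrict J x).Omits i := by
  intro S hS
  rw [restrict, filter_false_of_mem, sum_empty]
  rintro U - rfl
  exact hi (mem_inter.1 hS).2

lemma DegreeLE.restrict {d : ℕ} {c : MultilinearPoly ι} (hc : c.DegreeLE d) (J : Finset ι)
    (x : ι → ℝ) : (c.restrict J x).DegreeLE d := by
  refine fun S hS => sum_eq_zero fun U hU => ?_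
  rw [mem_filter] at hU
  rw [hc U (hS.trans_le (hU.2 ▸ card_le_card inter_subset_left)), zero_mul]

lemma DegreeLE.restrict_mem_lowDegree {d : ℕ} {c : MultilinearPoly ι} (hc : c.DegreeLE d)
    (J S : Finset ι) : (fun x => c.restrict J (signVec x) S) ∈ lowDegree ι d := by
  have hsum : (fun x => c.restrict J (signVec x) S) =
      ∑ U with U ∩ J = S, c U • walsh (U \ J) := by
    ext x
    simp [MultilinearPoly.restrict, walsh]
  rw [hsum]
  refine Submodule.sum_mem _ fun U _ => ?_
  rcases lt_or_ge d #U with hU | hU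
  · simp [hc U hU]
  · exact Submodule.smul_mem _ _ (walsh_mem_lowDegree ((card_le_card sdiff_subset).trans hU))

lemma expect_sq_restrict (c : MultilinearPoly ι) (J S : Finset ι) :
    𝔼 x, c.restrict J (signVec x) S ^ 2 = ∑ U with U ∩ J = S, c U ^ 2 := by
  refine expect_sq_sum_walsh {U | U ∩ J = S} c (t := fun U => U \ J) fun U hU V hV hUV => ?_
  simp only [mem_coe, mem_filter_univ] at hU hV hUV
  rw [← sdiff_union_inter U J, ← sdiff_union_inter V J, hUV, hU, hV]

lemma expect_sqNorm_restrict (c : MultilinearPoly ι) (J : Finset ι) :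
    𝔼 x, (c.restrict J (signVec x)).sqNorm = c.sqNorm := by
  simp only [sqNorm, expect_sum_comm, expect_sq_restrict]
  exact sum_fiberwise univ (· ∩ J) _

lemma influence_restrict_of_notMem (c : MultilinearPoly ι) {J : Finset ι} {i : ι} (hi : i ∉ J)
    (x : ι → ℝ) : (c.restrict J x).influence i = 0 :=
  sum_eq_zero fun S hS => by simp [c.omits_restrict hi x S (mem_filter.1 hS).2]

lemma expect_influence_restrict (c : MultilinearPoly ι) {J : Finset ι} {i : ι} (hi : i ∈ J) :
    𝔼 x, (c.restrict J (signVec x)).influence i = c.influence i := by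
  simp only [influence, expect_sum_comm, expect_sq_restrict]
  rw [sum_comm' (t' := {U | i ∈ U}) (s' := fun U => {U ∩ J})]
  · simp only [sum_singleton]
  · intro S U
    simp only [mem_filter_univ, mem_singleton]
    constructor
    · rintro ⟨hS, rfl⟩
      exact ⟨rfl, (mem_inter.1 hS).1⟩
    · rintro ⟨rfl, hU⟩
      exact ⟨mem_inter.2 ⟨hU, hi⟩, rfl⟩

lemma expect_totalInfluence_restrict (c : MultilinearPoly ι) (J : Finset ι) :
    𝔼 x, (c.restrict J (signVec x)).totalInfluence = ∑ i ∈ J, c.influence i := by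
  simp only [totalInfluence, expect_sum_comm]
  rw [← sum_subset (subset_univ J) fun i _ hi => by simp [c.influence_restrict_of_notMem hi]]
  exact sum_congr rfl fun i hi => c.expect_influence_restrict hi

lemma expect_variance_restrict_le (c : MultilinearPoly ι) (J : Finset ι) :
    𝔼 x, (c.restrict J (signVec x)).variance ≤ ∑ i ∈ J, c.influence i := by
  rw [← expect_totalInfluence_restrict]
  exact expect_le_expect fun x _ => variance_le_totalInfluence _

lemma DegreeLE.expect_sumSqInfluence_restrict_le {d : ℕ} {c : MultilinearPoly ι}
    (hc : c.DegreeLE d) (J : Finset ι) :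
    𝔼 x, (c.restrict J (signVec x)).sumSqInfluence ≤ 9 ^ d * ∑ i ∈ J, c.influence i ^ 2 := by
  simp only [sumSqInfluence, expect_sum_comm]
  rw [← sum_subset (subset_univ J) fun i _ hi => by simp [c.influence_restrict_of_notMem hi],
    mul_sum]
  refine sum_le_sum fun i hi => ?_
  have hmoment := expect_sq_sum_sq_le {S : Finset ι | i ∈ S} (a := 1)
    (fun _ _ => zero_le_one) (fun S _ => hc.restrict_mem_lowDegree J S)
  simp only [Pi.one_apply, one_mul] at hmoment
  rw [← c.expect_influence_restrict hi]
  exact hmoment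

lemma DegreeLE.le_prob_totalInfluence_restrict {d : ℕ} {c : MultilinearPoly ι}
    (hc : c.DegreeLE d) (J : Finset ι) :
    1 / (4 * 9 ^ d) ≤ prob fun x =>
      (∑ i ∈ J, c.influence i) / 2 ≤ (c.restrict J (signVec x)).totalInfluence := by
  have hpz := le_prob_half_expect_le_sum_sq {S : Finset ι | S.Nonempty} (a := fun S => (#S : ℝ))
    (fun _ _ => by positivity) (fun S _ => hc.restrict_mem_lowDegree J S)
  simpa only [← totalInfluence_eq_sum, expect_totalInfluence_restrict] using hpz

lemma sub_le_expect_sq_restrict_empty (c : MultilinearPoly ι) (J : Finset ι) :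
    c.sqNorm - ∑ i ∈ J, c.influence i ≤ 𝔼 x, c.restrict J (signVec x) ∅ ^ 2 := by
  have hnorm := c.expect_sqNorm_restrict J
  simp only [sqNorm_eq_add_variance (c.restrict J _), expect_add_distrib] at hnorm
  linarith [c.expect_variance_restrict_le J]

lemma DegreeLE.le_prob_sq_restrict_empty {d : ℕ} {c : MultilinearPoly ι} (hc : c.DegreeLE d)
    (J : Finset ι) :
    1 / (4 * 9 ^ d) ≤ prob fun x =>
      (c.sqNorm - ∑ i ∈ J, c.influence i) / 2 ≤ c.restrict J (signVec x) ∅ ^ 2 := by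
  have hpz := le_prob_half_expect_le_sum_sq {(∅ : Finset ι)} (a := 1) (fun _ _ => zero_le_one)
    (fun S _ => hc.restrict_mem_lowDegree J S)
  simp only [sum_singleton, Pi.one_apply, one_mul] at hpz
  refine hpz.trans (prob_mono fun x hx => le_trans ?_ hx)
  linarith [c.sub_le_expect_sq_restrict_empty J]

lemma expect_sq_restrict_empty_sub_le (c : MultilinearPoly ι) (J : Finset ι) :
    𝔼 x, (c.restrict J (signVec x) ∅ - c ∅) ^ 2 ≤ c.variance := by
  have hmean : 𝔼 x, c.restrict J (signVec x) ∅ = c ∅ := by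
    calc _ = 𝔼 x, 𝔼 y, c.eval (signVec (J.piecewise y x)) := by
          simp only [← eval_restrict_signVec, expect_eval]
      _ = c ∅ := by rw [expect_expect_piecewise J fun x => c.eval (signVec x), expect_eval]
  have hsq : 𝔼 x, c.restrict J (signVec x) ∅ ^ 2 ≤ c.sqNorm := by
    rw [expect_sq_restrict]
    exact sum_le_sum_of_subset_of_nonneg (subset_univ _) fun _ _ _ => sq_nonneg _
  simp only [sub_sq, expect_add_distrib, expect_sub_distrib, ← mul_expect, ← expect_mul, hmean,
    Fintype.expect_const]
  linarith [c.sqNorm_eq_add_variance]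

end MultilinearPoly

end Restriction

section Sensitivity

variable {ι : Type*} [Fintype ι]

namespace MultilinearPoly

/-- The fraction of the second moment due to the variance. -/
def relVariance (c : MultilinearPoly ι) : ℝ := c.variance / c.sqNorm

lemma relVariance_nonneg (c : MultilinearPoly ι) : 0 ≤ c.relVariance :=
  div_nonneg c.variance_nonneg c.sqNorm_nonneg

variable [DecidableEq ι]

/-- The probability that flipping the bit `i` changes the sign of the polynomial. -/
def signInfluence (c : MultilinearPoly ι) (i : ι) : ℝ :=
  prob fun x => ¬(0 ≤ c.eval (signVec x) ↔ 0 ≤ c.eval (signVec (flipBit i x)))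

/-- The contribution of the variables in `J` to the average sensitivity of the sign. -/
def sensitivity (c : MultilinearPoly ι) (J : Finset ι) : ℝ := ∑ i ∈ J, c.signInfluence i

lemma sensitivity_le_card (c : MultilinearPoly ι) (J : Finset ι) : c.sensitivity J ≤ #J := by
  have hsum := sum_le_card_nsmul J c.signInfluence 1 fun i _ => prob_le_one _
  rwa [nsmul_one] at hsum

lemma expect_sensitivity_restrict (c : MultilinearPoly ι) (J : Finset ι) :
    𝔼 x, (c.restrict J (signVec x)).sensitivity J = c.sensitivity J := by
  simp only [sensitivity, expect_sum_comm]
  refine sum_congr rfl fun i hi => ?_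
  simp only [signInfluence, eval_restrict_signVec, piecewise_flipBit hi]
  exact expect_prob_piecewise J fun z =>
    ¬(0 ≤ c.eval (signVec z) ↔ 0 ≤ c.eval (signVec (flipBit i z)))

lemma signInfluence_eq_zero_of_sqNorm_eq_zero {c : MultilinearPoly ι} (hc : c.sqNorm = 0)
    (i : ι) : c.signInfluence i = 0 := by
  have hcoeff (S : Finset ι) : c S = 0 :=
    pow_eq_zero_iff two_ne_zero |>.1 <|
      (sum_eq_zero_iff_of_nonneg fun _ _ => sq_nonneg _).1 hc S (mem_univ S)
  simp [signInfluence, eval, hcoeff, prob_false]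

-- A sign change forces one of the two values to deviate from the mean `c ∅` by at least `|c ∅|`.
lemma signInfluence_mul_le (c : MultilinearPoly ι) (i : ι) :
    c ∅ ^ 2 * c.signInfluence i ≤ 2 * c.variance := by
  set dev : (ι → Bool) → ℝ := fun x => (c.eval (signVec x) - c ∅) ^ 2
  have hcover : c.signInfluence i ≤
      prob fun x => c ∅ ^ 2 ≤ dev x ∨ c ∅ ^ 2 ≤ dev (flipBit i x) := by
    refine prob_mono fun x hx => ?_
    have hsign : c.eval (signVec x) * c ∅ ≤ 0 ∨ c.eval (signVec (flipBit i x)) * c ∅ ≤ 0 := by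
      by_contra! hpos
      rcases lt_or_ge (c ∅) 0 with hneg | hnonneg
      · exact hx (iff_of_false (not_le.2 (neg_of_mul_pos_left hpos.1 hneg.le))
          (not_le.2 (neg_of_mul_pos_left hpos.2 hneg.le)))
      · exact hx (iff_of_true (pos_of_mul_pos_left hpos.1 hnonneg).le
          (pos_of_mul_pos_left hpos.2 hnonneg).le)
    exact hsign.imp (fun h => by nlinarith [sq_nonneg (c.eval (signVec x))])
      fun h => by nlinarith [sq_nonneg (c.eval (signVec (flipBit i x)))]
  have hflip : prob (fun x => c ∅ ^ 2 ≤ dev (flipBit i x)) = prob fun x => c ∅ ^ 2 ≤ dev x :=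
    expect_comp_flipBit i fun x => if c ∅ ^ 2 ≤ dev x then (1 : ℝ) else 0
  have hmarkov := mul_prob_le_expect (f := dev) (fun _ => sq_nonneg _) (c ∅ ^ 2)
  rw [expect_sq_eval_sub] at hmarkov
  have := hcover.trans (prob_or_le _ _)
  nlinarith [sq_nonneg (c ∅)]

lemma signInfluence_le (c : MultilinearPoly ι) (i : ι) : c.signInfluence i ≤ 4 * c.relVariance := by
  rcases c.sqNorm_nonneg.eq_or_lt with hzero | hpos
  · rw [signInfluence_eq_zero_of_sqNorm_eq_zero hzero.symm]
    linarith [c.relVariance_nonneg]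
  rw [relVariance, mul_div, le_div_iff₀ hpos, sqNorm_eq_add_variance]
  have hle_one : c.signInfluence i ≤ 1 := prob_le_one _
  nlinarith [c.signInfluence_mul_le i, c.variance_nonneg]

lemma sensitivity_le_relVariance (c : MultilinearPoly ι) (J : Finset ι) :
    c.sensitivity J ≤ 4 * #J * c.relVariance := by
  refine (sum_le_card_nsmul J _ _ fun i _ => c.signInfluence_le i).trans_eq ?_
  rw [nsmul_eq_mul]
  ring

end MultilinearPoly

end Sensitivity

section Blocks

variable {ι : Type*} [DecidableEq ι]

lemma sum_parts_sum {M : Type*} [AddCommMonoid M] {J : Finset ι} (P : Finpartition J)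
    (f : ι → M) : ∑ K ∈ P.parts, ∑ i ∈ K, f i = ∑ i ∈ J, f i := by
  conv_rhs => rw [← P.biUnion_parts]
  exact (sum_biUnion P.disjoint).symm

end Blocks

namespace MultilinearPoly

section CappedVariance

variable {ι : Type*} [Fintype ι]

/-- The relative variance scaled by `Q` and truncated at `1`: the quantity controlling the
sensitivity in the recursion over blocks of variables. -/
def cappedVariance (Q : ℝ) (c : MultilinearPoly ι) : ℝ := min 1 (Q * c.relVariance)

lemma cappedVariance_le_one (Q : ℝ) (c : MultilinearPoly ι) : c.cappedVariance Q ≤ 1 :=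
  min_le_left _ _

lemma cappedVariance_le_mul (Q : ℝ) (c : MultilinearPoly ι) :
    c.cappedVariance Q ≤ Q * c.relVariance :=
  min_le_right _ _

lemma cappedVariance_nonneg {Q : ℝ} (hQ : 0 ≤ Q) (c : MultilinearPoly ι) :
    0 ≤ c.cappedVariance Q :=
  le_min zero_le_one (mul_nonneg hQ c.relVariance_nonneg)

lemma cappedVariance_mul_sqNorm_le {Q : ℝ} (hQ : 0 ≤ Q) (c : MultilinearPoly ι) :
    c.cappedVariance Q * c.sqNorm ≤ Q * c.variance := by
  rcases c.sqNorm_nonneg.eq_or_lt with hzero | hpos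
  · rw [← hzero, mul_zero]
    exact mul_nonneg hQ c.variance_nonneg
  · calc c.cappedVariance Q * c.sqNorm ≤ Q * c.relVariance * c.sqNorm := by
          gcongr
          exact c.cappedVariance_le_mul Q
      _ = Q * c.variance := by rw [relVariance, mul_assoc, div_mul_cancel₀ _ hpos.ne']

-- Either the mean of `c` has moved by half of `μ`, or its square norm is still at least `μ² / 4`.
lemma sq_mul_cappedVariance_le {Q : ℝ} (hQ : 0 ≤ Q) (c : MultilinearPoly ι) (μ : ℝ) :
    μ ^ 2 * c.cappedVariance Q ≤ 4 * Q * c.variance + 4 * (c ∅ - μ) ^ 2 := by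
  have hcap := c.cappedVariance_nonneg hQ
  rcases le_or_gt (μ ^ 2) (4 * (c ∅ - μ) ^ 2) with hfar | hclose
  · have hone := mul_le_mul_of_nonneg_left (c.cappedVariance_le_one Q) (sq_nonneg μ)
    linarith [mul_nonneg hQ c.variance_nonneg]
  · have hmean : μ ^ 2 ≤ 4 * c.sqNorm := by
      nlinarith [c.sqNorm_eq_add_variance, c.variance_nonneg, sq_nonneg (2 * c ∅ - μ)]
    nlinarith [c.cappedVariance_mul_sqNorm_le hQ, mul_le_mul_of_nonneg_right hmean hcap,
      sq_nonneg (c ∅ - μ)]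

end CappedVariance

section Biased

variable {ι : Type*} [Fintype ι] [DecidableEq ι]

lemma sensitivity_eq_sum_parts (c : MultilinearPoly ι) {J : Finset ι} (P : Finpartition J) :
    c.sensitivity J = ∑ K ∈ P.parts, 𝔼 x, (c.restrict K (signVec x)).sensitivity K := by
  simp only [expect_sensitivity_restrict]
  exact (sum_parts_sum P c.signInfluence).symm

lemma expect_cappedVariance_restrict_le {Q : ℝ} (hQ : 0 ≤ Q) {c : MultilinearPoly ι}
    (hpos : 0 < c.sqNorm) (hc : c.relVariance ≤ 1 / 2) (K : Finset ι) :
    𝔼 x, (c.restrict K (signVec x)).cappedVariance Q ≤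
      (8 * Q * (∑ i ∈ K, c.influence i) + 8 * c.variance) / c.sqNorm := by
  have hmean : c.sqNorm ≤ 2 * c ∅ ^ 2 := by
    rw [relVariance, div_le_iff₀ hpos] at hc
    linarith [c.sqNorm_eq_add_variance]
  have hnonneg : 0 ≤ 𝔼 x, (c.restrict K (signVec x)).cappedVariance Q :=
    expect_nonneg fun x _ => cappedVariance_nonneg hQ _
  have hscaled : c ∅ ^ 2 * 𝔼 x, (c.restrict K (signVec x)).cappedVariance Q ≤
      4 * Q * (∑ i ∈ K, c.influence i) + 4 * c.variance := by
    calc c ∅ ^ 2 * 𝔼 x, (c.restrict K (signVec x)).cappedVariance Q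
        ≤ 𝔼 x, (4 * Q * (c.restrict K (signVec x)).variance +
            4 * (c.restrict K (signVec x) ∅ - c ∅) ^ 2) := by
          rw [mul_expect]
          exact expect_le_expect fun x _ => sq_mul_cappedVariance_le hQ _ _
      _ ≤ 4 * Q * (∑ i ∈ K, c.influence i) + 4 * c.variance := by
          rw [expect_add_distrib, ← mul_expect, ← mul_expect]
          gcongr
          · exact c.expect_variance_restrict_le K
          · exact c.expect_sq_restrict_empty_sub_le K
  rw [le_div_iff₀ hpos]
  nlinarith [mul_le_mul_of_nonneg_right hmean hnonneg]

lemma DegreeLE.sum_expect_cappedVariance_le_relVariance {d : ℕ} {Q : ℝ} (hQ : 0 ≤ Q)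
    {c : MultilinearPoly ι} (hd : c.DegreeLE d) (hpos : 0 < c.sqNorm) (hc : c.relVariance ≤ 1 / 2)
    {J : Finset ι} (P : Finpartition J) :
    ∑ K ∈ P.parts, 𝔼 x, (c.restrict K (signVec x)).cappedVariance Q ≤
      (8 * d * Q + 8 * #P.parts) * c.relVariance := by
  have hinf : ∑ i ∈ J, c.influence i ≤ d * c.variance :=
    (sum_le_univ_sum_of_nonneg c.influence_nonneg).trans hd.totalInfluence_le_variance
  calc ∑ K ∈ P.parts, 𝔼 x, (c.restrict K (signVec x)).cappedVariance Q
      ≤ ∑ K ∈ P.parts, (8 * Q * (∑ i ∈ K, c.influence i) + 8 * c.variance) / c.sqNorm :=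
        sum_le_sum fun K _ => expect_cappedVariance_restrict_le hQ hpos hc K
    _ = (8 * Q * (∑ i ∈ J, c.influence i) + #P.parts * (8 * c.variance)) / c.sqNorm := by
        rw [← sum_div, sum_add_distrib, ← mul_sum, sum_parts_sum, sum_const,
          nsmul_eq_mul]
    _ ≤ (8 * Q * (d * c.variance) + #P.parts * (8 * c.variance)) / c.sqNorm := by gcongr
    _ = (8 * d * Q + 8 * #P.parts) * c.relVariance := by rw [relVariance]; ring

end Biased

end MultilinearPoly

section Expectation

lemma div_add_le_div_add {a b u v : ℝ} (ha : 0 ≤ a) (hab : a ≤ b) (hv : 0 ≤ v) (hvu : v ≤ u) :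
    a / (a + u) ≤ b / (b + v) := by
  rcases ha.eq_or_lt with rfl | hpos
  · rw [zero_div]
    exact div_nonneg hab (add_nonneg hab hv)
  · rw [div_le_div_iff₀ (by linarith) (by linarith)]
    nlinarith

-- The concave function `t ↦ t / (t + u)` lies below its tangent at the mean.
lemma expect_div_add_le {I : Type*} (s : Finset I) {a : I → ℝ} (ha : ∀ k ∈ s, 0 ≤ a k) {u : ℝ}
    (hu : 0 < u) : 𝔼 k ∈ s, a k / (a k + u) ≤ (𝔼 k ∈ s, a k) / ((𝔼 k ∈ s, a k) + u) := by
  rcases s.eq_empty_or_nonempty with rfl | hs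
  · simp
  set m := 𝔼 k ∈ s, a k with hm
  have hm₀ : 0 ≤ m := expect_nonneg ha
  have htangent (k : I) (hk : k ∈ s) :
      a k / (a k + u) ≤ m / (m + u) + u / (m + u) ^ 2 * (a k - m) := by
    have hak := ha k hk
    rw [← sub_nonneg]
    have hgap : m / (m + u) + u / (m + u) ^ 2 * (a k - m) - a k / (a k + u) =
        u * (a k - m) ^ 2 / ((m + u) ^ 2 * (a k + u)) := by
      field_simp
      ring
    rw [hgap]
    positivity
  calc 𝔼 k ∈ s, a k / (a k + u)
      ≤ 𝔼 k ∈ s, (m / (m + u) + u / (m + u) ^ 2 * (a k - m)) := expect_le_expect htangent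
    _ = m / (m + u) := by
        rw [expect_add_distrib, ← mul_expect, expect_sub_distrib, expect_const hs,
          expect_const hs, ← hm, sub_self, mul_zero, add_zero]

/-- The reciprocal of a lower bound for the probability that a sum of squares of degree-`d`
polynomials is at least half its mean while a given nonnegative function is not much larger than
its own mean. -/
def pzConst (d : ℕ) : ℝ := 8 * 9 ^ d

lemma one_le_pzConst (d : ℕ) : 1 ≤ pzConst d := by
  have : (1 : ℝ) ≤ 9 ^ d := one_le_pow₀ (by norm_num)
  rw [pzConst]
  linarith

lemma pzConst_pos (d : ℕ) : 0 < pzConst d := one_pos.trans_le (one_le_pzConst d)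

lemma inv_pzConst_le_prob_and {Ω : Type*} [Fintype Ω] {d : ℕ} {A : Ω → Prop}
    (hA : 1 / (4 * 9 ^ d) ≤ prob A) {f : Ω → ℝ} (hf : ∀ x, 0 ≤ f x) :
    1 / pzConst d ≤ prob fun x => A x ∧ f x ≤ pzConst d * 𝔼 y, f y := by
  have hmarkov := prob_mul_expect_lt_le hf (pzConst_pos d)
  simp only [← not_le] at hmarkov
  have hsplit : (1 : ℝ) / (4 * 9 ^ d) = 2 * (1 / pzConst d) := by
    rw [pzConst]
    ring
  linarith [prob_sub_prob_not_le A fun x => f x ≤ pzConst d * 𝔼 y, f y]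

lemma mul_prob_le_expect_of_forall {Ω : Type*} [Fintype Ω] {A : Ω → Prop} {f : Ω → ℝ} {a : ℝ}
    (hf : ∀ x, 0 ≤ f x) (ha : 0 ≤ a) (h : ∀ x, A x → a ≤ f x) : a * prob A ≤ 𝔼 x, f x :=
  (mul_le_mul_of_nonneg_left (prob_mono h) ha).trans (mul_prob_le_expect hf a)

end Expectation

section Gradient

variable {ι : Type*} [Fintype ι] [DecidableEq ι]

namespace MultilinearPoly

/-- The squared length of the gradient with respect to the variables in `K`. -/
def gradSq (c : MultilinearPoly ι) (K : Finset ι) (z : ι → Bool) : ℝ :=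
  ∑ i ∈ K, (c.pderiv i).eval (signVec z) ^ 2

lemma gradSq_nonneg (c : MultilinearPoly ι) (K : Finset ι) (z : ι → Bool) : 0 ≤ c.gradSq K z :=
  sum_nonneg fun _ _ => sq_nonneg _

lemma eval_pderiv_sq (c : MultilinearPoly ι) (i : ι) (z : ι → Bool) :
    (c.pderiv i).eval (signVec z) ^ 2 =
      ((c.eval (signVec z) - c.eval (signVec (flipBit i z))) / 2) ^ 2 := by
  rw [eval_eq_dropVar_add i c, eval_eq_dropVar_add i c (signVec (flipBit i z)),
    (omits_dropVar i c).eval_flipBit, (omits_pderiv i c).eval_flipBit, signVec_flipBit_self]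
  have hsign : signVec z i ^ 2 = 1 := boolSign_sq (z i)
  linear_combination (-(c.pderiv i).eval (signVec z) ^ 2) * hsign

lemma gradSq_restrict (c : MultilinearPoly ι) (K : Finset ι) (x y : ι → Bool) :
    (c.restrict K (signVec x)).gradSq univ y = c.gradSq K (K.piecewise y x) := by
  rw [gradSq, gradSq, ← sum_subset (subset_univ K) fun i _ hi => ?_]
  · refine sum_congr rfl fun i hi => ?_
    simp only [eval_pderiv_sq, eval_restrict_signVec, piecewise_flipBit hi]
  · simp [(c.omits_restrict hi (signVec x)).pderiv_eq_zero, eval]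

lemma expect_gradSq (c : MultilinearPoly ι) : 𝔼 y, c.gradSq univ y = c.totalInfluence := by
  simp only [gradSq, expect_sum_comm, expect_sq_eval, sqNorm_pderiv, totalInfluence]

/-- The analogue of `derivRatio` for the gradient in the variables of `K`, with the
regularisation `θ` added to the square of the value. -/
def gradRatio (Q θ : ℝ) (c : MultilinearPoly ι) (K : Finset ι) (z : ι → Bool) : ℝ :=
  Q * c.gradSq K z / (Q * c.gradSq K z + (c.eval (signVec z) ^ 2 + θ))

lemma gradRatio_nonneg {Q θ : ℝ} (hQ : 0 ≤ Q) (hθ : 0 ≤ θ) (c : MultilinearPoly ι) (K : Finset ι)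
    (z : ι → Bool) : 0 ≤ c.gradRatio Q θ K z := by
  have := c.gradSq_nonneg K z
  rw [gradRatio]
  positivity

lemma gradRatio_le_one {Q θ : ℝ} (hQ : 0 ≤ Q) (hθ : 0 ≤ θ) (c : MultilinearPoly ι) (K : Finset ι)
    (z : ι → Bool) : c.gradRatio Q θ K z ≤ 1 := by
  have := c.gradSq_nonneg K z
  exact div_le_one_of_le₀ (le_add_of_nonneg_right (by positivity)) (by positivity)

lemma gradRatio_restrict (Q θ : ℝ) (c : MultilinearPoly ι) (K : Finset ι) (x y : ι → Bool) :
    (c.restrict K (signVec x)).gradRatio Q θ univ y = c.gradRatio Q θ K (K.piecewise y x) := by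
  simp only [gradRatio, gradSq_restrict, eval_restrict_signVec]

lemma cappedVariance_div_le_gradRatio {Q t : ℝ} (hQ : 0 ≤ Q) (ht : 1 ≤ t) {c : MultilinearPoly ι}
    (hpos : 0 < c.sqNorm) {z : ι → Bool} (hgrad : c.totalInfluence / 2 ≤ c.gradSq univ z)
    (heval : c.eval (signVec z) ^ 2 ≤ t * c.sqNorm) :
    c.cappedVariance Q / (4 * t) ≤ c.gradRatio Q 0 univ z := by
  have hvar := mul_nonneg hQ c.variance_nonneg
  have hbase : Q * (c.variance / 2) / (Q * (c.variance / 2) + t * c.sqNorm) ≤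
      c.gradRatio Q 0 univ z := by
    refine div_add_le_div_add (by linarith) ?_ (by positivity) (by rwa [add_zero])
    gcongr
    linarith [c.variance_le_totalInfluence]
  refine hbase.trans' ?_
  have ht₀ : 0 < t := one_pos.trans_le ht
  have hvar₀ := c.variance_nonneg
  rw [div_le_div_iff₀ (by positivity) (by positivity)]
  nlinarith [mul_le_mul_of_nonneg_right (c.cappedVariance_le_one Q) hvar,
    mul_le_mul_of_nonneg_left (c.cappedVariance_mul_sqNorm_le hQ) ht₀.le,
    mul_le_mul_of_nonneg_right ht hvar]

lemma DegreeLE.cappedVariance_le_expect_gradRatio {d : ℕ} {Q : ℝ} (hQ : 0 ≤ Q)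
    {c : MultilinearPoly ι} (hc : c.DegreeLE d) :
    c.cappedVariance Q ≤ 4 * pzConst d ^ 2 * 𝔼 z, c.gradRatio Q 0 univ z := by
  have hratio := gradRatio_nonneg hQ le_rfl c univ
  rcases c.sqNorm_nonneg.eq_or_lt with hzero | hpos
  · have hcap : c.cappedVariance Q = 0 := by simp [cappedVariance, relVariance, ← hzero]
    rw [hcap]
    exact mul_nonneg (by positivity) (expect_nonneg fun z _ => hratio z)
  have hgrad := le_prob_half_expect_le_sum_sq univ (a := 1) (fun _ _ => zero_le_one)
    fun i _ => (hc.pderiv i).eval_mem_lowDegree signVec_mem_lowDegree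
  simp only [Pi.one_apply, one_mul] at hgrad
  change _ ≤ prob fun z => (𝔼 y, c.gradSq univ y) / 2 ≤ c.gradSq univ z at hgrad
  rw [expect_gradSq] at hgrad
  have hboth := inv_pzConst_le_prob_and hgrad (f := fun z => c.eval (signVec z) ^ 2)
    fun z => sq_nonneg _
  rw [expect_sq_eval] at hboth
  have ht := pzConst_pos d
  have hcap : 0 ≤ c.cappedVariance Q / (4 * pzConst d) :=
    div_nonneg (c.cappedVariance_nonneg hQ) (by positivity)
  have hexpect := mul_prob_le_expect_of_forall hratio hcap fun z hz =>
    cappedVariance_div_le_gradRatio hQ (one_le_pzConst d) hpos (And.left hz) (And.right hz)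
  calc c.cappedVariance Q
      = 4 * pzConst d ^ 2 * (c.cappedVariance Q / (4 * pzConst d) * (1 / pzConst d)) := by
        field_simp
    _ ≤ 4 * pzConst d ^ 2 * 𝔼 z, c.gradRatio Q 0 univ z := by
        gcongr
        exact (mul_le_mul_of_nonneg_left hboth hcap).trans hexpect

lemma DegreeLE.expect_cappedVariance_restrict_le_expect_gradRatio {d : ℕ} {Q : ℝ} (hQ : 0 ≤ Q)
    {c : MultilinearPoly ι} (hc : c.DegreeLE d) (K : Finset ι) :
    𝔼 x, (c.restrict K (signVec x)).cappedVariance Q ≤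
      4 * pzConst d ^ 2 * 𝔼 z, c.gradRatio Q 0 K z := by
  rw [← expect_expect_piecewise K (c.gradRatio Q 0 K), mul_expect]
  simp only [← gradRatio_restrict Q 0]
  exact expect_le_expect fun x _ => (hc.restrict K _).cappedVariance_le_expect_gradRatio hQ

lemma gradRatio_zero_le {Q θ : ℝ} (hQ : 0 ≤ Q) (hθ : 0 < θ) (c : MultilinearPoly ι) (K : Finset ι)
    {z : ι → Bool} (hz : θ ≤ c.eval (signVec z) ^ 2) :
    c.gradRatio Q 0 K z ≤ 2 * c.gradRatio Q θ K z := by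
  have hgrad := mul_nonneg hQ (c.gradSq_nonneg K z)
  have hpos := hθ.trans_le hz
  rw [gradRatio, gradRatio, mul_div, div_le_div_iff₀ (by positivity) (by positivity)]
  nlinarith

lemma sum_gradRatio_le {Q θ : ℝ} (hQ : 0 ≤ Q) (hθ : 0 < θ) (c : MultilinearPoly ι)
    {J : Finset ι} (P : Finpartition J) (z : ι → Bool) :
    ∑ K ∈ P.parts, c.gradRatio Q θ K z ≤ #P.parts * c.gradRatio (Q / #P.parts) θ univ z := by
  have hgrad : (𝔼 K ∈ P.parts, Q * c.gradSq K z) ≤ Q / #P.parts * c.gradSq univ z := by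
    rw [← mul_expect, expect_eq_sum_div_card, mul_div_assoc', div_mul_eq_mul_div]
    simp only [gradSq]
    rw [sum_parts_sum]
    exact div_le_div_of_nonneg_right (mul_le_mul_of_nonneg_left
      (sum_le_univ_sum_of_nonneg fun _ => sq_nonneg _) hQ) (Nat.cast_nonneg _)
  have hnonneg (K : Finset ι) : 0 ≤ Q * c.gradSq K z := mul_nonneg hQ (c.gradSq_nonneg K z)
  rw [← card_mul_expect]
  gcongr
  exact (expect_div_add_le P.parts (fun K _ => hnonneg K) (by positivity)).trans <|
    div_add_le_div_add (expect_nonneg fun K _ => hnonneg K) hgrad (by positivity) le_rfl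

lemma expect_sum_gradRatio_zero_le {Q θ : ℝ} (hQ : 0 ≤ Q) (hθ : 0 < θ) (c : MultilinearPoly ι)
    {J : Finset ι} (P : Finpartition J) :
    𝔼 z, ∑ K ∈ P.parts, c.gradRatio Q 0 K z ≤
      #P.parts * (prob (fun z => c.eval (signVec z) ^ 2 ≤ θ) +
        2 * 𝔼 z, c.gradRatio (Q / #P.parts) θ univ z) := by
  rw [prob, mul_expect, ← expect_add_distrib, mul_expect]
  refine expect_le_expect fun z _ => ?_
  have hnonneg : 0 ≤ c.gradRatio (Q / #P.parts) θ univ z :=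
    gradRatio_nonneg (by positivity) hθ.le c univ z
  split_ifs with hz
  · calc ∑ K ∈ P.parts, c.gradRatio Q 0 K z ≤ #P.parts * 1 := by
          rw [← nsmul_eq_mul]
          exact sum_le_card_nsmul _ _ _ fun K _ => gradRatio_le_one hQ le_rfl c K z
      _ ≤ _ := by
          gcongr
          linarith
  · calc ∑ K ∈ P.parts, c.gradRatio Q 0 K z ≤ ∑ K ∈ P.parts, 2 * c.gradRatio Q θ K z :=
          sum_le_sum fun K _ => gradRatio_zero_le hQ hθ c K (not_le.1 hz).le
      _ ≤ 2 * (#P.parts * c.gradRatio (Q / #P.parts) θ univ z) := by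
          rw [← mul_sum]
          gcongr
          exact sum_gradRatio_le hQ hθ c P z
      _ = _ := by ring

-- The gradient is recovered from a random directional derivative by the Paley-Zygmund inequality.
lemma gradRatio_le_expect_derivRatio {l θ : ℝ} (hl : 0 ≤ l) (hθ : 0 < θ) (c : MultilinearPoly ι)
    (z : ι → Bool) :
    c.gradRatio l θ univ z ≤ 72 * 𝔼 y, derivRatio l √θ (c.eval (signVec z))
      ((c.lineDeriv (signVec y)).eval (signVec z)) := by
  have hgrad := mul_nonneg hl (c.gradSq_nonneg univ z)
  have hmem : (fun y => (c.lineDeriv (signVec y)).eval (signVec z)) ∈ lowDegree ι 1 := by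
    have hsum : (fun y => (c.lineDeriv (signVec y)).eval (signVec z)) =
        ∑ i, (c.pderiv i).eval (signVec z) • fun y => signVec y i := by
      ext y
      simp [eval_lineDeriv, mul_comm]
    rw [hsum]
    exact Submodule.sum_mem _ fun i _ => Submodule.smul_mem _ _ (signVec_mem_lowDegree i)
  have hpz := le_prob_half_expect_le_sum_sq {()} (a := 1) (fun _ _ => zero_le_one)
    fun _ _ => hmem
  simp only [sum_singleton, Pi.one_apply, one_mul, eval_lineDeriv, expect_sq_sum_signVec] at hpz
  have hpoint (y : ι → Bool)
      (hy : c.gradSq univ z / 2 ≤ (∑ i, signVec y i * (c.pderiv i).eval (signVec z)) ^ 2) :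
      c.gradRatio l θ univ z / 2 ≤ derivRatio l √θ (c.eval (signVec z))
        ((c.lineDeriv (signVec y)).eval (signVec z)) := by
    rw [derivRatio, sq_sqrt hθ.le, add_assoc, eval_lineDeriv]
    refine le_trans ?_ (div_add_le_div_add (a := l * (c.gradSq univ z / 2)) (by linarith)
      (by gcongr) (by positivity) le_rfl)
    rw [gradRatio, div_div, div_le_div_iff₀ (by linarith [sq_nonneg (c.eval (signVec z))])
      (by linarith [sq_nonneg (c.eval (signVec z))])]
    nlinarith [sq_nonneg (c.eval (signVec z))]
  have hhalf : 0 ≤ c.gradRatio l θ univ z / 2 :=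
    div_nonneg (gradRatio_nonneg hl hθ.le c univ z) zero_le_two
  have hexpect := mul_prob_le_expect_of_forall
    (fun y => derivRatio_nonneg hl √θ (c.eval (signVec z)) _)
    hhalf hpoint
  have hprob := mul_le_mul_of_nonneg_left hpz hhalf
  rw [gradSq] at hexpect
  linarith

end MultilinearPoly

end Gradient

section Regular

namespace MultilinearPoly

universe u

theorem exists_sum_expect_cappedVariance_le (d b : ℕ) {Q δ : ℝ} (hQ : 0 < Q) (hQb : Q ≤ b)
    (hδ : 0 < δ) :
    ∃ τ > 0, ∀ (ι : Type u) [Fintype ι] [DecidableEq ι] (c : MultilinearPoly ι), c.DegreeLE d →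
      0 < c.sqNorm → c.sumSqInfluence ≤ τ * c.sqNorm ^ 2 →
      ∀ {J : Finset ι} (P : Finpartition J), #P.parts = b →
        ∑ K ∈ P.parts, 𝔼 x, (c.restrict K (signVec x)).cappedVariance Q ≤
          4 * pzConst d ^ 2 * b * (144 * rotationConst d * √(Q / b) + δ) := by
  have hb : (0 : ℝ) < b := hQ.trans_le hQb
  obtain ⟨η, hη, τ₁, hτ₁, hsmall⟩ := smallBall d (δ / 2) (by positivity)
  obtain ⟨τ₂, hτ₂, hratio⟩ := exists_expect_derivRatio_le d (l := Q / b) (by positivity)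
    (div_le_one_of_le₀ hQb hb.le) hη (show 0 < δ / 288 by positivity)
  refine ⟨min τ₁ τ₂, lt_min hτ₁ hτ₂, fun ι _ _ c hc hpos hinf J P hP => ?_⟩
  have hprob := hsmall ι c hc hpos (hinf.trans (by gcongr; exact min_le_left _ _))
  have hderiv := hratio ι c hc hpos (hinf.trans (by gcongr; exact min_le_right _ _))
  have hgrad : 𝔼 z, c.gradRatio (Q / b) (η * c.sqNorm) univ z ≤
      72 * (rotationConst d * √(Q / b) + δ / 288) := by
    refine (expect_le_expect fun z _ =>
      gradRatio_le_expect_derivRatio (by positivity) (by positivity) c z).trans ?_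
    rw [← mul_expect]
    gcongr
  calc ∑ K ∈ P.parts, 𝔼 x, (c.restrict K (signVec x)).cappedVariance Q
      ≤ ∑ K ∈ P.parts, 4 * pzConst d ^ 2 * 𝔼 z, c.gradRatio Q 0 K z :=
        sum_le_sum fun K _ => hc.expect_cappedVariance_restrict_le_expect_gradRatio hQ.le K
    _ = 4 * pzConst d ^ 2 * 𝔼 z, ∑ K ∈ P.parts, c.gradRatio Q 0 K z := by
        rw [← mul_sum, expect_sum_comm]
    _ ≤ 4 * pzConst d ^ 2 * (b * (δ / 2 + 2 * (72 * (rotationConst d * √(Q / b) + δ / 288)))) := by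
        gcongr
        refine (expect_sum_gradRatio_zero_le hQ.le (θ := η * c.sqNorm) (by positivity) c P).trans ?_
        rw [hP]
        gcongr
    _ = 4 * pzConst d ^ 2 * b * (144 * rotationConst d * √(Q / b) + δ) := by ring

end MultilinearPoly

end Regular

section Expectation

variable {Ω : Type*} [Fintype Ω] [Nonempty Ω]

lemma expect_le_sub_mul_of_le_prob {f : Ω → ℝ} {A : Ω → Prop} {M a κ : ℝ} (ha : 0 ≤ a)
    (hf : ∀ x, f x ≤ M) (hκ : κ ≤ prob A) (hfA : ∀ x, A x → f x ≤ M - a) :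
    𝔼 x, f x ≤ M - a * κ := by
  have hdefect := mul_prob_le_expect_of_forall (f := fun x => M - f x)
    (fun x => sub_nonneg.2 (hf x)) ha fun x hx => by linarith [hfA x hx]
  rw [expect_sub_distrib, Fintype.expect_const] at hdefect
  linarith [mul_le_mul_of_nonneg_left hκ ha]

end Expectation

lemma natCast_le_mul_rpow {α C : ℝ} (hα : 0 ≤ α) {n : ℕ} (hC : 0 ≤ C) (hn : n ≤ C) :
    (n : ℝ) ≤ C * (n : ℝ) ^ α := by
  rcases n.eq_zero_or_pos with rfl | hpos
  · rw [Nat.cast_zero]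
    positivity
  · exact hn.trans (le_mul_of_one_le_right hC (one_le_rpow (mod_cast hpos) hα))

section Regularity

variable {ι : Type*}

lemma exists_mul_sum_lt_of_lt_sum_sq {T : Finset ι} {w : ι → ℝ} (hw : ∀ i, 0 ≤ w i) {τ : ℝ}
    (h : τ * (∑ i ∈ T, w i) ^ 2 < ∑ i ∈ T, w i ^ 2) : ∃ i ∈ T, τ * ∑ j ∈ T, w j < w i := by
  contrapose! h
  calc ∑ i ∈ T, w i ^ 2 ≤ ∑ i ∈ T, (τ * ∑ j ∈ T, w j) * w i :=
        sum_le_sum fun i hi => (sq (w i)).trans_le (mul_le_mul_of_nonneg_right (h i hi) (hw i))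
    _ = τ * (∑ i ∈ T, w i) ^ 2 := by rw [← mul_sum]; ring

variable [DecidableEq ι]

-- As long as the remaining weights are not regular, deleting the largest one removes a fraction
-- `τ` of their sum.
lemma exists_regular_or_small_sdiff {w : ι → ℝ} (hw : ∀ i, 0 ≤ w i) {τ : ℝ} (hτ : τ ≤ 1) (L : ℕ)
    {J : Finset ι} (hJ : J.Nonempty) :
    ∃ H ⊆ J, H.Nonempty ∧ #H ≤ L + 1 ∧
      (∑ i ∈ J \ H, w i ^ 2 ≤ τ * (∑ i ∈ J \ H, w i) ^ 2 ∨
        ∑ i ∈ J \ H, w i ≤ (1 - τ) ^ L * ∑ i ∈ J, w i) := by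
  induction L with
  | zero =>
    obtain ⟨j, hj⟩ := hJ
    refine ⟨{j}, singleton_subset_iff.2 hj, singleton_nonempty j, by simp, Or.inr ?_⟩
    rw [pow_zero, one_mul]
    exact sum_le_sum_of_subset_of_nonneg sdiff_subset fun i _ _ => hw i
  | succ L ih =>
    obtain ⟨H, hHJ, hH, hcard, hregular | hsmall⟩ := ih
    · exact ⟨H, hHJ, hH, by omega, Or.inl hregular⟩
    by_cases hregular : ∑ i ∈ J \ H, w i ^ 2 ≤ τ * (∑ i ∈ J \ H, w i) ^ 2
    · exact ⟨H, hHJ, hH, by omega, Or.inl hregular⟩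
    obtain ⟨i, hi, hlarge⟩ := exists_mul_sum_lt_of_lt_sum_sq hw (not_le.1 hregular)
    refine ⟨insert i H, insert_subset (mem_sdiff.1 hi).1 hHJ, insert_nonempty i H,
      (card_insert_le i H).trans (by omega), Or.inr ?_⟩
    calc ∑ j ∈ J \ insert i H, w j = ∑ j ∈ J \ H, w j - w i := by
          rw [sdiff_insert, sum_erase_eq_sub hi]
      _ ≤ (1 - τ) * ∑ j ∈ J \ H, w j := by linarith
      _ ≤ (1 - τ) * ((1 - τ) ^ L * ∑ j ∈ J, w j) := by gcongr
      _ = (1 - τ) ^ (L + 1) * ∑ j ∈ J, w j := by ring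

end Regularity

namespace MultilinearPoly

section Tail

variable {ι : Type*} [Fintype ι] [DecidableEq ι] {d : ℕ} {c : MultilinearPoly ι}

lemma DegreeLE.le_prob_cappedVariance_restrict_le (hc : c.DegreeLE d) (hpos : 0 < c.sqNorm)
    {Q : ℝ} (hQ : 1 ≤ Q) {T : Finset ι}
    (hT : 8 * pzConst d * Q * ∑ i ∈ T, c.influence i ≤ c.sqNorm) :
    1 / pzConst d ≤ prob fun x => (c.restrict T (signVec x)).cappedVariance Q ≤ 1 / 2 := by
  have hpz := one_le_pzConst d
  set S := ∑ i ∈ T, c.influence i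
  have hS : 0 ≤ S := sum_nonneg fun i _ => c.influence_nonneg i
  have hhalf : S ≤ c.sqNorm / 2 := by
    have : 1 * 1 * S ≤ pzConst d * Q * S := by gcongr
    linarith
  refine (inv_pzConst_le_prob_and (hc.le_prob_sq_restrict_empty T) fun x =>
    (c.restrict T (signVec x)).variance_nonneg).trans (prob_mono ?_)
  rintro x ⟨hmean, hvar⟩
  set q := c.restrict T (signVec x)
  have hvar_le : q.variance * (8 * Q) ≤ c.sqNorm := by
    calc q.variance * (8 * Q) ≤ pzConst d * S * (8 * Q) := by
          gcongr
          exact hvar.trans (by gcongr; exact c.expect_variance_restrict_le T)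
      _ ≤ c.sqNorm := by linarith
  have hnorm : c.sqNorm / 4 ≤ q.sqNorm := by
    rw [q.sqNorm_eq_add_variance]
    linarith [q.variance_nonneg]
  refine (q.cappedVariance_le_mul Q).trans ?_
  rw [relVariance, ← mul_div_assoc, div_le_iff₀ (by linarith)]
  linarith

lemma DegreeLE.le_prob_sumSqInfluence_restrict_le (hc : c.DegreeLE d) {τ : ℝ} (hτ : 0 ≤ τ)
    {T : Finset ι} (hpos : 0 < ∑ i ∈ T, c.influence i)
    (hregular : ∑ i ∈ T, c.influence i ^ 2 ≤ τ * (∑ i ∈ T, c.influence i) ^ 2) :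
    1 / pzConst d ≤ prob fun x => 0 < (c.restrict T (signVec x)).sqNorm ∧
      (c.restrict T (signVec x)).sumSqInfluence ≤
        4 * pzConst d * 9 ^ d * d ^ 2 * τ * (c.restrict T (signVec x)).sqNorm ^ 2 := by
  have hpz := pzConst_pos d
  set S := ∑ i ∈ T, c.influence i
  refine (inv_pzConst_le_prob_and (hc.le_prob_totalInfluence_restrict T) fun x =>
    (c.restrict T (signVec x)).sumSqInfluence_nonneg).trans (prob_mono ?_)
  rintro x ⟨htotal, hsumSq⟩
  set q := c.restrict T (signVec x)
  have hS : S ≤ 2 * (d * q.sqNorm) := by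
    linarith [(hc.restrict T (signVec x)).totalInfluence_le_sqNorm]
  have hq : 0 < d * q.sqNorm := by linarith
  refine ⟨pos_of_mul_pos_right hq d.cast_nonneg, ?_⟩
  calc q.sumSqInfluence ≤ pzConst d * (9 ^ d * ∑ i ∈ T, c.influence i ^ 2) :=
        hsumSq.trans (by gcongr; exact hc.expect_sumSqInfluence_restrict_le T)
    _ ≤ pzConst d * (9 ^ d * (τ * S ^ 2)) := by gcongr
    _ ≤ pzConst d * (9 ^ d * (τ * (2 * (d * q.sqNorm)) ^ 2)) := by gcongr
    _ = 4 * pzConst d * 9 ^ d * d ^ 2 * τ * q.sqNorm ^ 2 := by ring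

end Tail

section Recursion

variable {ι : Type*} [Fintype ι] [DecidableEq ι]

variable (ι) in
/-- The induction hypothesis of the recursion: the desired bound for all sets of fewer than `m`
variables. -/
def SensitivityBoundBelow (d m : ℕ) (α C Q : ℝ) : Prop :=
  ∀ J : Finset ι, #J < m → ∀ c : MultilinearPoly ι, c.DegreeLE d →
    c.sensitivity J ≤ C * (#J : ℝ) ^ α * c.cappedVariance Q

variable {d m b : ℕ} {α C Q : ℝ} {c : MultilinearPoly ι}

lemma SensitivityBoundBelow.exists_sensitivity_le_sum
    (hbelow : SensitivityBoundBelow ι d m α C Q) (hα : 0 ≤ α) (hC : 0 ≤ C) (hQ : 0 ≤ Q)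
    (hb : 2 < b) {J : Finset ι} (hJ : #J ≤ m) (hbJ : b ≤ #J) (hc : c.DegreeLE d) :
    ∃ P : Finpartition J, #P.parts = b ∧ c.sensitivity J ≤ C * (#J : ℝ) ^ α *
      ((2 / b) ^ α * ∑ K ∈ P.parts, 𝔼 x, (c.restrict K (signVec x)).cappedVariance Q) := by
  obtain ⟨P, hP, hPb⟩ := Finpartition.exists_equipartition_card_eq J (by omega) hbJ
  have hb₀ : (0 : ℝ) < b := by norm_cast; omega
  have hcard (K : Finset ι) (hK : K ∈ P.parts) : #K ≤ #J / b + 1 :=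
    hPb ▸ hP.card_part_le_average_add_one hK
  have hlt (K : Finset ι) (hK : K ∈ P.parts) : #K < m := by
    have := Nat.div_le_div_left (a := #J) (show 3 ≤ b from hb) three_pos
    have := hcard K hK
    omega
  have hrpow (K : Finset ι) (hK : K ∈ P.parts) : (#K : ℝ) ^ α ≤ (2 / b) ^ α * (#J : ℝ) ^ α := by
    rw [← mul_rpow (by positivity) (by positivity)]
    gcongr
    have hone : (1 : ℝ) ≤ #J / b := (one_le_div hb₀).2 (mod_cast hbJ)
    calc (#K : ℝ) ≤ ((#J / b : ℕ) : ℝ) + 1 := mod_cast hcard K hK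
      _ ≤ #J / b + #J / b := add_le_add Nat.cast_div_le hone
      _ = 2 / b * #J := by ring
  refine ⟨P, hPb, ?_⟩
  rw [c.sensitivity_eq_sum_parts P, mul_sum, mul_sum]
  refine sum_le_sum fun K hK => ?_
  rw [mul_expect, mul_expect]
  refine expect_le_expect fun x _ => (hbelow K (hlt K hK) _ (hc.restrict K _)).trans ?_
  have hcap := (c.restrict K (signVec x)).cappedVariance_nonneg hQ
  calc C * (#K : ℝ) ^ α * (c.restrict K (signVec x)).cappedVariance Q
      ≤ C * ((2 / b) ^ α * (#J : ℝ) ^ α) * (c.restrict K (signVec x)).cappedVariance Q := by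
        gcongr
        exact hrpow K hK
    _ = _ := by ring

lemma SensitivityBoundBelow.sensitivity_le_of_biased
    (hbelow : SensitivityBoundBelow ι d m α C Q) (hα : 0 ≤ α) (hC : 0 ≤ C) (hQ : 2 ≤ Q)
    (hb : 2 < b) (hbQ : (2 / b : ℝ) ^ α * (8 * d * Q + 8 * b) ≤ Q) {J : Finset ι} (hJ : #J = m)
    (hbJ : b ≤ #J) (hc : c.DegreeLE d) (hbiased : Q * c.relVariance < 1) :
    c.sensitivity J ≤ C * (#J : ℝ) ^ α * c.cappedVariance Q := by
  have hrel := c.relVariance_nonneg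
  rw [cappedVariance, min_eq_right hbiased.le]
  rcases c.sqNorm_nonneg.eq_or_lt with hzero | hpos
  · have hrel₀ : c.relVariance = 0 := by rw [relVariance, ← hzero, div_zero]
    simpa [hrel₀] using c.sensitivity_le_relVariance J
  have hhalf : c.relVariance ≤ 1 / 2 := by nlinarith
  obtain ⟨P, hP, hsens⟩ :=
    hbelow.exists_sensitivity_le_sum hα hC (zero_le_two.trans hQ) hb hJ.le hbJ hc
  have hsum := 
    hc.sum_expect_cappedVariance_le_relVariance (zero_le_two.trans hQ) hpos hhalf P
  rw [hP] at hsum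
  calc c.sensitivity J
      ≤ C * (#J : ℝ) ^ α * ((2 / b) ^ α * ((8 * d * Q + 8 * b) * c.relVariance)) :=
        hsens.trans (by gcongr)
    _ = C * (#J : ℝ) ^ α * ((2 / b) ^ α * (8 * d * Q + 8 * b) * c.relVariance) := by ring
    _ ≤ C * (#J : ℝ) ^ α * (Q * c.relVariance) := by gcongr

variable (ι) in
/-- Splitting the variables of a regular polynomial into `b` blocks halves the bound provided by
the induction hypothesis. -/
def RegularContraction (d b : ℕ) (α Q τ : ℝ) : Prop :=
  ∀ c : MultilinearPoly ι, c.DegreeLE d → 0 < c.sqNorm → c.sumSqInfluence ≤ τ * c.sqNorm ^ 2 →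
    ∀ {J : Finset ι} (P : Finpartition J), #P.parts = b →
      (2 / b : ℝ) ^ α * ∑ K ∈ P.parts, 𝔼 x, (c.restrict K (signVec x)).cappedVariance Q ≤ 1 / 2

lemma SensitivityBoundBelow.sensitivity_le_of_regular {τ : ℝ}
    (hbelow : SensitivityBoundBelow ι d m α C Q) (hα : 0 ≤ α) (hQ : 0 ≤ Q) (hb : 2 < b)
    (hbC : 2 * b ≤ C) (hcontr : RegularContraction ι d b α Q τ) {T : Finset ι} (hT : #T < m)
    (hc : c.DegreeLE d) (hpos : 0 < c.sqNorm) (hregular : c.sumSqInfluence ≤ τ * c.sqNorm ^ 2) :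
    c.sensitivity T ≤ C * (m : ℝ) ^ α / 2 := by
  have hC : 0 ≤ C := hbC.trans' (by positivity)
  rcases lt_or_ge #T b with hTb | hTb
  · have hone : 1 ≤ (m : ℝ) ^ α := one_le_rpow (mod_cast by omega) hα
    have hcard : (#T : ℝ) ≤ b := mod_cast hTb.le
    have hCm : C * 1 ≤ C * (m : ℝ) ^ α := by gcongr
    linarith [c.sensitivity_le_card T]
  · obtain ⟨P, hP, hsens⟩ := hbelow.exists_sensitivity_le_sum hα hC hQ hb hT.le hTb hc
    have hcap := hcontr c hc hpos hregular P hP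
    calc c.sensitivity T
        ≤ C * (#T : ℝ) ^ α * (1 / 2) := hsens.trans (by gcongr)
      _ ≤ C * (m : ℝ) ^ α * (1 / 2) := by gcongr
      _ = C * (m : ℝ) ^ α / 2 := by ring

lemma SensitivityBoundBelow.sensitivity_le_half (hbelow : SensitivityBoundBelow ι d m α C Q)
    (hα : 0 ≤ α) (hC : 0 ≤ C) {T : Finset ι} (hT : #T < m) (hc : c.DegreeLE d)
    (hcap : c.cappedVariance Q ≤ 1 / 2) : c.sensitivity T ≤ C * (m : ℝ) ^ α / 2 :=
  calc c.sensitivity T ≤ C * (#T : ℝ) ^ α * c.cappedVariance Q := hbelow T hT c hc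
    _ ≤ C * (#T : ℝ) ^ α * (1 / 2) := by gcongr
    _ ≤ C * (m : ℝ) ^ α * (1 / 2) := by gcongr
    _ = C * (m : ℝ) ^ α / 2 := by ring

/-- The numerical constraints under which the recursion closes: `b` is the number of blocks, `L`
bounds the number of influential variables removed before the remaining ones are `η`-regular or
negligible, and `τ` is the regularity required by `RegularContraction`. -/
structure RecursionConstants (d b L : ℕ) (α C Q τ η : ℝ) : Prop where
  two_lt_b : 2 < b
  four_le_Q : 4 ≤ Q
  biased : (2 / b : ℝ) ^ α * (8 * d * Q + 8 * b) ≤ Q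
  two_mul_b_le_C : 2 * b ≤ C
  head : 2 * (L + 1) * pzConst d ≤ C
  η_nonneg : 0 ≤ η
  η_le_one : η ≤ 1
  regular_tail : 4 * pzConst d * 9 ^ d * d ^ 2 * η ≤ τ
  small_tail : 8 * pzConst d * Q * d * (1 - η) ^ L ≤ 1

namespace RecursionConstants

variable {L : ℕ} {τ η : ℝ}

lemma C_nonneg (h : RecursionConstants d b L α C Q τ η) : 0 ≤ C :=
  h.two_mul_b_le_C.trans' (by positivity)

lemma pow_nonneg (h : RecursionConstants d b L α C Q τ η) : 0 ≤ (1 - η) ^ L :=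
  _root_.pow_nonneg (sub_nonneg.2 h.η_le_one) L

lemma le_prob_sensitivity_restrict_le (h : RecursionConstants d b L α C Q τ η) (hα : 0 ≤ α)
    (hcontr : RegularContraction ι d b α Q τ) (hbelow : SensitivityBoundBelow ι d m α C Q)
    {T : Finset ι} (hT : #T < m) (hc : c.DegreeLE d) (hpos : 0 < c.sqNorm)
    (htail : ∑ i ∈ T, c.influence i ^ 2 ≤ η * (∑ i ∈ T, c.influence i) ^ 2 ∨
      ∑ i ∈ T, c.influence i ≤ (1 - η) ^ L * c.totalInfluence) :
    1 / pzConst d ≤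
      prob fun x => (c.restrict T (signVec x)).sensitivity T ≤ C * (m : ℝ) ^ α / 2 := by
  have hpz := pzConst_pos d
  have hQ := h.four_le_Q
  have hpow := h.pow_nonneg
  by_cases hsmall : ∑ i ∈ T, c.influence i ≤ (1 - η) ^ L * c.totalInfluence
  · refine (hc.le_prob_cappedVariance_restrict_le hpos (Q := Q) (T := T) (by linarith) ?_).trans <|
      prob_mono fun x hx => hbelow.sensitivity_le_half hα h.C_nonneg hT (hc.restrict T _) hx
    calc 8 * pzConst d * Q * ∑ i ∈ T, c.influence i
        ≤ 8 * pzConst d * Q * ((1 - η) ^ L * (d * c.sqNorm)) := by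
          gcongr
          exact hsmall.trans (by gcongr; exact hc.totalInfluence_le_sqNorm)
      _ = 8 * pzConst d * Q * d * (1 - η) ^ L * c.sqNorm := by ring
      _ ≤ c.sqNorm := mul_le_of_le_one_left hpos.le h.small_tail
  · have hsum : 0 < ∑ i ∈ T, c.influence i :=
      (not_le.1 hsmall).trans_le' (mul_nonneg hpow c.totalInfluence_nonneg)
    have hregular := htail.resolve_right hsmall
    refine (hc.le_prob_sumSqInfluence_restrict_le h.η_nonneg hsum hregular).trans <|
      prob_mono fun x hx => ?_
    exact hbelow.sensitivity_le_of_regular hα (by linarith) h.two_lt_b h.two_mul_b_le_C hcontr hT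
      (hc.restrict T _) hx.1 (hx.2.trans (by gcongr; exact h.regular_tail))

lemma sensitivity_le_of_pos (h : RecursionConstants d b L α C Q τ η) (hα : 0 ≤ α)
    (hcontr : RegularContraction ι d b α Q τ) (hbelow : SensitivityBoundBelow ι d m α C Q)
    {J : Finset ι} (hJ : #J = m) (hJ₀ : J.Nonempty) (hc : c.DegreeLE d) (hpos : 0 < c.sqNorm) :
    c.sensitivity J ≤ C * (m : ℝ) ^ α := by
  have hC := h.C_nonneg
  obtain ⟨H, hHJ, hH, hHL, htail⟩ :=
    exists_regular_or_small_sdiff c.influence_nonneg h.η_le_one L hJ₀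
  have hT : #(J \ H) < m := hJ ▸ card_lt_card (sdiff_ssubset hHJ hH)
  have hprob := h.le_prob_sensitivity_restrict_le hα hcontr hbelow hT hc hpos <|
    htail.imp_right fun hsmall => hsmall.trans <|
      mul_le_mul_of_nonneg_left (sum_le_univ_sum_of_nonneg c.influence_nonneg) h.pow_nonneg
  set M := C * (m : ℝ) ^ α
  have hM (x : ι → Bool) : (c.restrict (J \ H) (signVec x)).sensitivity (J \ H) ≤ M := by
    refine (hbelow _ hT _ (hc.restrict _ _)).trans ?_
    calc C * (#(J \ H) : ℝ) ^ α * (c.restrict (J \ H) (signVec x)).cappedVariance Q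
        ≤ C * (#(J \ H) : ℝ) ^ α :=
          mul_le_of_le_one_right (by positivity) (cappedVariance_le_one _ _)
      _ ≤ C * (m : ℝ) ^ α := by gcongr
  have hsensT : c.sensitivity (J \ H) ≤ M - M / 2 * (1 / pzConst d) := by
    rw [← expect_sensitivity_restrict]
    exact expect_le_sub_mul_of_le_prob (by positivity) hM hprob fun x hx => by linarith
  have hsensH : c.sensitivity H ≤ L + 1 := (c.sensitivity_le_card H).trans (mod_cast hHL)
  have hgain : (L : ℝ) + 1 ≤ M / 2 * (1 / pzConst d) := by
    have hone : 1 ≤ (m : ℝ) ^ α := one_le_rpow (mod_cast by omega) hα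
    have hCM : C ≤ M := le_mul_of_one_le_right hC hone
    rw [mul_one_div, le_div_iff₀ (pzConst_pos d)]
    linarith [h.head]
  have hsplit : c.sensitivity (J \ H) + c.sensitivity H = c.sensitivity J := sum_sdiff hHJ
  linarith

end RecursionConstants

lemma sensitivity_le_card_mul_cappedVariance (hQ : 4 ≤ Q) (c : MultilinearPoly ι) (J : Finset ι) :
    c.sensitivity J ≤ #J * c.cappedVariance Q := by
  rw [cappedVariance, mul_min_of_nonneg _ _ (Nat.cast_nonneg _), mul_one]
  refine le_min (c.sensitivity_le_card J) ((c.sensitivity_le_relVariance J).trans ?_)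
  have hrel := c.relVariance_nonneg
  calc 4 * #J * c.relVariance = #J * (4 * c.relVariance) := by ring
    _ ≤ #J * (Q * c.relVariance) := by gcongr

lemma RecursionConstants.sensitivityBoundBelow {L : ℕ} {τ η : ℝ}
    (h : RecursionConstants d b L α C Q τ η) (hα : 0 ≤ α)
    (hcontr : RegularContraction ι d b α Q τ) (m : ℕ) : SensitivityBoundBelow ι d m α C Q := by
  have hQ := h.four_le_Q
  induction m with
  | zero => exact fun J hJ => absurd hJ (Nat.not_lt_zero _)
  | succ m ih =>
    intro J hJ c hc
    rcases (Nat.lt_succ_iff.1 hJ).lt_or_eq with hlt | hcard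
    · exact ih J hlt c hc
    rcases lt_or_ge #J b with hJb | hbJ
    · have hJC : (#J : ℝ) ≤ C := by
        have : (#J : ℝ) ≤ b := mod_cast hJb.le
        linarith [h.two_mul_b_le_C]
      refine (c.sensitivity_le_card_mul_cappedVariance hQ J).trans ?_
      gcongr
      · exact c.cappedVariance_nonneg (by linarith)
      · exact natCast_le_mul_rpow hα h.C_nonneg hJC
    rcases lt_or_ge (Q * c.relVariance) 1 with hbiased | hunbiased
    · exact ih.sensitivity_le_of_biased hα h.C_nonneg (by linarith) h.two_lt_b h.biased hcard hbJ
        hc hbiased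
    · have hpos : 0 < c.sqNorm := by
        refine c.sqNorm_nonneg.lt_of_ne fun hzero => ?_
        rw [relVariance, ← hzero, div_zero, mul_zero] at hunbiased
        exact one_pos.not_ge hunbiased
      have hJ₀ : J.Nonempty := card_pos.1 (by have := h.two_lt_b; omega)
      rw [cappedVariance, min_eq_left hunbiased, mul_one, hcard]
      exact h.sensitivity_le_of_pos hα hcontr ih hcard hJ₀ hc hpos

end Recursion

section Constants

universe u

lemma exists_natCast_rpow_le {α ε : ℝ} (hα : 2 / 3 < α) (hε : 0 < ε) :
    ∃ b : ℕ, 2 < b ∧ (b : ℝ) ^ (-α) ≤ ε ∧ (b : ℝ) ^ (-(3 * α / 2 - 1)) ≤ ε := by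
  have hsmall {y : ℝ} (hy : 0 < y) : ∀ᶠ b : ℕ in Filter.atTop, (b : ℝ) ^ (-y) ≤ ε :=
    ((tendsto_rpow_neg_atTop hy).comp tendsto_natCast_atTop_atTop).eventually_le_const hε
  exact ((Filter.eventually_gt_atTop 2).and <|
    (hsmall (by linarith)).and (hsmall (by linarith))).exists

lemma two_div_rpow_le {α b : ℝ} (hα : α ≤ 1) (hb : 0 < b) : (2 / b) ^ α ≤ 2 * b ^ (-α) := by
  have htwo : (2 : ℝ) ^ α ≤ 2 := rpow_le_self_of_one_le one_le_two hα
  rw [div_rpow zero_le_two hb.le, rpow_neg hb.le, div_eq_mul_inv]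
  gcongr

-- A block count `b` makes `b * b ^ (-α) * √(b ^ (-α)) = b ^ (1 - 3 * α / 2)` small; this is where
-- the exponent `2 / 3` comes from.
lemma exists_blockCount {α : ℝ} (hα : 2 / 3 < α) (hα₁ : α ≤ 1) {A D : ℝ} (hA : 0 ≤ A)
    (hD : 0 < D) : ∃ (b : ℕ) (u : ℝ), 2 < b ∧ 0 < u ∧ (2 / b : ℝ) ^ α ≤ 2 * u ∧ 1 ≤ b * u ∧
      D * u ≤ 1 ∧ A * (b * u * √u) ≤ 1 / 2 := by
  obtain ⟨b, hb, hbα, hbA⟩ := exists_natCast_rpow_le hα (ε := 1 / (D + 2 * A)) (by positivity)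
  have hb₀ : (0 : ℝ) < b := by norm_cast; omega
  rw [le_div_iff₀ (by positivity)] at hbα hbA
  refine ⟨b, (b : ℝ) ^ (-α), hb, by positivity, two_div_rpow_le hα₁ hb₀, ?_, ?_, ?_⟩
  · calc (1 : ℝ) ≤ b ^ (1 - α) := one_le_rpow (mod_cast by omega) (by linarith)
      _ = b * b ^ (-α) := by rw [sub_eq_add_neg, rpow_add hb₀, rpow_one]
  · have : 0 ≤ (b : ℝ) ^ (-α) * A := by positivity
    linarith
  · have hbsqrt : b * (b : ℝ) ^ (-α) * √((b : ℝ) ^ (-α)) = (b : ℝ) ^ (-(3 * α / 2 - 1)) := by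
      calc b * (b : ℝ) ^ (-α) * √((b : ℝ) ^ (-α))
          = (b : ℝ) ^ (1 : ℝ) * b ^ (-α) * b ^ (-α * (1 / 2)) := by
            rw [sqrt_eq_rpow, rpow_one, rpow_mul hb₀.le]
        _ = (b : ℝ) ^ (-(3 * α / 2 - 1)) := by
            rw [← rpow_add hb₀, ← rpow_add hb₀]
            congr 1
            ring
    rw [hbsqrt]
    have : 0 ≤ (b : ℝ) ^ (-(3 * α / 2 - 1)) * D := by positivity
    linarith

lemma exists_regularContraction (d : ℕ) {α : ℝ} (hα : 2 / 3 < α) (hα₁ : α ≤ 1) :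
    ∃ (b : ℕ) (Q τ : ℝ), 2 < b ∧ 4 ≤ Q ∧ (2 / b : ℝ) ^ α * (8 * d * Q + 8 * b) ≤ Q ∧ 0 < τ ∧
      ∀ (ι : Type u) [Fintype ι] [DecidableEq ι], RegularContraction ι d b α Q τ := by
  have hrot := rotationConst_pos d
  have hpz := pzConst_pos d
  set A := 8 * pzConst d ^ 2 * (864 * rotationConst d + 1) with hA
  obtain ⟨b, u, hb, hu, hblock, hbu, hdu, hfactor⟩ :=
    exists_blockCount hα hα₁ (A := A) (D := 32 * (d + 1)) (by positivity) (by positivity)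
  have hb₀ : (0 : ℝ) < b := by norm_cast; omega
  have hdu₀ : 0 ≤ d * u := by positivity
  have hQb : 32 * (b * u) ≤ b := by nlinarith
  obtain ⟨τ, hτ, hsum⟩ := exists_sum_expect_cappedVariance_le.{u} d b (Q := 32 * (b * u))
    (by positivity) hQb (sqrt_pos.2 hu)
  refine ⟨b, 32 * (b * u), τ, hb, by linarith, ?_, hτ, fun ι _ _ c hc hpos hregular J P hP => ?_⟩
  · calc (2 / b : ℝ) ^ α * (8 * d * (32 * (b * u)) + 8 * b)
        ≤ 2 * u * (8 * d * (32 * (b * u)) + 8 * b) := by gcongr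
      _ = b * u * (16 * (32 * (d * u) + 1)) := by ring
      _ ≤ b * u * 32 := by gcongr; linarith
      _ = 32 * (b * u) := mul_comm _ _
  · have hsqrt : √(32 * (b * u) / b) ≤ 6 * √u := by
      rw [mul_left_comm, mul_div_cancel_left₀ _ hb₀.ne', sqrt_mul (by norm_num)]
      gcongr
      exact sqrt_le_iff.2 (by norm_num)
    calc (2 / b : ℝ) ^ α * ∑ K ∈ P.parts, 𝔼 x, (c.restrict K (signVec x)).cappedVariance _
        ≤ 2 * u * (4 * pzConst d ^ 2 * b * (144 * rotationConst d * (6 * √u) + √u)) := by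
          refine mul_le_mul_of_nonneg hblock ((hsum ι c hc hpos hregular P hP).trans ?_)
            (by positivity) (by positivity)
          gcongr
      _ = A * (b * u * √u) := by rw [hA]; ring
      _ ≤ 1 / 2 := hfactor

lemma exists_recursionConstants (d : ℕ) {α : ℝ} (hα : 2 / 3 < α) (hα₁ : α ≤ 1) :
    ∃ (b L : ℕ) (C Q τ η : ℝ), RecursionConstants d b L α C Q τ η ∧
      ∀ (ι : Type u) [Fintype ι] [DecidableEq ι], RegularContraction ι d b α Q τ := by
  have hpz := pzConst_pos d
  obtain ⟨b, Q, τ, hb, hQ, hbiased, hτ, hcontr⟩ := exists_regularContraction.{u} d hα hα₁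
  obtain ⟨η₀, hη₀, hregular⟩ := exists_pos_mul_lt hτ (4 * pzConst d * 9 ^ d * d ^ 2)
  obtain ⟨ε, hε, hsmall⟩ := exists_pos_mul_lt one_pos (8 * pzConst d * Q * d)
  have hη : 0 < min 1 η₀ := lt_min one_pos hη₀
  obtain ⟨L, hL⟩ := exists_pow_lt_of_lt_one hε (sub_lt_self 1 hη)
  refine ⟨b, L, 2 * b + 2 * (L + 1) * pzConst d, Q, τ, min 1 η₀, ?_, hcontr⟩
  exact
    { two_lt_b := hb
      four_le_Q := hQ
      biased := hbiased
      two_mul_b_le_C := le_add_of_nonneg_right (by positivity)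
      head := le_add_of_nonneg_left (by positivity)
      η_nonneg := hη.le
      η_le_one := min_le_left _ _
      regular_tail := hregular.le.trans' (by gcongr; exact min_le_right _ _)
      small_tail := hsmall.le.trans' (by gcongr) }

lemma natCast_rpow_le_natCast_rpow {α β : ℝ} (hα : 0 < α) (hαβ : α ≤ β) (n : ℕ) :
    (n : ℝ) ^ α ≤ (n : ℝ) ^ β := by
  rcases n.eq_zero_or_pos with rfl | hn
  · rw [Nat.cast_zero, zero_rpow hα.ne', zero_rpow (hα.trans_le hαβ).ne']
  · exact rpow_le_rpow_of_exponent_le (mod_cast hn) hαβ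

theorem exists_sensitivity_le (d : ℕ) {α : ℝ} (hα : 2 / 3 < α) :
    ∃ C : ℝ, 0 < C ∧ ∀ (ι : Type u) [Fintype ι] [DecidableEq ι] (c : MultilinearPoly ι),
      c.DegreeLE d → ∀ J : Finset ι, c.sensitivity J ≤ C * (#J : ℝ) ^ α := by
  obtain ⟨b, L, C, Q, τ, η, h, hcontr⟩ :=
    exists_recursionConstants.{u} d (lt_min hα (by norm_num)) (min_le_right α 1)
  have hmin : 0 < min α 1 := lt_min (by linarith) one_pos
  have hC : 0 < C := h.two_mul_b_le_C.trans_lt' (by have := h.two_lt_b; positivity)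
  refine ⟨C, hC, fun ι _ _ c hc J => ?_⟩
  calc c.sensitivity J ≤ C * (#J : ℝ) ^ min α 1 * c.cappedVariance Q :=
        h.sensitivityBoundBelow hmin.le (hcontr ι) (#J + 1) J (Nat.lt_succ_self _) c hc
    _ ≤ C * (#J : ℝ) ^ min α 1 :=
        mul_le_of_le_one_right (by positivity) (c.cappedVariance_le_one Q)
    _ ≤ C * (#J : ℝ) ^ α := mul_le_mul_of_nonneg_left
        (natCast_rpow_le_natCast_rpow hmin (min_le_left α 1) #J) hC.le

end Constants

end MultilinearPoly

section Cube

lemma bernoulliPM_apply (s : Set ℝ) :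
    bernoulliPM s = ∑ b : Bool, (1 / 2 : ℝ≥0∞) * s.indicator 1 (boolSign b) := by
  simp [bernoulliPM, boolSign]

instance : IsFiniteMeasure bernoulliPM :=
  ⟨by simp [bernoulliPM_apply, ENNReal.mul_lt_top]⟩

lemma bernoulliCube_eq_sum_dirac (n : ℕ) :
    bernoulliCube n = ∑ x : Fin n → Bool, (1 / 2 : ℝ≥0∞) ^ n • Measure.dirac (signVec x) := by
  classical
  refine Measure.pi_eq fun s hs => ?_
  simp only [bernoulliPM_apply]
  rw [prod_univ_sum, Fintype.piFinset_univ, Measure.finsetSum_apply]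
  refine sum_congr rfl fun x _ => ?_
  have hind : ∏ i, (s i).indicator (1 : ℝ → ℝ≥0∞) (boolSign (x i)) =
      (Set.univ.pi s).indicator 1 (signVec x) := by
    simp [Set.indicator_apply, prod_ite_zero, signVec]
  rw [prod_mul_distrib, hind, Measure.smul_apply, smul_eq_mul,
    Measure.dirac_apply' _ (MeasurableSet.univ_pi hs)]
  simp

lemma bernoulliCube_toReal (n : ℕ) (s : Set (Fin n → ℝ)) :
    (bernoulliCube n s).toReal = prob fun x : Fin n → Bool => signVec x ∈ s := by
  classical
  have hterm : ∀ x : Fin n → Bool,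
      ((1 / 2 : ℝ≥0∞) ^ n • Measure.dirac (signVec x)) s ≠ ∞ := fun x =>
    ENNReal.mul_ne_top (by simp) (measure_ne_top _ _)
  rw [bernoulliCube_eq_sum_dirac, Measure.finsetSum_apply, ENNReal.toReal_sum fun x _ => hterm x,
    prob, expect_eq_sum_div_card, sum_div]
  refine sum_congr rfl fun x _ => ?_
  by_cases hx : signVec x ∈ s <;> simp [hx, Measure.dirac_apply]

end Cube

section PolynomialThreshold

variable {n : ℕ}

lemma pow_mem_lowDegree {κ : Type*} {d : ℕ} {f : (κ → Bool) → ℝ}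
    (hf : f ∈ lowDegree κ d) (k : ℕ) : f ^ k ∈ lowDegree κ (k * d) := by
  simpa using prod_mem_lowDegree (range k) fun _ => hf

lemma mvPolynomial_eval_mem_lowDegree (p : MvPolynomial (Fin n) ℝ) :
    (fun x => MvPolynomial.eval (signVec x) p) ∈ lowDegree (Fin n) p.totalDegree := by
  have hsum : (fun x => MvPolynomial.eval (signVec x) p) =
      ∑ m ∈ p.support, p.coeff m • ∏ i ∈ m.support, (fun x => signVec x i) ^ m i := by
    ext x
    simp [MvPolynomial.eval_eq]
  rw [hsum]
  refine Submodule.sum_mem _ fun m hm => Submodule.smul_mem _ _ ?_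
  refine lowDegree_mono (MvPolynomial.le_totalDegree hm) (prod_mem_lowDegree m.support fun i => ?_)
  simpa using pow_mem_lowDegree (signVec_mem_lowDegree i) (m i)

lemma psign_ne_psign_iff (u v : ℝ) : psign u ≠ psign v ↔ ¬(0 ≤ u ↔ 0 ≤ v) := by
  unfold psign
  split_ifs with hu hv hv <;> simp only [hu, hv] <;> norm_num

lemma update_signVec_neg {κ : Type*} [DecidableEq κ] (i : κ) (x : κ → Bool) :
    Function.update (signVec x) i (-signVec x i) = signVec (flipBit i x) := by
  ext j
  rcases eq_or_ne j i with rfl | hj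
  · rw [Function.update_self, signVec_flipBit_self]
  · rw [Function.update_of_ne hj, signVec_flipBit_of_ne hj]

lemma avgSensitivity_psign_eq {p : MvPolynomial (Fin n) ℝ} {c : MultilinearPoly (Fin n)}
    (h : ∀ x, MvPolynomial.eval (signVec x) p = c.eval (signVec x)) :
    avgSensitivity n (fun x => psign (MvPolynomial.eval x p)) = c.sensitivity univ := by
  refine sum_congr rfl fun i _ => ?_
  rw [bernoulliCube_toReal]
  simp only [Set.mem_ofPred_eq, psign_ne_psign_iff, update_signVec_neg, h,
    MultilinearPoly.signInfluence]

end PolynomialThreshold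

end

end ThresholdSensitivity

open ThresholdSensitivity in
theorem average_sensitivity_bound_general (d : ℕ) {α : ℝ} (hα : 2 / 3 < α) :
    ∃ C : ℝ, 0 < C ∧
      ∀ (n : ℕ) (p : MvPolynomial (Fin n) ℝ), p.totalDegree ≤ d →
        avgSensitivity n (fun x => psign (MvPolynomial.eval x p)) ≤ C * (n : ℝ) ^ α := by
  obtain ⟨C, hC, hbound⟩ := MultilinearPoly.exists_sensitivity_le.{0} d hα
  refine ⟨C, hC, fun n p hp => ?_⟩
  obtain ⟨c, hc, heval⟩ :=
    MultilinearPoly.exists_eval_eq_of_mem_lowDegree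
      (lowDegree_mono hp (mvPolynomial_eval_mem_lowDegree p))
  rw [avgSensitivity_psign_eq heval]
  simpa using hbound (Fin n) c hc Finset.univ

/-- **Average sensitivity bound.**  For every positive integer `d` and `c > 0` there is a
constant `C` depending only on `c` and `d` such that every degree-`d` polynomial threshold
function in `n` variables satisfies `as(f) ≤ C n^{5/6 + c}`. -/
theorem average_sensitivity_bound (d : ℕ) (hd : 0 < d) (c : ℝ) (hc : 0 < c) :
    ∃ C : ℝ, 0 < C ∧
      ∀ (n : ℕ) (p : MvPolynomial (Fin n) ℝ), p.totalDegree ≤ d →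
        avgSensitivity n (fun x => psign (MvPolynomial.eval x p)) ≤
          C * (n : ℝ) ^ ((5 : ℝ) / 6 + c) := by
  exact average_sensitivity_bound_general d (by linarith)
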